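/- Let k be an uncountable field of characteristic two. Then a very general hypersurface X ⊂ P^{N+1}_k of degree d ≥ log₂(N) + 3 is stably irrational, i.e., X × P^r_k is irrational for every r ≥ 0. -/

import Mathlib

noncomputable section

/-!
STATEMENT 1 (Corollary 1.2): Let `k` be an uncountable field of characteristic two.  Then
a very general hypersurface `X ⊂ ℙ^{N+1}_k` of degree `d ≥ log₂ N + 3` is stably
irrational: `X × ℙ^r_k` is irrational for every `r ≥ 0`.

Formalization: (stable) rationality is expressed via function fields: `X × ℙ^r` is
rational iff its function field — the fraction field of `Q[t₁,…,t_r]` where `Q` is the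
affine coordinate ring of `X` (in the chart `x₀ = 1`) — is `k`-isomorphic to
`k(t₁, …, t_{N+r})`.  See stmt_0 for the convention on `VeryGeneral`.
-/

namespace Paper

/-- `StablyIrrationalOver kToQ N`: the `N`-dimensional variety over `k` with (affine)
coordinate ring `Q` is stably irrational, i.e. for every `r ≥ 0` there is no `k`-isomorphism
between the function field of `X × ℙ^r` (the fraction field of `Q[t₁, …, t_r]`) and the
function field `k(t₁, …, t_{N+r})` of `ℙ^{N+r}_k`.  Compatibility with `k` is expressed via
the structure map `kToQ : k → Q`. -/
def StablyIrrationalOver {k Q : Type*} [Field k] [CommRing Q] (kToQ : k →+* Q)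
    (N : ℕ) : Prop :=
  ∀ r : ℕ,
    ¬ ∃ e : FractionRing (MvPolynomial (Fin r) Q) ≃+*
        FractionRing (MvPolynomial (Fin (N + r)) k),
      ∀ x : k,
        e ((algebraMap (MvPolynomial (Fin r) Q) (FractionRing (MvPolynomial (Fin r) Q)))
            (MvPolynomial.C (kToQ x))) =
          (algebraMap (MvPolynomial (Fin (N + r)) k)
              (FractionRing (MvPolynomial (Fin (N + r)) k))) (MvPolynomial.C x)

/-- The affine equation (in the chart `x₀ = 1`) of the hypersurface defined by a form `F`
in `ν + 1` homogeneous coordinates. -/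
def chartEquation {k : Type*} [Field k] {ν : ℕ} (F : MvPolynomial (Fin (ν + 1)) k) :
    MvPolynomial (Fin ν) k :=
  MvPolynomial.aeval
    (Fin.cases (1 : MvPolynomial (Fin ν) k) (fun i => MvPolynomial.X i)) F

/-- The affine coordinate ring of a projective hypersurface `{F = 0}` (in the chart
`x₀ = 1`). -/
abbrev chartRing {k : Type*} [Field k] {ν : ℕ} (F : MvPolynomial (Fin (ν + 1)) k) :
    Type _ :=
  MvPolynomial (Fin ν) k ⧸ Ideal.span {chartEquation F}

/-- The structure map `k → chartRing F`. -/
def chartRingMap {k : Type*} [Field k] {ν : ℕ} (F : MvPolynomial (Fin (ν + 1)) k) :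
    k →+* chartRing F :=
  (Ideal.Quotient.mk (Ideal.span {chartEquation F})).comp
    (MvPolynomial.C : k →+* MvPolynomial (Fin ν) k)

end Paper

namespace Paper

/-- A property `P` of (defining equations of) degree-`d` hypersurfaces in `ℙ^{ν−1}_k`
holds *for a very general hypersurface* if it holds for all hypersurfaces parametrized by
points in some countable intersection of dense open subsets of the parameter space of
degree-`d` forms: there is a countable family `G₀, G₁, …` of polynomial conditions on
the coefficients, each nonvanishing at some degree-`d` form (so each defines a dense open
subset of the irreducible parameter space), such that `P F` holds for every degree-`d`
form `F` with `Gᵢ(coefficients of F) ≠ 0` for all `i`. -/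
def VeryGeneral (k : Type*) [Field k] (ν d : ℕ)
    (P : MvPolynomial (Fin ν) k → Prop) : Prop :=
  ∃ G : ℕ → MvPolynomial ((Fin ν) →₀ ℕ) k,
    (∀ i, ∃ F : MvPolynomial (Fin ν) k, F.IsHomogeneous d ∧
        MvPolynomial.eval (fun v => MvPolynomial.coeff v F) (G i) ≠ 0) ∧
    (∀ F : MvPolynomial (Fin ν) k, F.IsHomogeneous d →
      (∀ i, MvPolynomial.eval (fun v => MvPolynomial.coeff v F) (G i) ≠ 0) → P F)

end Paper

/-!
If `X × ℙ^r` is rational, then over its function field `L` the generic point of `X` is joined to a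
`k`-rational point by a polynomial path `f(T)` on `X`. This is to be excluded.

Let `N ≥ 2`. The coefficients of a very general form `F` are algebraically independent over the
prime field, so `F` degenerates, along a valuation of a large algebraically closed field, to a
special form `∑ X^m + X^p` over `𝔽₂`. In characteristic two the monomials `X^m` are simultaneous
eigenvectors of derivations dual to the logarithmic forms of some of the coordinates
`x₀, …, xₙ`. Hence at every place at which the logarithmic form `dlog(x₁/x₀) ∧ ⋯ ∧ dlog(xₙ/x₀)`
fails to be integral along a path, all the `X^m` are bounded by `X^p`, and the choice of monomials
then forces `x₀, …, xₙ` to have equal size, where the form is integral after all. A function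
regular on all of `ℙ¹` is constant, so the value of the logarithmic form on fixed vector fields is
the same at both ends of a path. It vanishes at the rational end, whose coordinates are constants,
and it is nonzero at the generic point, as a Jacobian computation shows. The valuation extends to
`L` (as a Gauss valuation), and a path on `F = 0` reduces to a chain of paths on the special
hypersurface, which transports the contradiction. There are enough squarefree monomials in `n`
variables to build a special form in `N + 2` variables when `N ≤ 2 ^ (d - 3)`.

For `N = 1` the curve is smooth. The Wronskian of the three coordinates of a path is proportional to
the gradient of `F`, but of degree `2` instead of `d - 1 ≥ 2` in the path, so the proportionality
factor is constant; it vanishes at the rational end. Thus the generic point does not move under the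
derivation tangent to the curve, which contradicts smoothness.
-/

namespace StableIrrationality

/-! ### Derivations and logarithmic determinants -/

section DerivationExtension

variable {A L : Type*} [CommRing A] [Field L] [Algebra A L]

theorem exists_derivation_of_dualNumber [IsFractionRing A L] (χ : A →+* DualNumber L)
    (hχ : ∀ a, (χ a).fst = algebraMap A L a) :
    ∃ D : Derivation ℤ L L, ∀ a, D (algebraMap A L a) = (χ a).snd := by
  have isUnit_χ (y : nonZeroDivisors A) : IsUnit (χ y) := by
    rw [TrivSqZeroExt.isUnit_iff_isUnit_fst, hχ]
    exact IsLocalization.map_units L y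
  let χL : L →+* DualNumber L := IsLocalization.lift (M := nonZeroDivisors A) isUnit_χ
  have χL_algebraMap (a : A) : χL (algebraMap A L a) = χ a := IsLocalization.lift_eq _ a
  have fst_comp : (TrivSqZeroExt.fstHom ℤ L L).toRingHom.comp χL = RingHom.id L := by
    refine IsLocalization.ringHom_ext (nonZeroDivisors A) (RingHom.ext fun a => ?_)
    simp [χL_algebraMap, hχ]
  have fst_χL (z : L) : (χL z).fst = z := RingHom.congr_fun fst_comp z
  refine ⟨Derivation.mk' (AddMonoidHom.toIntLinearMap
    ⟨⟨fun z => (χL z).snd, by simp⟩, by simp⟩) fun x y => ?_, fun a => ?_⟩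
  · simp [fst_χL, TrivSqZeroExt.snd_mul, mul_comm]
  · exact congrArg TrivSqZeroExt.snd (χL_algebraMap a)

/-- The ring homomorphism `a ↦ φ a + φ (D a) ε` that encodes the derivation `D`. -/
def dualNumberHom {S : Type*} [CommRing S] (φ : A →+* S) (D : Derivation ℤ A A) :
    A →+* DualNumber S where
  toFun a := TrivSqZeroExt.inl (φ a) + TrivSqZeroExt.inr (φ (D a))
  map_one' := by ext <;> simp
  map_zero' := by ext <;> simp
  map_add' x y := by ext <;> simp [-DualNumber.inr_eq_smul_eps]
  map_mul' x y := by ext <;> simp [-DualNumber.inr_eq_smul_eps, mul_comm]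

section DualNumberHom

variable {S : Type*} [CommRing S] (φ : A →+* S) (D : Derivation ℤ A A) (a : A)

@[simp]
lemma fst_dualNumberHom : (dualNumberHom φ D a).fst = φ a := by
  simp [dualNumberHom]

@[simp]
lemma snd_dualNumberHom : (dualNumberHom φ D a).snd = φ (D a) := by
  simp [dualNumberHom, -DualNumber.inr_eq_smul_eps]

end DualNumberHom

theorem exists_derivation_fractionRing [IsFractionRing A L] (D : Derivation ℤ A A) :
    ∃ D' : Derivation ℤ L L, ∀ a, D' (algebraMap A L a) = algebraMap A L (D a) := by
  obtain ⟨D', hD'⟩ := exists_derivation_of_dualNumber (dualNumberHom (algebraMap A L) D)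
    (fst_dualNumberHom _ D)
  exact ⟨D', fun a => (hD' a).trans (snd_dualNumberHom _ D a)⟩

/-- The derivation of `A[X]` that applies `D` to every coefficient. -/
def coeffwiseDerivation (D : Derivation ℤ A A) : Derivation ℤ (Polynomial A) (Polynomial A) :=
  (PolynomialModule.equivPolynomialSelf (R := A)).toLinearMap.compDer D.mapCoeffs

@[simp]
lemma coeff_coeffwiseDerivation (D : Derivation ℤ A A) (p : Polynomial A) (i : ℕ) :
    (coeffwiseDerivation D p).coeff i = D (p.coeff i) := rfl

end DerivationExtension

theorem exists_derivation_fractionRing_mvPolynomial {A L τ : Type*} [CommRing A] [Field L]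
    [Algebra (MvPolynomial τ A) L] [IsFractionRing (MvPolynomial τ A) L] (D : Derivation ℤ A A) :
    ∃ D' : Derivation ℤ L L, ∀ a, D' (algebraMap (MvPolynomial τ A) L (MvPolynomial.C a)) =
      algebraMap (MvPolynomial τ A) L (MvPolynomial.C (D a)) := by
  let alg := algebraMap (MvPolynomial τ A) L
  let χ : MvPolynomial τ A →+* DualNumber L :=
    MvPolynomial.eval₂Hom (dualNumberHom (alg.comp MvPolynomial.C) D)
      fun i => TrivSqZeroExt.inl (alg (MvPolynomial.X i))
  have hχ : (TrivSqZeroExt.fstHom ℤ L L).toRingHom.comp χ = alg := by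
    apply MvPolynomial.ringHom_ext <;> intros <;> simp [χ]
  obtain ⟨D', hD'⟩ := exists_derivation_of_dualNumber χ (RingHom.congr_fun hχ)
  exact ⟨D', fun a => by simp [hD', χ, alg]⟩

section MonomialEval

variable {σ M : Type*} [CommMonoid M]

/-- The value `∏ₛ w(s) ^ m(s)` of the monomial with exponent `m` at the tuple `w`; the values may
lie in any commutative monoid, in particular in a value group with zero. -/
def monomialEval (m : σ →₀ ℕ) (w : σ → M) : M := m.prod fun s e => w s ^ e

lemma map_monomialEval {M' F : Type*} [CommMonoid M'] [FunLike F M M'] [MonoidHomClass F M M']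
    (f : F) (m : σ →₀ ℕ) (w : σ → M) :
    f (monomialEval m w) = monomialEval m fun s => f (w s) := by
  simp [monomialEval, Finsupp.prod]

lemma monomialEval_mul_left (m : σ →₀ ℕ) (w : σ → M) (a : M) :
    monomialEval m (fun s => a * w s) = a ^ m.degree * monomialEval m w := by
  simp [monomialEval, Finsupp.prod, mul_pow, Finset.prod_mul_distrib, Finset.prod_pow_eq_pow_sum,
    Finsupp.degree_apply]

lemma monomialEval_add (m m' : σ →₀ ℕ) (w : σ → M) :
    monomialEval (m + m') w = monomialEval m w * monomialEval m' w := by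
  classical
  exact Finsupp.prod_add_index' (fun _ => pow_zero _) fun _ => pow_add _

lemma monomialEval_single (s : σ) (e : ℕ) (w : σ → M) :
    monomialEval (Finsupp.single s e) w = w s ^ e :=
  Finsupp.prod_single_index (pow_zero _)

lemma eval₂_mul_left_of_isHomogeneous {R S : Type*} [CommSemiring R] [CommSemiring S] {d : ℕ}
    (φ : R →+* S) {F : MvPolynomial σ R} (hF : F.IsHomogeneous d) (a : S) (g : σ → S) :
    MvPolynomial.eval₂ φ (fun s => a * g s) F = a ^ d * MvPolynomial.eval₂ φ g F := by
  rw [MvPolynomial.eval₂_eq, MvPolynomial.eval₂_eq, Finset.mul_sum]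
  refine Finset.sum_congr rfl fun m hm => ?_
  rw [hF.degree_eq_sum_deg_support hm, ← Finsupp.degree_apply, mul_left_comm]
  exact congrArg _ (monomialEval_mul_left m g a)

lemma derivation_monomialEval {E : Type*} [Field E] (D : Derivation ℤ E E) (m : σ →₀ ℕ)
    (w : σ → E) :
    D (monomialEval m w) = (m.sum fun s e => e * (D (w s) / w s)) * monomialEval m w := by
  classical
  induction m using Finsupp.induction_linear with
  | zero => simp [monomialEval]
  | add m m' hm hm' =>
    rw [Finsupp.sum_add_index' (by simp) (by intros; push_cast; ring), monomialEval_add,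
      Derivation.leibniz, hm, hm', smul_eq_mul, smul_eq_mul]
    ring
  | single s e =>
    rw [monomialEval_single, Finsupp.sum_single_index (by simp), Derivation.leibniz_pow,
      nsmul_eq_mul, smul_eq_mul]
    rcases eq_or_ne (w s) 0 with hs | hs
    · simp [hs]
    · cases e with
      | zero => simp
      | succ e => rw [Nat.add_sub_cancel, pow_succ]; field_simp

end MonomialEval

section DlogMatrix

variable {E ι : Type*} [Field E]

/-- The matrix of logarithmic derivatives `D i (f j) / f j`. -/
def dlogMatrix (D : ι → Derivation ℤ E E) (f : ι → E) : Matrix ι ι E :=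
  Matrix.of fun i j => D i (f j) / f j

variable [Fintype ι] [DecidableEq ι]

lemma ne_zero_of_det_dlogMatrix_ne_zero {D : ι → Derivation ℤ E E} {f : ι → E}
    (h : (dlogMatrix D f).det ≠ 0) (j : ι) : f j ≠ 0 := fun hj =>
  h (Matrix.det_eq_zero_of_column_eq_zero j fun i => by simp [dlogMatrix, hj])

/-- The derivations dual to the logarithmic forms `d(f k) / f k`, i.e. the derivations `Θ k` in the
span of the `D i` with `Θ k (f j) = δ_{jk} f j`, provided that the logarithmic matrix of `f` is
invertible. -/
def dualDerivation (D : ι → Derivation ℤ E E) (f : ι → E) (k : ι) : Derivation ℤ E E :=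
  ∑ i, (dlogMatrix D f)⁻¹ k i • D i

variable {D : ι → Derivation ℤ E E} {f : ι → E}

lemma dualDerivation_apply (k : ι) (g : E) :
    dualDerivation D f k g = ∑ i, (dlogMatrix D f)⁻¹ k i * D i g := by
  rw [dualDerivation, ← Derivation.coeFnAddMonoidHom_apply, map_sum, Finset.sum_apply]
  rfl

lemma dualDerivation_apply_eq_mulVec (k : ι) {g : E} (hg : g ≠ 0) :
    dualDerivation D f k g = (dlogMatrix D f)⁻¹.mulVec (fun i => D i g / g) k * g := by
  rw [dualDerivation_apply, Matrix.mulVec, dotProduct, Finset.sum_mul]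
  exact Finset.sum_congr rfl fun i _ => by rw [mul_assoc, div_mul_cancel₀ _ hg]

lemma dualDerivation_apply_self (h : (dlogMatrix D f).det ≠ 0) (j k : ι) :
    dualDerivation D f k (f j) = if j = k then f j else 0 := by
  have inv_mul : ((dlogMatrix D f)⁻¹ * dlogMatrix D f) k j = (1 : Matrix ι ι E) k j := by
    rw [Matrix.nonsing_inv_mul _ (IsUnit.mk0 _ h)]
  rw [dualDerivation_apply_eq_mulVec k (ne_zero_of_det_dlogMatrix_ne_zero h j)]
  change ((dlogMatrix D f)⁻¹ * dlogMatrix D f) k j * f j = _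
  rw [inv_mul, Matrix.one_apply, ite_mul, one_mul, zero_mul]
  simp only [eq_comm]

-- Cramer's rule.
lemma dualDerivation_apply_eq_det_div_det (h : (dlogMatrix D f).det ≠ 0) (k : ι) {g : E}
    (hg : g ≠ 0) :
    dualDerivation D f k g =
      (dlogMatrix D (Function.update f k g)).det / (dlogMatrix D f).det * g := by
  have update_eq : dlogMatrix D (Function.update f k g) =
      (dlogMatrix D f).updateCol k fun i => D i g / g := by
    ext i j
    rcases eq_or_ne j k with rfl | hjk <;> simp [dlogMatrix, *]
  rw [dualDerivation_apply_eq_mulVec k hg, update_eq, ← Matrix.cramer_apply,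
    ← Matrix.det_smul_inv_mulVec_eq_cramer _ _ (IsUnit.mk0 _ h), Pi.smul_apply, smul_eq_mul,
    mul_div_cancel_left₀ _ h]

lemma valuation_dualDerivation_le {Γ : Type*} [LinearOrderedCommGroupWithZero Γ]
    (v : Valuation E Γ) (h : (dlogMatrix D f).det ≠ 0)
    (hmax : ∀ g : ι → E, (∀ j, g j ≠ 0) → v (dlogMatrix D g).det ≤ v (dlogMatrix D f).det)
    (k : ι) (g : E) : v (dualDerivation D f k g) ≤ v g := by
  rcases eq_or_ne g 0 with rfl | hg
  · simp
  have update_ne_zero : ∀ j, Function.update f k g j ≠ 0 := by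
    intro j
    rcases eq_or_ne j k with rfl | hjk
    · simpa
    · simpa [hjk] using ne_zero_of_det_dlogMatrix_ne_zero h j
  rw [dualDerivation_apply_eq_det_div_det h k hg, map_mul, map_div₀]
  exact mul_le_of_le_one_left' (div_le_one_of_le₀ (hmax _ update_ne_zero) zero_le)

end DlogMatrix

/-- The value of the logarithmic form `dlog(x₁/x₀) ∧ ⋯ ∧ dlog(xₙ/x₀)` on `D₁ ∧ ⋯ ∧ Dₙ`, a
function of the point `(x₀ : ⋯ : xₙ)` of projective space. -/
def dlogDet {E : Type*} [Field E] {n : ℕ} (D : Fin n → Derivation ℤ E E) (x : Fin (n + 1) → E) :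
    E :=
  (dlogMatrix D fun j => x j.succ / x 0).det

section DlogDet

variable {E : Type*} [Field E] {n : ℕ} {D : Fin n → Derivation ℤ E E} {x : Fin (n + 1) → E}

lemma ne_zero_of_dlogDet_ne_zero (hn : 0 < n) (h : dlogDet D x ≠ 0) (j : Fin (n + 1)) :
    x j ≠ 0 := by
  have ratio_ne_zero := ne_zero_of_det_dlogMatrix_ne_zero h
  cases j using Fin.cases with
  | zero => exact (div_ne_zero_iff.mp (ratio_ne_zero ⟨0, hn⟩)).2
  | succ j => exact (div_ne_zero_iff.mp (ratio_ne_zero j)).1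

lemma dlogDet_mul_left {a : E} (ha : a ≠ 0) (D : Fin n → Derivation ℤ E E)
    (x : Fin (n + 1) → E) : dlogDet D (fun j => a * x j) = dlogDet D x := by
  simp only [dlogDet, mul_div_mul_left _ _ ha]

end DlogDet

end StableIrrationality

namespace StableIrrationality

/-! ### Special forms and the local dichotomy -/

/-- The combinatorial data of the special form `∑_{m ∈ support} X^m + X^pert` in the variables `σ`.
In characteristic two the monomials of `support` are simultaneous eigenvectors, with pairwise
distinct eigenvalues, of derivations dual to the variables `logVar`; the field `dominates` says that
if all of them are bounded by `X^pert` at some valuation, then no coordinate is larger than one of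
the `logVar` coordinates. -/
structure SpecialForm (σ : Type*) (n d : ℕ) where
  logVar : Fin (n + 1) → σ
  support : Finset (σ →₀ ℕ)
  pert : σ →₀ ℕ
  logVar_injective : Function.Injective logVar
  pos : 0 < n
  even_of_notMem_range : ∀ m ∈ support, ∀ s ∉ Set.range logVar, Even (m s)
  eq_of_parity_eq : ∀ m ∈ support, ∀ m' ∈ support,
    (∀ j : Fin n, Even (m (logVar j.succ)) ↔ Even (m' (logVar j.succ))) → m = m'
  degree_eq : ∀ m ∈ support, m.degree = d
  degree_pert : pert.degree = d
  dominates : ∀ w : σ → WithZero (Multiplicative ℤ), (∀ j, w (logVar j) ≠ 0) →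
    (∀ m ∈ support, monomialEval m w ≤ monomialEval pert w) → ∀ j s, w s ≤ w (logVar j)

namespace SpecialForm

variable {σ : Type*} {n d : ℕ} (c : SpecialForm σ n d)

/-- The special form as a polynomial over `R`. -/
def poly (R : Type*) [CommRing R] : MvPolynomial σ R :=
  ∑ m ∈ c.support, MvPolynomial.monomial m 1 + MvPolynomial.monomial c.pert 1

lemma isHomogeneous_poly (R : Type*) [CommRing R] : (c.poly R).IsHomogeneous d :=
  (MvPolynomial.IsHomogeneous.sum _ _ _ fun m hm =>
    MvPolynomial.isHomogeneous_monomial 1 (c.degree_eq m hm)).add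
    (MvPolynomial.isHomogeneous_monomial 1 c.degree_pert)

lemma map_poly {R S : Type*} [CommRing R] [CommRing S] (φ : R →+* S) :
    MvPolynomial.map φ (c.poly R) = c.poly S := by
  simp [poly]

lemma eval_poly {R : Type*} [CommRing R] (p : σ → R) :
    MvPolynomial.eval p (c.poly R) =
      ∑ m ∈ c.support, monomialEval m p + monomialEval c.pert p := by
  simp [poly, monomialEval, MvPolynomial.eval_monomial]

lemma eval_poly_map {R S : Type*} [CommRing R] [CommRing S] (φ : R →+* S) (p : σ → R) :
    MvPolynomial.eval (fun s => φ (p s)) (c.poly S) = φ (MvPolynomial.eval p (c.poly R)) := by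
  rw [← c.map_poly φ, MvPolynomial.eval_map]
  exact (MvPolynomial.eval₂_comp φ p _).symm

section Parity

variable {E : Type*} [Field E] [CharP E 2] {Θ : Derivation ℤ E E} {q : σ → E} {k : Fin n}

lemma derivation_monomialEval_of_dual
    (hΘ : ∀ j, Θ (q (c.logVar j)) = if j = k.succ then q (c.logVar j) else 0)
    (hq : q (c.logVar k.succ) ≠ 0) {m : σ →₀ ℕ} (hm : m ∈ c.support) :
    Θ (monomialEval m q) = if Even (m (c.logVar k.succ)) then 0 else monomialEval m q := by
  have eigenvalue : (m.sum fun s e => (e : E) * (Θ (q s) / q s)) = m (c.logVar k.succ) := by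
    rw [Finsupp.sum, Finset.sum_eq_single (c.logVar k.succ), hΘ, if_pos rfl, div_self hq, mul_one]
    · intro s _ hs
      by_cases hr : s ∈ Set.range c.logVar
      · obtain ⟨j, rfl⟩ := hr
        rw [hΘ, if_neg fun h => hs (congrArg _ h), zero_div, mul_zero]
      · rw [(CharP.cast_eq_zero_iff E 2 _).mpr (c.even_of_notMem_range m hm s hr).two_dvd, zero_mul]
    · intro h
      rw [Finsupp.notMem_support_iff.mp h, Nat.cast_zero, zero_mul]
  rw [derivation_monomialEval, eigenvalue]
  split_ifs with h
  · rw [(CharP.cast_eq_zero_iff E 2 _).mpr h.two_dvd, zero_mul]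
  · rw [CharTwo.natCast_eq_ite, if_neg h, one_mul]

variable {Γ : Type*} [LinearOrderedCommGroupWithZero Γ] (v : Valuation E Γ)

-- `Θ` projects onto the monomials of odd degree in `logVar k.succ`, and `1 - Θ` onto the others.
lemma valuation_sum_filter_parity_le
    (hΘ : ∀ j, Θ (q (c.logVar j)) = if j = k.succ then q (c.logVar j) else 0)
    (hq : q (c.logVar k.succ) ≠ 0) (hv : ∀ f, v (Θ f) ≤ v f)
    {T : Finset (σ →₀ ℕ)} (hT : T ⊆ c.support) (m : σ →₀ ℕ) :
    v (∑ m' ∈ T with (Even (m' (c.logVar k.succ)) ↔ Even (m (c.logVar k.succ))),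
      monomialEval m' q) ≤ v (∑ m' ∈ T, monomialEval m' q) := by
  have sum_odd : ∑ m' ∈ T with ¬ Even (m' (c.logVar k.succ)), monomialEval m' q =
      Θ (∑ m' ∈ T, monomialEval m' q) := by
    rw [map_sum, Finset.sum_filter]
    refine Finset.sum_congr rfl fun m' hm' => ?_
    rw [c.derivation_monomialEval_of_dual hΘ hq (hT hm'), ite_not]
  by_cases hm : Even (m (c.logVar k.succ))
  · have sum_even : ∑ m' ∈ T with Even (m' (c.logVar k.succ)), monomialEval m' q =
        ∑ m' ∈ T, monomialEval m' q - Θ (∑ m' ∈ T, monomialEval m' q) := by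
      rw [← sum_odd, eq_sub_iff_add_eq, Finset.sum_filter_add_sum_filter_not]
    simp only [hm, iff_true, sum_even]
    exact v.map_sub_le le_rfl (hv _)
  · simp only [hm, iff_false, sum_odd]
    exact hv _

lemma valuation_monomialEval_le_pert {Θ : Fin n → Derivation ℤ E E}
    (hΘ : ∀ k j, Θ k (q (c.logVar j)) = if j = k.succ then q (c.logVar j) else 0)
    (hq : ∀ j, q (c.logVar j) ≠ 0) (hv : ∀ k f, v (Θ k f) ≤ v f)
    (hF : MvPolynomial.eval q (c.poly E) = 0) {m : σ →₀ ℕ} (hm : m ∈ c.support) :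
    v (monomialEval m q) ≤ v (monomialEval c.pert q) := by
  classical
  have sum_filter_le (A : Finset (Fin n)) :
      v (∑ m' ∈ c.support with
        ∀ k ∈ A, (Even (m' (c.logVar k.succ)) ↔ Even (m (c.logVar k.succ))), monomialEval m' q) ≤
      v (monomialEval c.pert q) := by
    induction A using Finset.induction_on with
    | empty =>
      rw [c.eval_poly] at hF
      simp [eq_neg_of_add_eq_zero_left hF]
    | insert k A _ ih =>
      refine le_trans (le_of_eq_of_le ?_ (c.valuation_sum_filter_parity_le v (hΘ k) (hq _) (hv k)
        (Finset.filter_subset _ _) m)) ih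
      rw [Finset.filter_filter]
      simp only [Finset.forall_mem_insert, and_comm]
  have filter_univ : {m' ∈ c.support | ∀ k ∈ (Finset.univ : Finset (Fin n)),
      (Even (m' (c.logVar k.succ)) ↔ Even (m (c.logVar k.succ)))} = {m} := by
    ext m'
    simp only [Finset.mem_filter, Finset.mem_univ, true_implies, Finset.mem_singleton]
    exact ⟨fun h => c.eq_of_parity_eq m' h.1 m hm h.2, by rintro rfl; exact ⟨hm, fun _ => Iff.rfl⟩⟩
  simpa only [filter_univ, Finset.sum_singleton] using sum_filter_le Finset.univ

end Parity

theorem valuation_dlogDet_lt_or_le {E : Type*} [Field E] [CharP E 2]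
    (v : Valuation E (WithZero (Multiplicative ℤ))) (D : Fin n → Derivation ℤ E E) {p : σ → E}
    (hF : MvPolynomial.eval p (c.poly E) = 0) {C : WithZero (Multiplicative ℤ)} (hC : C ≠ 0)
    (hbound : ∀ f : Fin n → E, (∀ j, f j ≠ 0) → v (dlogMatrix D f).det ≤ C) :
    v (dlogDet D (p ∘ c.logVar)) < C ∨ ∀ j s, v (p s) ≤ v (p (c.logVar j)) := by
  refine or_iff_not_imp_left.mpr fun hlt => ?_
  have hdet : dlogDet D (p ∘ c.logVar) ≠ 0 := by
    intro h
    rw [h, map_zero] at hlt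
    exact hlt (zero_lt_iff.mpr hC)
  have hp := ne_zero_of_dlogDet_ne_zero c.pos hdet
  have hinv : (p (c.logVar 0))⁻¹ ≠ 0 := inv_ne_zero (hp 0)
  let q : σ → E := fun s => (p (c.logVar 0))⁻¹ * p s
  have hq (j) : q (c.logVar j) ≠ 0 := mul_ne_zero hinv (hp j)
  have hFq : MvPolynomial.eval q (c.poly E) = 0 :=
    (eval₂_mul_left_of_isHomogeneous (RingHom.id E) (c.isHomogeneous_poly E) _ p).trans
      (mul_eq_zero_of_right _ hF)
  let f : Fin n → E := fun j => p (c.logVar j.succ) / p (c.logVar 0)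
  have hΘ (k : Fin n) (j : Fin (n + 1)) : dualDerivation D f k (q (c.logVar j)) =
      if j = k.succ then q (c.logVar j) else 0 := by
    cases j using Fin.cases with
    | zero =>
      have hq0 : q (c.logVar 0) = 1 := inv_mul_cancel₀ (hp 0)
      rw [hq0, Derivation.map_one_eq_zero, if_neg (Fin.succ_ne_zero k).symm]
    | succ j =>
      simp only [q, inv_mul_eq_div, Fin.succ_inj]
      exact dualDerivation_apply_self hdet j k
  have hΘv := valuation_dualDerivation_le v hdet
    fun g hg => (hbound g hg).trans (not_lt.mp hlt)
  intro j s
  have hle : v (q s) ≤ v (q (c.logVar j)) :=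
    c.dominates (fun s => v (q s)) (fun j => (Valuation.ne_zero_iff v).mpr (hq j)) (fun m hm => by
      simpa only [← map_monomialEval v] using
        c.valuation_monomialEval_le_pert v hΘ hq hΘv hFq hm) j s
  simp only [q, map_mul] at hle
  exact le_of_mul_le_mul_left hle (zero_lt_iff.mpr ((Valuation.ne_zero_iff v).mpr hinv))

end SpecialForm

end StableIrrationality

namespace StableIrrationality

open IsDedekindDomain Polynomial

/-! ### Integrality of logarithmic determinants over a Dedekind domain -/

section ValuationDet

variable {E ι Γ : Type*} [Field E] [Fintype ι] [DecidableEq ι] [LinearOrderedCommGroupWithZero Γ]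
  (v : Valuation E Γ)

lemma valuation_det_le {A : Matrix ι ι E} {c : ι → Γ} (h : ∀ i j, v (A i j) ≤ c j) :
    v A.det ≤ ∏ j, c j := by
  rw [Matrix.det_apply]
  refine v.map_sum_le fun τ _ => ?_
  have sign_smul : v (Equiv.Perm.sign τ • ∏ i, A (τ i) i) = v (∏ i, A (τ i) i) := by
    rcases Int.units_eq_one_or (Equiv.Perm.sign τ) with h | h <;> simp [h]
  rw [sign_smul, map_prod]
  exact Finset.prod_le_prod' fun i _ => h _ _

-- The determinant is that of a bordered matrix in which `u` fills a single column.
lemma valuation_det_add_vecMulVec_le {A : Matrix ι ι E} (hA : ∀ i j, v (A i j) ≤ 1)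
    {u w : ι → E} {C : Γ} (hC : 1 ≤ C) (hu : ∀ i, v (u i) ≤ C) (hw : ∀ j, v (w j) ≤ 1) :
    v (A + Matrix.vecMulVec u w).det ≤ C := by
  have schur : A + Matrix.vecMulVec u w =
      A - Matrix.replicateCol Unit u * Matrix.replicateRow Unit (-w) := by
    ext i j
    simp [Matrix.mul_apply, Matrix.vecMulVec_apply]
  rw [schur, ← Matrix.det_fromBlocks_one₁₁]
  refine (valuation_det_le v (c := Sum.elim (fun _ => C) fun _ => 1) ?_).trans (by simp)
  rintro (i | i) (j | j)
  · simpa using hC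
  · simpa using hw j
  · simpa using hu i
  · simpa using hA i j

end ValuationDet

lemma dlog_mul_zpow {E : Type*} [Field E] (D : Derivation ℤ E E) {g π : E} (hg : g ≠ 0)
    (hπ : π ≠ 0) (a : ℤ) :
    D (g * π ^ a) / (g * π ^ a) = D g / g + D π / π * a := by
  have hπa := zpow_ne_zero a hπ
  rw [Derivation.leibniz, Derivation.leibniz_zpow, zpow_sub_one₀ hπ, smul_eq_mul, smul_eq_mul,
    zsmul_eq_mul, smul_eq_mul]
  field_simp
  ring

lemma exists_eq_mul_zpow_of_uniformizer {E : Type*} [Field E]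
    (v : Valuation E (WithZero (Multiplicative ℤ))) {π : E} (hπ : v π = WithZero.exp (-1 : ℤ))
    {f : E} (hf : f ≠ 0) : ∃ (g : E) (a : ℤ), v g = 1 ∧ f = g * π ^ a := by
  have hπ0 : π ≠ 0 := fun h => WithZero.exp_ne_zero (by rw [← hπ, h, map_zero])
  have hvf : v f ≠ 0 := (Valuation.ne_zero_iff v).mpr hf
  refine ⟨f * π ^ WithZero.log (v f), -WithZero.log (v f), ?_, ?_⟩
  · nth_rw 1 [map_mul, map_zpow₀, hπ, ← WithZero.exp_zsmul, ← WithZero.exp_log hvf]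
    rw [← WithZero.exp_add]
    simp
  · rw [mul_assoc, ← zpow_add₀ hπ0, add_neg_cancel, zpow_zero, mul_one]

section Dedekind

variable {R E : Type*} [CommRing R] [IsDedekindDomain R] [Field E] [Algebra R E]
  [IsFractionRing R E] (w : HeightOneSpectrum R)

lemma valuation_derivation_le_one {D : Derivation ℤ E E}
    (hD : ∀ a : R, w.valuation E (D (algebraMap R E a)) ≤ 1) {f : E}
    (hf : w.valuation E f ≤ 1) : w.valuation E (D f) ≤ 1 := by
  obtain ⟨a, b, hab⟩ := w.exists_primeCompl_mul_eq_of_integer f hf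
  have hb : w.valuation E (algebraMap R E b) = 1 := w.valuation_eq_one_iff_notMem.mpr b.2
  have leibniz : algebraMap R E b * D f =
      D (algebraMap R E a) - f * D (algebraMap R E b) := by
    rw [← hab, Derivation.leibniz, smul_eq_mul, smul_eq_mul, add_sub_cancel_left]
  calc w.valuation E (D f) = w.valuation E (algebraMap R E b * D f) := by rw [map_mul, hb, one_mul]
    _ ≤ 1 := by
      rw [leibniz]
      refine Valuation.map_sub_le _ (hD a) ?_
      rw [map_mul]
      exact mul_le_one' hf (hD b)

variable {ι : Type*} [Fintype ι] [DecidableEq ι]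

lemma valuation_det_dlogMatrix_le {D : ι → Derivation ℤ E E}
    (hD : ∀ i, ∀ a : R, w.valuation E (D i (algebraMap R E a)) ≤ 1) {π : E}
    (hπ : w.valuation E π = WithZero.exp (-1 : ℤ)) {C : WithZero (Multiplicative ℤ)} (hC : 1 ≤ C)
    (hDπ : ∀ i, w.valuation E (D i π / π) ≤ C) {f : ι → E} (hf : ∀ j, f j ≠ 0) :
    w.valuation E (dlogMatrix D f).det ≤ C := by
  have hπ0 : π ≠ 0 := fun h => WithZero.exp_ne_zero (by rw [← hπ, h, map_zero])
  choose g a hg hfg using fun j => exists_eq_mul_zpow_of_uniformizer (w.valuation E) hπ (hf j)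
  have hg0 (j) : g j ≠ 0 := (Valuation.ne_zero_iff _).mp (by rw [hg j]; exact one_ne_zero)
  have rank_one_update : dlogMatrix D f =
      dlogMatrix D g + Matrix.vecMulVec (fun i => D i π / π) fun j => (a j : E) := by
    ext i j
    simp only [dlogMatrix, Matrix.of_apply, Matrix.add_apply, Matrix.vecMulVec_apply, hfg j,
      dlog_mul_zpow (D i) (hg0 j) hπ0]
  rw [rank_one_update]
  refine valuation_det_add_vecMulVec_le _ (fun i j => ?_) hC hDπ fun j => ?_
  · simpa [dlogMatrix, hg j] using valuation_derivation_le_one w (hD i) (hg j).le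
  · simpa using w.valuation_le_one (K := E) (a j : R)

lemma valuation_dlogDet_le_one {n : ℕ} {D : Fin n → Derivation ℤ E E}
    (hD : ∀ i, ∀ a : R, w.valuation E (D i (algebraMap R E a)) ≤ 1) {x : Fin (n + 1) → E}
    (hx : ∀ j, w.valuation E (x j) = w.valuation E (x 0)) :
    w.valuation E (dlogDet D x) ≤ 1 := by
  refine (valuation_det_le _ (c := fun _ => 1) fun i j => ?_).trans (by simp)
  rcases eq_or_ne (x 0) 0 with h0 | h0
  · simp [dlogMatrix, h0]
  have ratio : w.valuation E (x j.succ / x 0) = 1 := by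
    rw [map_div₀, hx j.succ, div_self ((Valuation.ne_zero_iff _).mpr h0)]
  simpa [dlogMatrix, hx j.succ, h0] using valuation_derivation_le_one w (hD i) ratio.le

variable {σ : Type*} {n d : ℕ} [CharP E 2] (c : SpecialForm σ n d)

lemma SpecialForm.valuation_dlogDet_le_one {D : Fin n → Derivation ℤ E E}
    (hD : ∀ i, ∀ a : R, w.valuation E (D i (algebraMap R E a)) ≤ 1) {p : σ → E}
    (hF : MvPolynomial.eval p (c.poly E) = 0) :
    w.valuation E (dlogDet D (p ∘ c.logVar)) ≤ 1 := by
  obtain ⟨π, hπ⟩ := w.valuation_exists_uniformizer' E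
  have one_le_exp : (1 : WithZero (Multiplicative ℤ)) ≤ WithZero.exp (1 : ℤ) := by
    rw [← WithZero.exp_zero, WithZero.exp_le_exp]; norm_num
  have dlog_le (i) : w.valuation E (D i (algebraMap R E π) / algebraMap R E π) ≤
      WithZero.exp (1 : ℤ) := by
    rw [map_div₀, hπ, div_eq_mul_inv, ← WithZero.exp_neg, neg_neg]
    exact mul_le_of_le_one_left' (hD i π)
  rcases c.valuation_dlogDet_lt_or_le (w.valuation E) D hF WithZero.exp_ne_zero
    (fun _ hf => valuation_det_dlogMatrix_le w hD hπ one_le_exp dlog_le hf) with hlt | hle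
  · rw [← WithZero.lt_mul_exp_iff_le one_ne_zero]
    simpa using hlt
  · exact StableIrrationality.valuation_dlogDet_le_one w hD
      fun j => le_antisymm (hle 0 _) (hle j _)

theorem SpecialForm.exists_algebraMap_eq_dlogDet {D : Fin n → Derivation ℤ E E}
    {D₀ : Fin n → Derivation ℤ R R}
    (hD : ∀ i a, D i (algebraMap R E a) = algebraMap R E (D₀ i a)) {p : σ → E}
    (hF : MvPolynomial.eval p (c.poly E) = 0) :
    ∃ P : R, algebraMap R E P = dlogDet D (p ∘ c.logVar) :=
  HeightOneSpectrum.mem_integers_of_valuation_le_one E _ fun w =>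
    c.valuation_dlogDet_le_one w (fun i a => by rw [hD]; exact w.valuation_le_one _) hF

end Dedekind

/-! ### Polynomial paths on the special hypersurface -/

section DlogNumerator

variable {n : ℕ}

/-- The determinant of the numerators `D i (x j) x₀ - D i (x₀) x j` of the entries of the
logarithmic matrix that defines `dlogDet`; it makes sense over any ring. -/
def dlogNumerator {A : Type*} [CommRing A] (D : Fin n → A → A) (x : Fin (n + 1) → A) : A :=
  Matrix.det (Matrix.of fun i j : Fin n => D i (x j.succ) * x 0 - D i (x 0) * x j.succ)

lemma dlogDet_mul_prod {E : Type*} [Field E] (hn : 0 < n) (D : Fin n → Derivation ℤ E E)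
    (x : Fin (n + 1) → E) :
    dlogDet D x * ∏ j : Fin n, (x j.succ * x 0) = dlogNumerator (fun i => D i) x := by
  rcases eq_or_ne (x 0) 0 with h0 | h0
  · rw [Finset.prod_eq_zero (Finset.mem_univ ⟨0, hn⟩) (by rw [h0, mul_zero]), mul_zero]
    exact (Matrix.det_eq_zero_of_row_eq_zero ⟨0, hn⟩ fun j => by simp [h0]).symm
  rw [mul_comm, dlogDet, dlogNumerator, ← Matrix.det_mul_row]
  congr 1
  ext i j
  rcases eq_or_ne (x j.succ) 0 with hj | hj
  · simp [hj]
  simp only [Matrix.of_apply, dlogMatrix, Derivation.leibniz_div, smul_eq_mul]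
  field_simp

lemma map_dlogNumerator {A B : Type*} [CommRing A] [CommRing B] (f : A →+* B)
    {D : Fin n → A → A} {D' : Fin n → B → B} (h : ∀ i a, f (D i a) = D' i (f a))
    (x : Fin (n + 1) → A) :
    f (dlogNumerator D x) = dlogNumerator D' fun j => f (x j) := by
  rw [dlogNumerator, dlogNumerator, RingHom.map_det]
  congr 1
  ext i j
  simp [h]

end DlogNumerator

/-- The place `X = 0` of `ℓ(X)`. -/
def heightOneSpectrumX (ℓ : Type*) [Field ℓ] : HeightOneSpectrum ℓ[X] where
  asIdeal := Ideal.span {X}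
  isPrime := by rw [Ideal.span_singleton_prime X_ne_zero]; exact prime_X
  ne_bot := by simp

lemma mem_heightOneSpectrumX {ℓ : Type*} [Field ℓ] {f : ℓ[X]} :
    f ∈ (heightOneSpectrumX ℓ).asIdeal ↔ f.coeff 0 = 0 :=
  Ideal.mem_span_singleton.trans X_dvd_iff

lemma valuation_heightOneSpectrumX_X {ℓ : Type*} (E : Type*) [Field ℓ] [Field E] [Algebra ℓ[X] E]
    [IsFractionRing ℓ[X] E] :
    (heightOneSpectrumX ℓ).valuation E (algebraMap ℓ[X] E X) = WithZero.exp (-1 : ℤ) := by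
  rw [HeightOneSpectrum.valuation_of_algebraMap]
  exact HeightOneSpectrum.intValuation_singleton _ X_ne_zero rfl

lemma coeffwiseDerivation_X {A : Type*} [CommRing A] (D : Derivation ℤ A A) :
    coeffwiseDerivation D X = 0 := by
  ext k
  rw [coeff_coeffwiseDerivation, coeff_X]
  split_ifs <;> simp

namespace SpecialForm

variable {σ ℓ : Type*} {n d : ℕ} [Field ℓ] [CharP ℓ 2] (c : SpecialForm σ n d)

-- The derivations kill the uniformizer `X`, so the dichotomy holds with the bound `1` at `X = 0`.
lemma coeff_zero_eq_zero_of_algebraMap_eq_dlogDet {E : Type*} [Field E] [Algebra ℓ[X] E]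
    [IsFractionRing ℓ[X] E] {D : Fin n → Derivation ℤ ℓ ℓ} {D' : Fin n → Derivation ℤ E E}
    (hD' : ∀ i a, D' i (algebraMap ℓ[X] E a) = algebraMap ℓ[X] E (coeffwiseDerivation (D i) a))
    {g : σ → ℓ[X]} (hF : MvPolynomial.eval g (c.poly ℓ[X]) = 0) {s : σ} (hs : (g s).coeff 0 ≠ 0)
    {j : Fin (n + 1)} (hj : (g (c.logVar j)).coeff 0 = 0) {P : ℓ[X]}
    (hP : algebraMap ℓ[X] E P = dlogDet D' ((fun s => algebraMap ℓ[X] E (g s)) ∘ c.logVar)) :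
    P.coeff 0 = 0 := by
  let w := heightOneSpectrumX ℓ
  have : CharP E 2 := charP_of_injective_algebraMap (IsFractionRing.injective ℓ[X] E) 2
  have hFE : MvPolynomial.eval (fun s => algebraMap ℓ[X] E (g s)) (c.poly E) = 0 := by
    rw [c.eval_poly_map, hF, map_zero]
  rcases c.valuation_dlogDet_lt_or_le (w.valuation E) D' hFE one_ne_zero fun f hf =>
      valuation_det_dlogMatrix_le w (fun i a => by rw [hD']; exact w.valuation_le_one _)
        (valuation_heightOneSpectrumX_X E) le_rfl
        (fun i => by simp [hD', coeffwiseDerivation_X]) hf with hlt | hle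
  · rw [← hP] at hlt
    exact mem_heightOneSpectrumX.mp ((w.valuation_lt_one_iff_mem P).mp hlt)
  · refine absurd (hle j s) (not_le.mpr ?_)
    rw [w.valuation_eq_one_iff_notMem.mpr (mem_heightOneSpectrumX.not.mpr hs),
      w.valuation_lt_one_iff_mem]
    exact mem_heightOneSpectrumX.mpr hj

theorem exists_polynomial_dlogDet (D : Fin n → Derivation ℤ ℓ ℓ) {g : σ → ℓ[X]}
    (hF : MvPolynomial.eval g (c.poly ℓ[X]) = 0) {s : σ} (hs : (g s).coeff 0 ≠ 0) :
    ∃ P : ℓ[X], P * ∏ j : Fin n, (g (c.logVar j.succ) * g (c.logVar 0)) =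
        dlogNumerator (fun i => coeffwiseDerivation (D i)) (g ∘ c.logVar) ∧
      P.coeff 0 = dlogDet D fun j => (g (c.logVar j)).coeff 0 := by
  let E := FractionRing ℓ[X]
  have : CharP E 2 := charP_of_injective_algebraMap (IsFractionRing.injective ℓ[X] E) 2
  choose D' hD' using fun i =>
    exists_derivation_fractionRing (L := E) (coeffwiseDerivation (D i))
  obtain ⟨P, hP⟩ := c.exists_algebraMap_eq_dlogDet hD'
    (p := fun s => algebraMap ℓ[X] E (g s)) (by rw [c.eval_poly_map, hF, map_zero])
  have hPmul : P * ∏ j : Fin n, (g (c.logVar j.succ) * g (c.logVar 0)) =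
      dlogNumerator (fun i => coeffwiseDerivation (D i)) (g ∘ c.logVar) := by
    apply IsFractionRing.injective ℓ[X] E
    refine Eq.trans ?_ (map_dlogNumerator (algebraMap ℓ[X] E) (D' := fun i => D' i)
      (fun i a => (hD' i a).symm) (g ∘ c.logVar)).symm
    rw [map_mul, hP, map_prod]
    simpa [Function.comp_def] using
      dlogDet_mul_prod c.pos D' fun j => algebraMap ℓ[X] E (g (c.logVar j))
  refine ⟨P, hPmul, ?_⟩
  by_cases hx : ∀ j, (g (c.logVar j)).coeff 0 ≠ 0
  · have prod_ne_zero : ∏ j : Fin n, (g (c.logVar j.succ)).coeff 0 * (g (c.logVar 0)).coeff 0 ≠ 0 :=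
      Finset.prod_ne_zero_iff.mpr fun j _ => mul_ne_zero (hx j.succ) (hx 0)
    apply mul_right_cancel₀ prod_ne_zero
    have eval_zero := congrArg constantCoeff hPmul
    rw [map_dlogNumerator constantCoeff (D' := fun i => ⇑(D i)) (fun i a => by simp),
      map_mul, map_prod] at eval_zero
    simpa using eval_zero.trans (dlogDet_mul_prod c.pos D fun j => (g (c.logVar j)).coeff 0).symm
  · push Not at hx
    obtain ⟨j, hj⟩ := hx
    rw [c.coeff_zero_eq_zero_of_algebraMap_eq_dlogDet hD' hF hs hj hP]
    by_contra hne
    exact ne_zero_of_dlogDet_ne_zero c.pos (Ne.symm hne) j hj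

end SpecialForm

end StableIrrationality

namespace StableIrrationality

open Polynomial

/-! ### Constancy along polynomial paths -/

section Laurent

open LaurentPolynomial

variable {A : Type*} [CommRing A]

/-- The substitution `f ↦ f(T⁻¹)`. -/
def toLaurentInv : A[X] →+* A[T;T⁻¹] := (invert (R := A)).toRingEquiv.toRingHom.comp toLaurent

lemma toLaurentInv_apply (f : A[X]) : toLaurentInv f = invert (toLaurent f) := rfl

lemma toLaurentInv_injective : Function.Injective (toLaurentInv (A := A)) :=
  (invert (R := A)).injective.comp toLaurent_injective

lemma toLaurent_reflect {f : A[X]} {b : ℕ} (hf : f.natDegree ≤ b) :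
    toLaurent (f.reflect b) = T b * toLaurentInv f := by
  refine Polynomial.induction_with_natDegree_le
    (fun f => toLaurent (f.reflect b) = T b * toLaurentInv f) b (by simp) (fun k r _ hk => ?_)
    (fun f g _ _ hf hg => ?_) f hf
  · rw [reflect_C_mul_X_pow, revAt_le hk, toLaurent_C_mul_X_pow, toLaurentInv_apply,
      toLaurent_C_mul_X_pow, map_mul, invert_C, invert_T, Nat.cast_sub hk, T_sub]
    ring
  · rw [reflect_add, map_add, map_add, hf, hg, mul_add]

lemma coeff_zero_eq_of_toLaurent_eq_toLaurentInv {P Q : A[X]}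
    (h : toLaurent Q = toLaurentInv P) : Q.coeff 0 = P.coeff 0 := by
  have coeff_toLaurent_zero (f : A[X]) : (toLaurent f).coeff 0 = f.coeff 0 := by
    rw [coeff_toLaurent]
    exact f.toFinsupp.coeff.mapDomain_apply Nat.cast_injective 0
  rw [← coeff_toLaurent_zero, h, toLaurentInv_apply, invert_apply, neg_zero, coeff_toLaurent_zero]

end Laurent

lemma map_dlogNumerator_of_eq_mul {A B : Type*} [CommRing A] [CommRing B] {n : ℕ} {φ ψ : A →+* B}
    {a : B} {D : Fin n → A → A} {x y : Fin (n + 1) → A} (hy : ∀ j, ψ (y j) = a * φ (x j))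
    (hD : ∀ i j, ψ (D i (y j)) = a * φ (D i (x j))) :
    ψ (dlogNumerator D y) = (a * a) ^ n * φ (dlogNumerator D x) := by
  have hdet := Matrix.det_smul
    (φ.mapMatrix (Matrix.of fun i j : Fin n => D i (x j.succ) * x 0 - D i (x 0) * x j.succ)) (a * a)
  rw [Fintype.card_fin] at hdet
  rw [dlogNumerator, dlogNumerator, RingHom.map_det, RingHom.map_det, ← hdet]
  congr 1
  ext i j
  simp only [RingHom.mapMatrix_apply, Matrix.map_apply, Matrix.smul_apply, Matrix.of_apply,
    map_sub, map_mul, hD, hy, smul_eq_mul]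
  ring

lemma coeffwiseDerivation_reflect {A : Type*} [CommRing A] (D : Derivation ℤ A A) (f : A[X])
    (b : ℕ) : coeffwiseDerivation D (f.reflect b) = (coeffwiseDerivation D f).reflect b := by
  ext k
  simp only [coeff_coeffwiseDerivation, coeff_reflect]

lemma natDegree_coeffwiseDerivation_le {A : Type*} [CommRing A] (D : Derivation ℤ A A) (f : A[X]) :
    (coeffwiseDerivation D f).natDegree ≤ f.natDegree :=
  natDegree_le_iff_coeff_eq_zero.mpr fun k hk => by
    rw [coeff_coeffwiseDerivation, coeff_eq_zero_of_natDegree_lt hk, map_zero]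

lemma toLaurent_eq_toLaurentInv_of_mul_prod_eq {ℓ : Type*} [Field ℓ] {n : ℕ}
    {D : Fin n → Derivation ℤ ℓ ℓ} {x : Fin (n + 1) → ℓ[X]} {b : ℕ}
    (hdeg : ∀ j, (x j).natDegree ≤ b) (hx : ∏ j : Fin n, (x j.succ * x 0) ≠ 0) {P Q : ℓ[X]}
    (hP : P * ∏ j : Fin n, (x j.succ * x 0) = dlogNumerator (fun i => coeffwiseDerivation (D i)) x)
    (hQ : Q * ∏ j : Fin n, ((x j.succ).reflect b * (x 0).reflect b) =
      dlogNumerator (fun i => coeffwiseDerivation (D i)) fun j => (x j).reflect b) :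
    toLaurent Q = toLaurentInv P := by
  let a : LaurentPolynomial ℓ := LaurentPolynomial.T b
  have scaled (j) : toLaurent ((x j).reflect b) = a * toLaurentInv (x j) :=
    toLaurent_reflect (hdeg j)
  have ha : (a * a) ^ n ≠ 0 :=
    (((LaurentPolynomial.isUnit_T b).mul (LaurentPolynomial.isUnit_T b)).pow n).ne_zero
  have scaled_prod : toLaurent (∏ j : Fin n, ((x j.succ).reflect b * (x 0).reflect b)) =
      (a * a) ^ n * toLaurentInv (∏ j : Fin n, (x j.succ * x 0)) := by
    simp only [Finset.prod_mul_distrib, map_mul, map_prod, map_pow, scaled, Finset.prod_const,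
      Finset.card_univ, Fintype.card_fin]
    ring
  have scaled_numerator := map_dlogNumerator_of_eq_mul scaled
    (D := fun i => coeffwiseDerivation (D i)) fun i j => by
      rw [coeffwiseDerivation_reflect]
      exact toLaurent_reflect ((natDegree_coeffwiseDerivation_le _ _).trans (hdeg j))
  have hx' := (map_ne_zero_iff _ toLaurentInv_injective).mpr hx
  apply mul_right_cancel₀ (mul_ne_zero ha hx')
  calc toLaurent Q * ((a * a) ^ n * toLaurentInv (∏ j : Fin n, (x j.succ * x 0)))
      = (a * a) ^ n * toLaurentInv (P * ∏ j : Fin n, (x j.succ * x 0)) := by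
        rw [← scaled_prod, ← map_mul, hQ, scaled_numerator, hP]
    _ = toLaurentInv P * ((a * a) ^ n * toLaurentInv (∏ j : Fin n, (x j.succ * x 0))) := by
        rw [map_mul, mul_left_comm]

namespace SpecialForm

variable {σ ℓ : Type*} {n d : ℕ} [Field ℓ] (c : SpecialForm σ n d)

lemma eval_reflect_eq_zero {g : σ → ℓ[X]} {b : ℕ} (hb : ∀ s, (g s).natDegree ≤ b)
    (hF : MvPolynomial.eval g (c.poly ℓ[X]) = 0) :
    MvPolynomial.eval (fun s => (g s).reflect b) (c.poly ℓ[X]) = 0 := by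
  apply toLaurent_injective
  rw [← c.eval_poly_map, map_zero]
  simp only [toLaurent_reflect (hb _)]
  refine (eval₂_mul_left_of_isHomogeneous (RingHom.id _) (c.isHomogeneous_poly _) _ _).trans
    (mul_eq_zero_of_right _ ?_)
  exact (c.eval_poly_map toLaurentInv g).trans (by rw [hF, map_zero])

-- By `exists_polynomial_dlogDet` the logarithmic determinant is a polynomial `P` in `X` and, for
-- the reversed path, a polynomial in `X⁻¹`; hence it is constant.
lemma dlogDet_coeff_zero_eq_dlogDet_coeff [CharP ℓ 2] (D : Fin n → Derivation ℤ ℓ ℓ) {g : σ → ℓ[X]}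
    {b : ℕ} (hdeg : ∀ s, (g s).natDegree ≤ b) (hF : MvPolynomial.eval g (c.poly ℓ[X]) = 0)
    (h0 : ∃ s, (g s).coeff 0 ≠ 0) (hb : ∃ s, (g s).coeff b ≠ 0) :
    dlogDet D (fun j => (g (c.logVar j)).coeff 0) =
      dlogDet D fun j => (g (c.logVar j)).coeff b := by
  by_cases hg : ∃ j, g (c.logVar j) = 0
  · obtain ⟨j, hj⟩ := hg
    have dlogDet_eq_zero (k : ℕ) : dlogDet D (fun j => (g (c.logVar j)).coeff k) = 0 :=
      of_not_not fun h => ne_zero_of_dlogDet_ne_zero c.pos h j (by simp [hj])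
    rw [dlogDet_eq_zero, dlogDet_eq_zero]
  push Not at hg
  have coeff_zero_reflect (s) : ((g s).reflect b).coeff 0 = (g s).coeff b := by
    rw [coeff_reflect, revAt_zero]
  obtain ⟨s, hs⟩ := h0
  obtain ⟨t, ht⟩ := hb
  obtain ⟨P, hP, hP0⟩ := c.exists_polynomial_dlogDet D hF hs
  obtain ⟨Q, hQ, hQ0⟩ := c.exists_polynomial_dlogDet D (c.eval_reflect_eq_zero hdeg hF)
    (s := t) (by rwa [coeff_zero_reflect])
  simp only [coeff_zero_reflect] at hQ0
  rw [← hP0, ← hQ0]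
  have path_prod_ne_zero : ∏ j : Fin n, (g (c.logVar j.succ) * g (c.logVar 0)) ≠ 0 :=
    Finset.prod_ne_zero_iff.mpr fun j _ => mul_ne_zero (hg j.succ) (hg 0)
  refine (coeff_zero_eq_of_toLaurent_eq_toLaurentInv ?_).symm
  exact toLaurent_eq_toLaurentInv_of_mul_prod_eq (fun j => hdeg (c.logVar j))
    path_prod_ne_zero hP hQ

theorem dlogDet_trailing_eq_dlogDet_leading [CharP ℓ 2] (D : Fin n → Derivation ℤ ℓ ℓ)
    {g : σ → ℓ[X]} {t b : ℕ} (ht : ∀ s, ∀ i < t, (g s).coeff i = 0)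
    (hb : ∀ s, ∀ i > b, (g s).coeff i = 0) (hF : MvPolynomial.eval g (c.poly ℓ[X]) = 0)
    (hgt : ∃ s, (g s).coeff t ≠ 0) (hgb : ∃ s, (g s).coeff b ≠ 0) :
    dlogDet D (fun j => (g (c.logVar j)).coeff t) =
      dlogDet D fun j => (g (c.logVar j)).coeff b := by
  obtain ⟨e, rfl⟩ : ∃ e, b = t + e :=
    Nat.exists_eq_add_of_le (not_lt.mp fun h => hgt.elim fun s hs => hs (hb s t h))
  choose h hgh using fun s => X_pow_dvd_iff.mpr (ht s)
  obtain rfl : g = fun s => X ^ t * h s := funext hgh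
  have coeff_add (s i) : (X ^ t * h s).coeff (t + i) = (h s).coeff i := by
    rw [add_comm, coeff_X_pow_mul]
  have coeff_self (s) : (X ^ t * h s).coeff t = (h s).coeff 0 := coeff_add s 0
  have hFh : MvPolynomial.eval h (c.poly ℓ[X]) = 0 := by
    have := (eval₂_mul_left_of_isHomogeneous (RingHom.id _) (c.isHomogeneous_poly ℓ[X])
      (X ^ t) h).symm.trans hF
    exact (mul_eq_zero.mp this).resolve_left (pow_ne_zero _ (pow_ne_zero _ X_ne_zero))
  simp only [coeff_add, coeff_self] at hgt hgb ⊢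
  refine c.dlogDet_coeff_zero_eq_dlogDet_coeff D (fun s => ?_) hFh hgt hgb
  rw [natDegree_le_iff_coeff_eq_zero]
  intro i hi
  rw [← coeff_add]
  exact hb s _ (by omega)

end SpecialForm

end StableIrrationality

namespace StableIrrationality

open IsLocalRing Polynomial

/-! ### Reduction of projective points -/

section Reduction

variable {σ L : Type*} [Field L] {V : ValuationSubring L}

lemma residue_ne_zero_iff_valuation_eq_one {y : V} : residue V y ≠ 0 ↔ V.valuation y = 1 :=
  (residue_ne_zero_iff_isUnit y).trans (V.valuation_eq_one_iff y)

lemma residue_eq_zero_iff_valuation_lt_one {y : V} : residue V y = 0 ↔ V.valuation y < 1 :=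
  (residue_eq_zero_iff y).trans (V.valuation_lt_one_iff y)

lemma exists_div_mem_and_valuation_div_eq_one {ι : Type*} {T : Finset ι} {p : ι → L}
    (hp : ∃ i ∈ T, p i ≠ 0) :
    ∃ a : L, a ≠ 0 ∧ (∀ i ∈ T, p i / a ∈ V) ∧ ∃ i ∈ T, V.valuation (p i / a) = 1 := by
  obtain ⟨i, hi, hpi⟩ := hp
  obtain ⟨m, hm, hmax⟩ := T.exists_max_image (fun i => V.valuation (p i)) ⟨i, hi⟩
  have hpm : 0 < V.valuation (p m) :=
    (zero_lt_iff.mpr ((Valuation.ne_zero_iff _).mpr hpi)).trans_le (hmax i hi)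
  have hpm0 : p m ≠ 0 := (Valuation.ne_zero_iff _).mp hpm.ne'
  refine ⟨p m, hpm0, fun j hj => ?_, m, hm, by rw [div_self hpm0, map_one]⟩
  rw [← V.valuation_le_one_iff, map_div₀]
  exact (div_le_one₀ hpm).mpr (hmax j hj)

variable (V) in
/-- The residue tuple `q`, not identically zero, is a reduction modulo `V` of the projective point
with homogeneous coordinates `p`. -/
def IsReduction (p : σ → L) (q : σ → ResidueField V) : Prop :=
  ∃ a : L, a ≠ 0 ∧ ∃ p' : σ → V,
    (∀ s, p s = a * p' s) ∧ (∀ s, residue V (p' s) = q s) ∧ ∃ s, q s ≠ 0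

namespace IsReduction

variable {p : σ → L} {q q' : σ → ResidueField V}

lemma of_residue {p' : σ → V} (h : ∃ s, residue V (p' s) ≠ 0) :
    IsReduction V (fun s => (p' s : L)) fun s => residue V (p' s) :=
  ⟨1, one_ne_zero, p', fun _ => (one_mul _).symm, fun _ => rfl, h⟩

lemma mul_left (h : IsReduction V p q) {b : L} (hb : b ≠ 0) :
    IsReduction V (fun s => b * p s) q := by
  obtain ⟨a, ha, p', hp, hq⟩ := h
  exact ⟨b * a, mul_ne_zero hb ha, p', fun s => by simp only [hp, mul_assoc], hq⟩

lemma exists_ne_zero (h : IsReduction V p q) : ∃ s, p s ≠ 0 := by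
  obtain ⟨a, ha, p', hp, hq, s, hs⟩ := h
  refine ⟨s, fun h0 => hs ?_⟩
  rw [hp, mul_eq_zero, or_iff_right ha] at h0
  rw [← hq, show p' s = 0 from Subtype.ext h0, map_zero]

lemma exists_eq_mul (h : IsReduction V p q) (h' : IsReduction V p q') :
    ∃ a : ResidueField V, a ≠ 0 ∧ ∀ s, q' s = a * q s := by
  obtain ⟨a, -, p₁, hp₁, hq₁, s₁, hs₁⟩ := h
  obtain ⟨b, hb, p₂, hp₂, hq₂, s₂, hs₂⟩ := h'
  have hab (s) : a * (p₁ s : L) = b * p₂ s := by rw [← hp₁, ← hp₂]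
  rw [← hq₁, residue_ne_zero_iff_valuation_eq_one] at hs₁
  rw [← hq₂, residue_ne_zero_iff_valuation_eq_one] at hs₂
  have a_le_b : V.valuation a ≤ V.valuation b := by
    rw [← mul_one (V.valuation a), ← hs₁, ← map_mul, hab, map_mul]
    exact mul_le_of_le_one_right' (V.valuation_le_one _)
  have b_le_a : V.valuation b ≤ V.valuation a := by
    rw [← mul_one (V.valuation b), ← hs₂, ← map_mul, ← hab, map_mul]
    exact mul_le_of_le_one_right' (V.valuation_le_one _)
  have ratio_unit : V.valuation (a / b) = 1 := by
    rw [map_div₀, le_antisymm a_le_b b_le_a, div_self ((Valuation.ne_zero_iff _).mpr hb)]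
  let u : V := ⟨a / b, (V.valuation_le_one_iff _).mp ratio_unit.le⟩
  refine ⟨residue V u, residue_ne_zero_iff_valuation_eq_one.mpr ratio_unit, fun s => ?_⟩
  rw [← hq₁, ← hq₂, ← map_mul]
  congr 1
  apply Subtype.ext
  change (p₂ s : L) = a / b * p₁ s
  rw [div_mul_eq_mul_div, hab, mul_div_cancel_left₀ _ hb]

lemma dlogDet_eq {n : ℕ} (D : Fin n → Derivation ℤ (ResidueField V) (ResidueField V))
    (x : Fin (n + 1) → σ) (h : IsReduction V p q) (h' : IsReduction V p q') :
    dlogDet D (fun j => q (x j)) = dlogDet D fun j => q' (x j) := by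
  obtain ⟨a, ha, hq'⟩ := h.exists_eq_mul h'
  simp only [hq']
  exact (dlogDet_mul_left ha D _).symm

end IsReduction

end Reduction

/-! ### Degenerating a path to the residue field -/

section Rescaling

variable {σ L : Type*} [Field L] {V : ValuationSubring L}

variable (V) in
/-- The value group of `V` is divisible. -/
def HasDivisibleValueGroup : Prop :=
  ∀ z : L, z ≠ 0 → ∀ m : ℕ, 0 < m → ∃ b, V.valuation b ^ m = V.valuation z

-- `b` is read off the steepest slope `v (coeff i) ^ (1 / (t - i))` of the Newton polygon.
lemma exists_slope [Finite σ] (hV : HasDivisibleValueGroup V) {g : σ → V[X]} {t : ℕ} (ht : 0 < t)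
    (hlt : ∀ s, ∀ i < t, residue V ((g s).coeff i) = 0) (hg : ∃ s, (g s).coeff 0 ≠ 0) :
    ∃ b : L, b ≠ 0 ∧ V.valuation b < 1 ∧
      (∀ s, ∀ i < t, V.valuation ((g s).coeff i : L) ≤ V.valuation b ^ (t - i)) ∧
      ∃ i < t, ∃ s, V.valuation ((g s).coeff i : L) = V.valuation b ^ (t - i) := by
  classical
  have := Fintype.ofFinite σ
  let T : Finset (ℕ × σ) := {u ∈ Finset.range t ×ˢ Finset.univ | (g u.2).coeff u.1 ≠ 0}
  have mem_T {u : ℕ × σ} : u ∈ T ↔ u.1 < t ∧ (g u.2).coeff u.1 ≠ 0 := by simp [T]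
  have exists_root (u : ℕ × σ) : ∃ b : L, u ∈ T →
      V.valuation b ^ (t - u.1) = V.valuation ((g u.2).coeff u.1 : L) := by
    by_cases hu : u ∈ T
    · obtain ⟨b, hb⟩ := hV _ (Subtype.coe_ne_coe.mpr (mem_T.mp hu).2) (t - u.1)
        (Nat.sub_pos_of_lt (mem_T.mp hu).1)
      exact ⟨b, fun _ => hb⟩
    · exact ⟨0, fun h => absurd h hu⟩
  choose β hβ using exists_root
  obtain ⟨u, hu, hmax⟩ := T.exists_max_image (fun u => V.valuation (β u))
    (hg.elim fun s hs => ⟨(0, s), mem_T.mpr ⟨ht, hs⟩⟩)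
  have hu_pos : t - u.1 ≠ 0 := (Nat.sub_pos_of_lt (mem_T.mp hu).1).ne'
  refine ⟨β u, ?_, ?_, fun s i hi => ?_, u.1, (mem_T.mp hu).1, u.2, (hβ u hu).symm⟩
  · rw [← Valuation.ne_zero_iff V.valuation, ← pow_ne_zero_iff hu_pos, hβ u hu,
      Valuation.ne_zero_iff]
    exact Subtype.coe_ne_coe.mpr (mem_T.mp hu).2
  · rw [← pow_lt_one_iff hu_pos, hβ u hu, ← residue_eq_zero_iff_valuation_lt_one]
    exact hlt u.2 u.1 (mem_T.mp hu).1
  · by_cases h0 : (g s).coeff i = 0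
    · simp [h0]
    · have hmem : (i, s) ∈ T := mem_T.mpr ⟨hi, h0⟩
      rw [← hβ _ hmem]
      exact pow_le_pow_left' (hmax _ hmem) _

lemma exists_polynomial_coeff_eq {r : ℕ → L} (hr : ∀ i, r i ∈ V) {f : L[X]}
    (hf : ∀ i, f.coeff i = r i) : ∃ g : V[X], ∀ i, ((g.coeff i : V) : L) = r i := by
  have hlifts : f ∈ lifts (algebraMap V L) :=
    (lifts_iff_coeff_lifts _).mpr fun i => ⟨⟨r i, hr i⟩, (hf i).symm⟩
  obtain ⟨g, rfl⟩ := (mem_lifts _).mp hlifts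
  exact ⟨g, fun i => by rw [← hf, coeff_map]; rfl⟩

-- The new tuple is `b⁻ᵗ g(bX)`.
lemma exists_rescaling [Finite σ] (hV : HasDivisibleValueGroup V) {g : σ → V[X]} {t : ℕ}
    (ht : 0 < t) (hlt : ∀ s, ∀ i < t, residue V ((g s).coeff i) = 0)
    (hg : ∃ s, (g s).coeff 0 ≠ 0) :
    ∃ b : L, b ≠ 0 ∧ ∃ h : σ → V[X],
      (∀ s i, (b ^ t * ((h s).coeff i : L)) = b ^ i * (g s).coeff i) ∧
      (∀ s, ∀ i > t, residue V ((h s).coeff i) = 0) ∧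
      ∃ i < t, ∃ s, residue V ((h s).coeff i) ≠ 0 := by
  obtain ⟨b, hb, hb1, hle, i₀, hi₀, s₀, heq⟩ := exists_slope hV ht hlt hg
  have hvb : V.valuation b ≠ 0 := (Valuation.ne_zero_iff _).mpr hb
  let r (s : σ) (i : ℕ) : L := (b ^ t)⁻¹ * (b ^ i * (g s).coeff i)
  have r_of_lt (s) {i} (hi : i < t) : V.valuation (r s i) =
      V.valuation ((g s).coeff i : L) / V.valuation b ^ (t - i) := by
    simp only [r, map_mul, map_inv₀, map_pow]
    rw [← pow_sub_mul_pow _ hi.le]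
    field_simp
  have r_self (s) : r s t = (g s).coeff t := inv_mul_cancel_left₀ (pow_ne_zero _ hb) _
  have r_of_gt (s) {i} (hi : t < i) : V.valuation (r s i) < 1 := by
    have : r s i = b ^ (i - t) * (g s).coeff i := by
      simp only [r]
      rw [← pow_sub_mul_pow b hi.le]
      field_simp
    rw [this, map_mul, map_pow]
    exact mul_lt_one_of_lt_of_le (pow_lt_one' hb1 (by omega)) (V.valuation_le_one _)
  have r_mem (s i) : r s i ∈ V := by
    rw [← V.valuation_le_one_iff]
    rcases lt_trichotomy i t with hi | rfl | hi
    · rw [r_of_lt s hi]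
      exact (div_le_one₀ (zero_lt_iff.mpr (pow_ne_zero _ hvb))).mpr (hle s i hi)
    · rw [r_self]; exact V.valuation_le_one _
    · exact (r_of_gt s hi).le
  choose h hh using fun s => exists_polynomial_coeff_eq (r_mem s)
    (f := C (b ^ t)⁻¹ * ((g s).map (algebraMap V L)).comp (C b * X)) fun i => by
      simp only [r, coeff_C_mul, comp_C_mul_X_coeff, coeff_map, mul_comm (b ^ i)]; rfl
  refine ⟨b, hb, h, fun s i => ?_, fun s i hi => ?_, i₀, hi₀, s₀, ?_⟩
  · rw [hh, mul_inv_cancel_left₀ (pow_ne_zero _ hb)]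
  · rw [residue_eq_zero_iff_valuation_lt_one, hh]
    exact r_of_gt s hi
  · rw [residue_ne_zero_iff_valuation_eq_one, hh, r_of_lt s₀ hi₀, heq, div_self (pow_ne_zero _ hvb)]

variable {F : MvPolynomial σ V} {d : ℕ}

lemma mapRingHom_algebraMap_injective : Function.Injective (mapRingHom (algebraMap V L)) :=
  map_injective _ (IsFractionRing.injective V L)

lemma eval₂_rescaling_eq_zero (hF : F.IsHomogeneous d) {g h : σ → V[X]} {b : L} {t : ℕ}
    (hb : b ≠ 0) (hgh : ∀ s i, (b ^ t * ((h s).coeff i : L)) = b ^ i * (g s).coeff i)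
    (hg : MvPolynomial.eval₂ C g F = 0) : MvPolynomial.eval₂ C h F = 0 := by
  let μ : V[X] →+* L[X] := mapRingHom (algebraMap V L)
  have scaled (s) : C (b ^ t) * μ (h s) = (μ (g s)).comp (C b * X) := by
    ext i
    rw [coeff_C_mul, comp_C_mul_X_coeff, mul_comm _ (b ^ i)]
    simpa [μ] using hgh s i
  have hμg : MvPolynomial.eval₂ (μ.comp C) (fun s => (μ (g s)).comp (C b * X)) F = 0 := by
    have h0 := congrArg ((compRingHom (C b * X)).comp μ) hg
    rw [MvPolynomial.hom_eval₂, map_zero] at h0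
    convert h0 using 2
    · ext; simp [μ]
    · rfl
  simp only [← scaled] at hμg
  rw [eval₂_mul_left_of_isHomogeneous _ hF] at hμg
  apply mapRingHom_algebraMap_injective
  rw [map_zero, MvPolynomial.hom_eval₂]
  exact (mul_eq_zero.mp hμg).resolve_left (pow_ne_zero _ (C_ne_zero.mpr (pow_ne_zero _ hb)))

lemma eval₂_eq_zero_of_map_eq_C_mul (hF : F.IsHomogeneous d) {f : σ → L[X]} {g : σ → V[X]} {a : L}
    (hg : ∀ s, (g s).map (algebraMap V L) = C a * f s)
    (hf : MvPolynomial.eval₂ (C.comp (algebraMap V L)) f F = 0) :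
    MvPolynomial.eval₂ C g F = 0 := by
  apply mapRingHom_algebraMap_injective
  rw [map_zero, MvPolynomial.hom_eval₂, ← mul_zero (C a ^ d), ← hf,
    ← eval₂_mul_left_of_isHomogeneous _ hF]
  congr 1
  · ext; simp
  · exact funext hg

lemma eval₂_taylor_eq_zero {g : σ → V[X]} (hg : MvPolynomial.eval₂ C g F = 0) (r : V) :
    MvPolynomial.eval₂ C (fun s => taylor r (g s)) F = 0 := by
  have h0 := congrArg (taylorAlgHom r : V[X] →+* V[X]) hg
  rw [MvPolynomial.hom_eval₂, map_zero] at h0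
  convert h0 using 2
  · ext; simp
  · rfl

end Rescaling

namespace SpecialForm

variable {σ L : Type*} {n d : ℕ} [Field L] {V : ValuationSubring L} {c : SpecialForm σ n d}
  {F : MvPolynomial σ V} (hred : MvPolynomial.map (residue V) F = c.poly (ResidueField V))
  {g : σ → V[X]} (hg : MvPolynomial.eval₂ C g F = 0)

include hred hg

lemma eval_map_residue_eq_zero :
    MvPolynomial.eval (fun s => (g s).map (residue V)) (c.poly (ResidueField V)[X]) = 0 := by
  have := congrArg (mapRingHom (residue V)) hg
  rw [MvPolynomial.hom_eval₂, map_zero] at this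
  rw [← c.map_poly C, ← hred, MvPolynomial.map_map, MvPolynomial.eval_map, ← this]
  congr 1
  ext; simp

variable [CharP (ResidueField V) 2] (D : Fin n → Derivation ℤ (ResidueField V) (ResidueField V))

lemma dlogDet_residue_trailing_eq_dlogDet_residue_leading {t b : ℕ}
    (ht : ∀ s, ∀ i < t, residue V ((g s).coeff i) = 0)
    (hb : ∀ s, ∀ i > b, residue V ((g s).coeff i) = 0)
    (hgt : ∃ s, residue V ((g s).coeff t) ≠ 0) (hgb : ∃ s, residue V ((g s).coeff b) ≠ 0) :
    dlogDet D (fun j => residue V ((g (c.logVar j)).coeff t)) =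
      dlogDet D fun j => residue V ((g (c.logVar j)).coeff b) := by
  have h := c.dlogDet_trailing_eq_dlogDet_leading (g := fun s => (g s).map (residue V)) (t := t)
    (b := b) D (fun s i hi => by rw [coeff_map]; exact ht s i hi)
    (fun s i hi => by rw [coeff_map]; exact hb s i hi) (eval_map_residue_eq_zero hred hg)
    (by simpa only [coeff_map] using hgt) (by simpa only [coeff_map] using hgb)
  simpa only [coeff_map] using h

-- After rescaling the path so that the residues beyond its trailing index `t` die, the index `t`
-- becomes the leading one and the trailing one drops.
lemma dlogDet_reduction_eq_of_trailing [Finite σ] (hV : HasDivisibleValueGroup V)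
    (hF : F.IsHomogeneous d) {q : σ → ResidueField V}
    (hq : IsReduction V (fun s => ((g s).coeff 0 : L)) q) {t b : ℕ}
    (ht : ∀ s, ∀ i < t, residue V ((g s).coeff i) = 0)
    (hb : ∀ s, ∀ i > b, residue V ((g s).coeff i) = 0)
    (hgt : ∃ s, residue V ((g s).coeff t) ≠ 0) (hgb : ∃ s, residue V ((g s).coeff b) ≠ 0) :
    dlogDet D (fun j => q (c.logVar j)) =
      dlogDet D fun j => residue V ((g (c.logVar j)).coeff b) := by
  classical
  induction t using Nat.strong_induction_on generalizing g b with
  | _ t ih =>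
  rw [← dlogDet_residue_trailing_eq_dlogDet_residue_leading hred hg D ht hb hgt hgb]
  rcases t.eq_zero_or_pos with rfl | ht_pos
  · exact hq.dlogDet_eq D c.logVar (.of_residue hgt)
  obtain ⟨r, hr, h, hgh, h_gt, h_lt⟩ := exists_rescaling hV ht_pos ht
    (hq.exists_ne_zero.imp fun s hs h0 => hs (by rw [h0]; rfl))
  have coeff_t (s) : (h s).coeff t = (g s).coeff t :=
    Subtype.ext (mul_left_cancel₀ (pow_ne_zero t hr) (hgh s t))
  have hqh : IsReduction V (fun s => ((h s).coeff 0 : L)) q := by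
    convert hq.mul_left (inv_ne_zero (pow_ne_zero t hr)) using 2 with s
    rw [eq_inv_mul_iff_mul_eq₀ (pow_ne_zero t hr), hgh, pow_zero, one_mul]
  obtain ⟨hlt, h_find⟩ := Nat.find_spec h_lt
  have h_min (s) (i) (hi : i < Nat.find h_lt) : residue V ((h s).coeff i) = 0 :=
    of_not_not fun hne => Nat.find_min h_lt hi ⟨hi.trans hlt, s, hne⟩
  simpa only [coeff_t] using ih _ hlt (eval₂_rescaling_eq_zero hF hr hgh hg) hqh h_min h_gt h_find
    (by simpa only [coeff_t] using hgt)

lemma dlogDet_reduction_eq_dlogDet_residue_leading [Finite σ] (hV : HasDivisibleValueGroup V)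
    (hF : F.IsHomogeneous d) {q : σ → ResidueField V}
    (hq : IsReduction V (fun s => ((g s).coeff 0 : L)) q) {b : ℕ}
    (hb : ∀ s, ∀ i > b, residue V ((g s).coeff i) = 0)
    (hgb : ∃ s, residue V ((g s).coeff b) ≠ 0) :
    dlogDet D (fun j => q (c.logVar j)) =
      dlogDet D fun j => residue V ((g (c.logVar j)).coeff b) := by
  classical
  have hex : ∃ t, ∃ s, residue V ((g s).coeff t) ≠ 0 := ⟨b, hgb⟩
  exact dlogDet_reduction_eq_of_trailing hred hg D hV hF hq
    (fun s i hi => of_not_not fun hne => Nat.find_min hex hi ⟨s, hne⟩) hb (Nat.find_spec hex) hgb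

end SpecialForm

section Endpoints

variable {σ : Type*} [Finite σ]

lemma coeff_taylor_of_natDegree_le {A : Type*} [CommRing A] {f : A[X]} {b : ℕ}
    (hf : f.natDegree ≤ b) (r : A) : (taylor r f).coeff b = f.coeff b := by
  rcases hf.eq_or_lt with rfl | hlt
  · rw [coeff_taylor_natDegree, coeff_natDegree]
  · rw [coeff_eq_zero_of_natDegree_lt hlt,
      coeff_eq_zero_of_natDegree_lt (by rwa [natDegree_taylor])]

lemma exists_natDegree_le_and_coeff_ne_zero {A : Type*} [Semiring A] {f : σ → A[X]}
    (hf : ∃ s, f s ≠ 0) : ∃ b, (∀ s, (f s).natDegree ≤ b) ∧ ∃ s, (f s).coeff b ≠ 0 := by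
  obtain ⟨s₀, hs₀⟩ := hf
  have : Nonempty σ := ⟨s₀⟩
  obtain ⟨s, hs⟩ := Finite.exists_max fun s => (f s).degree
  refine ⟨(f s).natDegree, fun s' => natDegree_le_natDegree (hs s'), s, ?_⟩
  rw [coeff_natDegree, leadingCoeff_ne_zero, ← degree_ne_bot]
  exact ((bot_lt_iff_ne_bot.mpr (degree_ne_bot.mpr hs₀)).trans_le (hs s₀)).ne'

variable {L : Type*} [Field L] {V : ValuationSubring L}

lemma exists_primitive_tuple {f : σ → L[X]} (hf : ∃ s, f s ≠ 0) :
    ∃ a : L, a ≠ 0 ∧ ∃ g : σ → V[X], (∀ s, (g s).map (algebraMap V L) = C a * f s) ∧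
      ∃ s, (g s).map (residue V) ≠ 0 := by
  have := Fintype.ofFinite σ
  obtain ⟨s, hs⟩ := hf
  obtain ⟨a, ha, ha_mem, ⟨s₁, i₁⟩, -, h₁⟩ := exists_div_mem_and_valuation_div_eq_one (V := V)
    (T := Finset.univ.sigma fun s => (f s).support) (p := fun u => (f u.1).coeff u.2)
    ⟨⟨s, (f s).natDegree⟩, by simpa using hs, by simpa using hs⟩
  have div_mem (s i) : (f s).coeff i / a ∈ V := by
    by_cases h0 : (f s).coeff i = 0
    · simp [h0]
    · exact ha_mem ⟨s, i⟩ (by simpa using h0)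
  choose g hg using fun s => exists_polynomial_coeff_eq (div_mem s) (f := C a⁻¹ * f s) fun i => by
    rw [coeff_C_mul, div_eq_inv_mul]
  refine ⟨a⁻¹, inv_ne_zero ha, g, fun s => ?_, s₁, fun h0 => ?_⟩
  · ext i
    rw [coeff_map, coeff_C_mul, ← div_eq_inv_mul]
    exact hg s i
  · have hres := congrArg (fun f => f.coeff i₁) h0
    rw [coeff_map] at hres
    refine residue_ne_zero_iff_valuation_eq_one.mpr ?_ hres
    rw [hg, h₁]

variable {n d : ℕ} [CharP (ResidueField V) 2] {c : SpecialForm σ n d} {F : MvPolynomial σ V}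

-- The translate of a path by `1` has the same leading residues as the path itself.
theorem SpecialForm.dlogDet_reduction_eval_zero_eq_eval_one (hV : HasDivisibleValueGroup V)
    (hF : F.IsHomogeneous d)
    (hred : MvPolynomial.map (residue V) F = c.poly (ResidueField V))
    (D : Fin n → Derivation ℤ (ResidueField V) (ResidueField V))
    {f : σ → L[X]} (hf : MvPolynomial.eval₂ (C.comp (algebraMap V L)) f F = 0)
    {q₀ q₁ : σ → ResidueField V} (hq₀ : IsReduction V (fun s => (f s).eval 0) q₀)
    (hq₁ : IsReduction V (fun s => (f s).eval 1) q₁) :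
    dlogDet D (fun j => q₀ (c.logVar j)) = dlogDet D fun j => q₁ (c.logVar j) := by
  obtain ⟨a, ha, g, hg, hgres⟩ := exists_primitive_tuple (V := V) (f := f)
    (hq₀.exists_ne_zero.imp fun s hs h => hs (by rw [h, eval_zero]))
  have eval_g (s) (r : V) : (((g s).eval r : V) : L) = a * (f s).eval (r : L) := by
    rw [← eval_C (a := a) (x := (r : L)), ← eval_mul, ← hg]
    exact (eval_map_algebraMap (g s) (r : L)).trans (aeval_algebraMap_apply L r (g s)) |>.symm
  have hFg := eval₂_eq_zero_of_map_eq_C_mul hF hg hf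
  obtain ⟨b, hb, hgb⟩ := exists_natDegree_le_and_coeff_ne_zero hgres
  have map_taylor_g (s) : (taylor 1 (g s)).map (residue V) = taylor 1 ((g s).map (residue V)) := by
    rw [map_taylor, map_one]
  have leading_taylor (s) :
      residue V ((taylor 1 (g s)).coeff b) = residue V ((g s).coeff b) := by
    rw [← coeff_map, map_taylor_g, coeff_taylor_of_natDegree_le (hb s), coeff_map]
  have residue_eq_zero_of_gt {h : V[X]} (hh : (h.map (residue V)).natDegree ≤ b) (i) (hi : i > b) :
      residue V (h.coeff i) = 0 := by
    rw [← coeff_map, coeff_eq_zero_of_natDegree_lt (hh.trans_lt hi)]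
  simp only [coeff_map] at hgb
  rw [dlogDet_reduction_eq_dlogDet_residue_leading hred hFg D hV hF (q := q₀) ?_
      (fun s => residue_eq_zero_of_gt (hb s)) hgb,
    dlogDet_reduction_eq_dlogDet_residue_leading hred (eval₂_taylor_eq_zero hFg 1) D hV hF
      (q := q₁) ?_ (fun s => residue_eq_zero_of_gt ?_) (by simpa only [leading_taylor] using hgb)]
  · simp only [leading_taylor]
  · convert hq₁.mul_left ha using 2 with s
    rw [taylor_coeff_zero]; exact eval_g s 1
  · rw [map_taylor_g, natDegree_taylor]; exact hb s
  · convert hq₀.mul_left ha using 2 with s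
    rw [coeff_zero_eq_eval_zero]; exact eval_g s 0

end Endpoints

end StableIrrationality

namespace StableIrrationality

open IsLocalRing MvPolynomial

/-! ### Specialization -/

section Domination

lemma exists_valuationSubring_dominating {R K : Type*} [CommRing R] [Field K] {φ : R →+* K}
    {p : Ideal R} [p.IsPrime] (hφ : ∀ a ∉ p, φ a ≠ 0) :
    ∃ V : ValuationSubring K, (∀ a, V.valuation (φ a) ≤ 1) ∧
      (∀ a, V.valuation (φ a) < 1 ↔ a ∈ p) := by
  have hunit (s : p.primeCompl) : IsUnit (φ s) := (hφ s s.2).isUnit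
  let ψ : Localization.AtPrime p →+* K := IsLocalization.lift (M := p.primeCompl) hunit
  obtain ⟨V, hψ, hlocal⟩ := exists_factor_valuationRing ψ
  have mem (a) : φ a ∈ V := by
    rw [← IsLocalization.lift_eq (S := Localization.AtPrime p) hunit a]
    exact hψ _
  have isUnit_iff (a) : IsUnit (⟨φ a, mem a⟩ : V) ↔ a ∉ p := by
    have hcod : ψ.codRestrict V.toSubring hψ (algebraMap R _ a) = (⟨φ a, mem a⟩ : V) :=
      Subtype.ext (IsLocalization.lift_eq hunit a)
    rw [← hcod]
    refine (isUnit_map_iff (ψ.codRestrict V.toSubring hψ) _).trans ?_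
    exact IsLocalization.AtPrime.isUnit_to_map_iff (Localization.AtPrime p) p a
  refine ⟨V, fun a => V.valuation_le_one ⟨φ a, mem a⟩, fun a => ?_⟩
  rw [← not_iff_not, ← isUnit_iff]
  exact (V.valuation_lt_one_iff ⟨φ a, mem a⟩).symm.not.trans (by simp)

variable {p : ℕ} {K : Type*} [Field K] [CharP K p]

lemma charP_valuationSubring (O : ValuationSubring K) : CharP O p :=
  (algebraMap O K).charP (IsFractionRing.injective O K) p

variable [Fact p.Prime]

lemma charP_residueField (O : ValuationSubring K) : CharP (ResidueField O) p :=
  have := charP_valuationSubring (p := p) O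
  charP_of_injective_ringHom ((residue O).comp (ZMod.castHom dvd_rfl O)).injective p

lemma exists_valuationSubring_residue_eq {ι : Type*} {a : ι → K} (b : ι → ZMod p)
    (ha : Function.Injective (eval₂Hom (ZMod.castHom dvd_rfl K) a)) :
    ∃ O : ValuationSubring K, ∃ mem : ∀ i, a i ∈ O,
      ∀ i (φ : ZMod p →+* ResidueField O), residue O ⟨a i, mem i⟩ = φ (b i) := by
  have : (RingHom.ker (eval b)).IsPrime := RingHom.ker_isPrime _
  obtain ⟨O, hle, hlt⟩ := exists_valuationSubring_dominating (p := RingHom.ker (eval b))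
    (φ := eval₂Hom (ZMod.castHom dvd_rfl K) a)
    fun f hf h0 => hf (by rw [ha (h0.trans (map_zero _).symm)]; exact Ideal.zero_mem _)
  have mem (i) : a i ∈ O := by simpa [O.valuation_le_one_iff] using hle (X i)
  refine ⟨O, mem, fun i φ => ?_⟩
  have := charP_valuationSubring (p := p) O
  let ψ : ZMod p →+* O := ZMod.castHom dvd_rfl O
  have hψ : ((ψ (b i) : O) : K) = ZMod.castHom dvd_rfl K (b i) :=
    RingHom.congr_fun (Subsingleton.elim ((algebraMap O K).comp ψ) (ZMod.castHom dvd_rfl K)) _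
  rw [← Subsingleton.elim ((residue O).comp ψ) φ, RingHom.comp_apply, ← sub_eq_zero, ← map_sub,
    residue_eq_zero_iff_valuation_lt_one]
  have hlt_i := (hlt (X i - C (b i))).mpr (by simp [RingHom.mem_ker])
  rwa [map_sub, eval₂Hom_X', eval₂Hom_C, ← hψ] at hlt_i

end Domination

lemma exists_derivation_residueField {L : Type*} [Field L] {V : ValuationSubring L}
    {D : Derivation ℤ L L} (hD : ∀ a, V.valuation (D a) ≤ V.valuation a) :
    ∃ D' : Derivation ℤ (ResidueField V) (ResidueField V),
      ∀ a b : V, D a = b → D' (residue V a) = residue V b := by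
  have mem (a : V) : D a ∈ V :=
    (V.valuation_le_one_iff _).mp ((hD a).trans (V.valuation_le_one a))
  let DV : Derivation ℤ V V :=
    .mk' (AddMonoidHom.mk' (fun a : V => (⟨D a, mem a⟩ : V)) fun a b =>
      Subtype.ext (map_add D (a : L) b)).toIntLinearMap fun a b =>
      Subtype.ext (D.leibniz (a : L) b)
  have hDV (a : V) (ha : residue V a = 0) : residue V (DV a) = 0 := by
    rw [residue_eq_zero_iff_valuation_lt_one] at ha ⊢
    exact (hD a).trans_lt ha
  refine ⟨.liftOfSurjective (f := (residue V).toIntAlgHom) residue_surjective hDV,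
    fun a b hab => ?_⟩
  refine (Derivation.liftOfSurjective_apply (f := (residue V).toIntAlgHom)
    residue_surjective hDV a).trans ?_
  exact congrArg (residue V) (Subtype.ext hab)

section Forms

variable {σ : Type*}

lemma exists_eq_C_mul_map_primitive {K : Type*} [Field K] (O : ValuationSubring K)
    {P : MvPolynomial σ K} (hP : P ≠ 0) :
    ∃ c : K, c ≠ 0 ∧ ∃ P' : MvPolynomial σ O,
      P = C c * map (algebraMap O K) P' ∧ map (residue O) P' ≠ 0 := by
  obtain ⟨m₀, hm₀⟩ := support_nonempty.mpr hP
  obtain ⟨c, hc, hmem, m, -, hval⟩ := exists_div_mem_and_valuation_div_eq_one (V := O)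
    (T := P.support) (p := fun m => coeff m P) ⟨m₀, hm₀, mem_support_iff.mp hm₀⟩
  have hrange : C c⁻¹ * P ∈ Set.range (map (algebraMap O K)) := by
    rw [mem_range_map_iff_coeffs_subset]
    intro y hy
    obtain ⟨m, hm, rfl⟩ := mem_coeffs_iff.mp hy
    rw [coeff_C_mul, ← div_eq_inv_mul]
    refine ⟨⟨_, hmem m ?_⟩, rfl⟩
    rw [mem_support_iff, coeff_C_mul] at hm
    exact mem_support_iff.mpr (right_ne_zero_of_mul hm)
  obtain ⟨P', hP'⟩ := hrange
  refine ⟨c, hc, P', ?_, ne_zero_iff.mpr ⟨m, ?_⟩⟩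
  · rw [hP', ← mul_assoc, ← C_mul, mul_inv_cancel₀ hc, C_1, one_mul]
  · rw [coeff_map, residue_ne_zero_iff_valuation_eq_one, ← hval, div_eq_inv_mul, ← coeff_C_mul,
      ← hP', coeff_map]
    rfl

/-- The coefficients of `F` at the monomials of degree `d` are algebraically independent over the
prime field `ZMod p`. -/
def HasIndependentCoeffs (p : ℕ) {k : Type*} [CommRing k] [CharP k p] (d : ℕ)
    (F : MvPolynomial σ k) : Prop :=
  Function.Injective (eval₂Hom (ZMod.castHom dvd_rfl k)
    fun m : {m : σ →₀ ℕ // m.degree = d} => coeff m.1 F)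

lemma isHomogeneous_iff_degree_eq {R : Type*} [CommSemiring R] {F : MvPolynomial σ R} {d : ℕ} :
    F.IsHomogeneous d ↔ ∀ m, coeff m F ≠ 0 → m.degree = d := by
  simp only [IsHomogeneous, IsWeightedHomogeneous, Finsupp.degree_eq_weight_one]
  rfl

lemma HasIndependentCoeffs.coeff_ne_zero {p : ℕ} [Fact p.Prime] {k : Type*} [CommRing k]
    [CharP k p] {d : ℕ} {F : MvPolynomial σ k} (h : HasIndependentCoeffs p d F) {m : σ →₀ ℕ}
    (hm : m.degree = d) : coeff m F ≠ 0 := by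
  have := (map_ne_zero_iff _ h).mpr (X_ne_zero (R := ZMod p) ⟨m, hm⟩)
  rwa [coe_eval₂Hom, eval₂_X] at this

-- A form with algebraically independent coefficients degenerates to every form over `ZMod p`.
theorem HasIndependentCoeffs.exists_specialization {p : ℕ} [Fact p.Prime] {k K : Type*} [Field k]
    [CharP k p] [Field K] (ι : k →+* K) {d : ℕ} {F : MvPolynomial σ k} (hF : F.IsHomogeneous d)
    (hind : HasIndependentCoeffs p d F) {G : MvPolynomial σ (ZMod p)} (hG : G.IsHomogeneous d) :
    ∃ (O : ValuationSubring K) (_ : CharP (ResidueField O) p) (H : MvPolynomial σ O),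
      H.IsHomogeneous d ∧ map (algebraMap O K) H = map ι F ∧
      map (residue O) H = map (ZMod.castHom dvd_rfl (ResidueField O)) G := by
  have : CharP K p := charP_of_injective_ringHom ι.injective p
  have hindK : Function.Injective (eval₂Hom (ZMod.castHom dvd_rfl K)
      fun m : {m : σ →₀ ℕ // m.degree = d} => ι (coeff m.1 F)) := by
    convert ι.injective.comp hind
    rw [← RingHom.coe_comp]
    congr 1
    exact ringHom_ext' (Subsingleton.elim _ _) fun i => by simp
  obtain ⟨O, hmem, hres⟩ := exists_valuationSubring_residue_eq (fun m => coeff m.1 G) hindK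
  have hchar : CharP (ResidueField O) p := charP_residueField O
  have hrange : map ι F ∈ Set.range (map (algebraMap O K)) := by
    rw [mem_range_map_iff_coeffs_subset]
    intro y hy
    obtain ⟨m, hm, rfl⟩ := mem_coeffs_iff.mp hy
    rw [coeff_map]
    exact ⟨⟨_, hmem ⟨m, isHomogeneous_iff_degree_eq.mp (hF.map ι) m (mem_support_iff.mp hm)⟩⟩, rfl⟩
  obtain ⟨H, hHF⟩ := hrange
  have coeff_H (m) : ((coeff m H : O) : K) = ι (coeff m F) := by
    rw [← coeff_map, ← hHF, coeff_map]
    rfl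
  have hH : H.IsHomogeneous d :=
    .of_map (IsFractionRing.injective O K) (hHF ▸ hF.map ι)
  refine ⟨O, hchar, H, hH, hHF, ?_⟩
  ext m
  simp only [coeff_map]
  by_cases hm : m.degree = d
  · rw [← hres ⟨m, hm⟩]
    exact congrArg (residue O) (Subtype.ext (coeff_H m))
  · rw [not_imp_comm.mp (isHomogeneous_iff_degree_eq.mp hH m) hm,
      not_imp_comm.mp (isHomogeneous_iff_degree_eq.mp hG m) hm, map_zero, map_zero]

end Forms

end StableIrrationality

namespace StableIrrationality

open IsLocalRing MvPolynomial

/-! ### The Gauss valuation on the function field of a hypersurface -/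

/-- As a polynomial in its first variable `y`, `f` has leading term `u * y ^ d` with a nonzero
constant `u`. -/
def HasLeadingTerm {R : Type*} [CommRing R] {m : ℕ} (d : ℕ) (f : MvPolynomial (Fin (m + 1)) R) :
    Prop :=
  ∃ u g, u ≠ 0 ∧ f = C u * X 0 ^ d + g ∧ degreeOf 0 g < d

namespace HasLeadingTerm

section Domain

variable {R : Type*} [CommRing R] [IsDomain R] {m d : ℕ} {f : MvPolynomial (Fin (m + 1)) R}

lemma degreeOf_eq (h : HasLeadingTerm d f) : degreeOf 0 f = d := by
  obtain ⟨u, g, hu, rfl, hg⟩ := h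
  have hlead : degreeOf 0 (C u * X 0 ^ d : MvPolynomial (Fin (m + 1)) R) = d := by
    rw [degreeOf_C_mul _ _ (mem_nonZeroDivisors_of_ne_zero hu), degreeOf_X_self_pow]
  rw [degreeOf_add_eq_of_degreeOf_lt (hlead.symm ▸ hg), hlead]

lemma ne_zero (h : HasLeadingTerm d f) : f ≠ 0 := by
  rintro rfl
  have hd := h.degreeOf_eq
  obtain ⟨_, _, -, -, hg⟩ := h
  rw [degreeOf_zero] at hd
  omega

lemma not_dvd (h : HasLeadingTerm d f) {r : MvPolynomial (Fin (m + 1)) R} (hr : degreeOf 0 r < d)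
    (hr₀ : r ≠ 0) : ¬ f ∣ r := by
  rintro ⟨q, rfl⟩
  rw [degreeOf_mul_eq h.ne_zero (right_ne_zero_of_mul hr₀), h.degreeOf_eq] at hr
  omega

end Domain

section Field

variable {R : Type*} [Field R] {m d : ℕ} {f : MvPolynomial (Fin (m + 1)) R}

lemma exists_monic_finSuccEquiv (h : HasLeadingTerm d f) :
    ∃ u, (finSuccEquiv R m (C u * f)).Monic ∧ (finSuccEquiv R m (C u * f)).natDegree = d := by
  have hdeg := h.degreeOf_eq
  obtain ⟨u, g, hu, hf, hg⟩ := h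
  refine ⟨u⁻¹, ?_, ?_⟩
  · have hexpand : finSuccEquiv R m (C u⁻¹ * f) =
        Polynomial.X ^ d + finSuccEquiv R m (C u⁻¹ * g) := by
      rw [hf, mul_add, ← mul_assoc, ← C_mul, inv_mul_cancel₀ hu, C_1, one_mul, map_add, map_pow,
        finSuccEquiv_X_zero]
    rw [hexpand]
    refine Polynomial.monic_X_pow_add (Polynomial.degree_le_natDegree.trans_lt ?_)
    rw [natDegree_finSuccEquiv, Nat.cast_lt]
    exact (degreeOf_C_mul_le _ _ _).trans_lt hg
  · rw [natDegree_finSuccEquiv,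
      degreeOf_C_mul _ _ (mem_nonZeroDivisors_of_ne_zero (inv_ne_zero hu)), hdeg]

lemma exists_dvd_sub (h : HasLeadingTerm d f) (P : MvPolynomial (Fin (m + 1)) R) :
    ∃ r, degreeOf 0 r < d ∧ f ∣ P - r := by
  obtain ⟨u, hmonic, hdeg⟩ := h.exists_monic_finSuccEquiv
  obtain ⟨_, _, -, -, hd⟩ := h
  let e := finSuccEquiv R m
  let r := e.symm (e P %ₘ e (C u * f))
  refine ⟨r, ?_, (Dvd.intro_left _ rfl : f ∣ C u * f).trans ⟨e.symm (e P /ₘ e (C u * f)), ?_⟩⟩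
  · rw [← natDegree_finSuccEquiv, show finSuccEquiv R m r = e P %ₘ e (C u * f) from
      e.apply_symm_apply _]
    refine (Polynomial.natDegree_modByMonic_lt _ hmonic fun h1 => ?_).trans_eq hdeg
    rw [h1, Polynomial.natDegree_one] at hdeg
    omega
  · apply e.injective
    rw [map_sub, map_mul e (C u * f), e.apply_symm_apply, e.apply_symm_apply, sub_eq_iff_eq_add',
      Polynomial.modByMonic_add_div]

end Field

end HasLeadingTerm

section Reduction

variable {K : Type*} [Field K] {O : ValuationSubring K}

lemma map_residue_dvd_of_map_dvd {σ : Type*} {f P : MvPolynomial σ O}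
    (hf : map (residue O) f ≠ 0) (hdvd : map (algebraMap O K) f ∣ map (algebraMap O K) P) :
    map (residue O) f ∣ map (residue O) P := by
  obtain ⟨Q, hQ⟩ := hdvd
  have map_inj : Function.Injective (map (σ := σ) (algebraMap O K)) :=
    map_injective _ (IsFractionRing.injective O K)
  rcases eq_or_ne Q 0 with rfl | hQ₀
  · rw [map_inj (hQ.trans ((mul_zero _).trans (map_zero _).symm)), map_zero]
    exact dvd_zero _
  obtain ⟨c, -, Q', rfl, hQ'⟩ := exists_eq_C_mul_map_primitive O hQ₀
  have hP : map (algebraMap O K) P = C c * map (algebraMap O K) (f * Q') := by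
    rw [hQ, map_mul]; ring
  obtain ⟨i, hi⟩ := ne_zero_iff.mp (mul_ne_zero hf hQ')
  rw [← map_mul, coeff_map, residue_ne_zero_iff_valuation_eq_one] at hi
  have hc : c ∈ O := by
    have hcoeff : ((coeff i P : O) : K) = c * (coeff i (f * Q') : O) := by
      have := congrArg (coeff i) hP
      rwa [coeff_map, coeff_C_mul, coeff_map] at this
    have hval : O.valuation c = O.valuation ((coeff i P : O) : K) := by
      rw [hcoeff, map_mul, hi, mul_one]
    rw [← O.valuation_le_one_iff, hval]
    exact O.valuation_le_one _
  have hPO : P = C ⟨c, hc⟩ * (f * Q') := by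
    apply map_inj
    rw [hP, map_mul (map _) (C _), map_C]
    rfl
  rw [hPO, map_mul, map_mul]
  exact (dvd_mul_right _ _).mul_left _

variable {m d : ℕ} {f : MvPolynomial (Fin (m + 1)) O}
  (hres : HasLeadingTerm d (map (residue O) f)) (hK : HasLeadingTerm d (map (algebraMap O K) f))

include hres hK

lemma exists_dvd_sub_C_mul_map {b : MvPolynomial (Fin (m + 1)) K}
    (hb : ¬ map (algebraMap O K) f ∣ b) :
    ∃ c : K, c ≠ 0 ∧ ∃ P : MvPolynomial (Fin (m + 1)) O,
      map (algebraMap O K) f ∣ b - C c * map (algebraMap O K) P ∧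
      ¬ map (residue O) f ∣ map (residue O) P := by
  obtain ⟨r, hr, hbr⟩ := hK.exists_dvd_sub b
  have hr₀ : r ≠ 0 := by
    rintro rfl
    exact hb (by rwa [sub_zero] at hbr)
  obtain ⟨c, hc, P, rfl, hP⟩ := exists_eq_C_mul_map_primitive O hr₀
  refine ⟨c, hc, P, hbr, hres.not_dvd (lt_of_le_of_lt ?_ hr) hP⟩
  rw [degreeOf_C_mul _ _ (mem_nonZeroDivisors_of_ne_zero hc), degreeOf_le_iff]
  intro i hi
  have hi' : i ∈ (map (algebraMap O K) P).support := by
    rw [support_map_of_injective _ (IsFractionRing.injective O K)]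
    exact support_map_subset _ _ hi
  exact degreeOf_le_iff.mp le_rfl i hi'

lemma prime_map_of_irreducible_map_residue (hirr : Irreducible (map (residue O) f)) :
    Prime (map (algebraMap O K) f) := by
  refine ⟨hK.ne_zero, fun hunit => hirr.not_isUnit ?_, fun a b hab => ?_⟩
  · have := map_residue_dvd_of_map_dvd (P := 1) hirr.ne_zero (by rw [map_one]; exact hunit.dvd)
    exact isUnit_of_dvd_one (by rwa [map_one] at this)
  by_contra! hcon
  obtain ⟨c, hc, P, hP, hP'⟩ := exists_dvd_sub_C_mul_map hres hK hcon.1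
  obtain ⟨e, he, Q, hQ, hQ'⟩ := exists_dvd_sub_C_mul_map hres hK hcon.2
  suffices h : map (algebraMap O K) f ∣ C (c * e) * map (algebraMap O K) (P * Q) by
    have hunit : IsUnit (C (c * e) : MvPolynomial (Fin (m + 1)) K) :=
      (mul_ne_zero hc he).isUnit.map C
    have := map_residue_dvd_of_map_dvd hirr.ne_zero (hunit.dvd_mul_left.mp h)
    rw [map_mul] at this
    exact (hirr.prime.dvd_or_dvd this).elim hP' hQ'
  have hsub : C (c * e) * map (algebraMap O K) (P * Q) = a * b
      - (a - C c * map (algebraMap O K) P) * b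
      - C c * map (algebraMap O K) P * (b - C e * map (algebraMap O K) Q) := by
    rw [C_mul, map_mul]; ring
  rw [hsub]
  exact (hab.sub (hP.mul_right b)).sub (hQ.mul_left _)

end Reduction

section GaussValuation

universe u

variable {K : Type u} [Field K] {O : ValuationSubring K} {m d : ℕ}

/-- `δ` is a vector field on affine space that is defined over `O` and tangent to all the
hypersurfaces `f = const`. -/
structure IsIntegralTangent (f : MvPolynomial (Fin (m + 1)) O)
    (δ : Derivation K (MvPolynomial (Fin (m + 1)) K) (MvPolynomial (Fin (m + 1)) K)) : Prop where
  exists_map_eq : ∀ P : MvPolynomial (Fin (m + 1)) O, ∃ P' : MvPolynomial (Fin (m + 1)) O,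
    δ (map (algebraMap O K) P) = map (algebraMap O K) P'
  apply_eq_zero : δ (map (algebraMap O K) f) = 0

/-- Through `β`, the field `L` is the function field of the hypersurface `f = 0` over `K`, and `V`
is a valuation ring of `L` over `O` centred at the generic point of the special fibre of `f = 0`. -/
structure IsGaussValuation {L : Type*} [Field L] (f : MvPolynomial (Fin (m + 1)) O)
    (β : MvPolynomial (Fin (m + 1)) K →+* L) (V : ValuationSubring L) : Prop where
  map_eq_zero_iff : ∀ P, β P = 0 ↔ map (algebraMap O K) f ∣ P
  valuation_le_one : ∀ P, V.valuation (β (map (algebraMap O K) P)) ≤ 1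
  valuation_lt_one_iff : ∀ P, V.valuation (β (map (algebraMap O K) P)) < 1 ↔
    map (residue O) f ∣ map (residue O) P
  exists_eq_mul_div : ∀ z : L, z ≠ 0 → ∃ c : K, ∃ P Q : MvPolynomial (Fin (m + 1)) O,
    ¬ map (residue O) f ∣ map (residue O) P ∧ ¬ map (residue O) f ∣ map (residue O) Q ∧
    z = β (C c) * (β (map (algebraMap O K) P) / β (map (algebraMap O K) Q))
  exists_derivation : ∀ δ : Derivation K (MvPolynomial (Fin (m + 1)) K) _,
    δ (map (algebraMap O K) f) = 0 → ∃ D : Derivation ℤ L L, ∀ P, D (β P) = β (δ P)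

lemma exists_derivation_quotient {A : Type*} [CommRing A] {f : A} {δ : Derivation ℤ A A}
    (hδ : δ f = 0) : ∃ D : Derivation ℤ (A ⧸ Ideal.span {f}) (A ⧸ Ideal.span {f}),
      ∀ P, D (Ideal.Quotient.mk _ P) = Ideal.Quotient.mk _ (δ P) := by
  have hlift (P) (hP : Ideal.Quotient.mk (Ideal.span {f}) P = 0) :
      Ideal.Quotient.mk (Ideal.span {f}) (δ P) = 0 := by
    rw [Ideal.Quotient.eq_zero_iff_dvd] at hP ⊢
    obtain ⟨Q, rfl⟩ := hP
    rw [δ.leibniz, hδ, smul_zero, add_zero]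
    exact dvd_mul_right _ _
  let π := (Ideal.Quotient.mk (Ideal.span {f})).toIntAlgHom
  exact ⟨Derivation.liftOfSurjective (f := π) Ideal.Quotient.mk_surjective hlift,
    Derivation.liftOfSurjective_apply (f := π) Ideal.Quotient.mk_surjective hlift⟩

lemma exists_derivation_fractionRing_quotient {A L : Type*} [CommRing A] [Field L] {f : A}
    [Algebra (A ⧸ Ideal.span {f}) L] [IsFractionRing (A ⧸ Ideal.span {f}) L]
    {δ : Derivation ℤ A A} (hδ : δ f = 0) :
    ∃ D : Derivation ℤ L L, ∀ P,
      D (algebraMap (A ⧸ Ideal.span {f}) L (Ideal.Quotient.mk _ P)) =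
        algebraMap (A ⧸ Ideal.span {f}) L (Ideal.Quotient.mk _ (δ P)) := by
  obtain ⟨D₀, hD₀⟩ := exists_derivation_quotient hδ
  obtain ⟨D, hD⟩ := exists_derivation_fractionRing (L := L) D₀
  exact ⟨D, fun P => (hD _).trans (congrArg _ (hD₀ P))⟩

theorem exists_isGaussValuation {f : MvPolynomial (Fin (m + 1)) O}
    (hres : HasLeadingTerm d (map (residue O) f))
    (hK : HasLeadingTerm d (map (algebraMap O K) f)) (hirr : Irreducible (map (residue O) f)) :
    ∃ (L : Type u) (_ : Field L) (β : MvPolynomial (Fin (m + 1)) K →+* L)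
      (V : ValuationSubring L), IsGaussValuation f β V := by
  set I := Ideal.span {map (algebraMap O K) f}
  have : I.IsPrime := (Ideal.span_singleton_prime hK.ne_zero).mpr
    (prime_map_of_irreducible_map_residue hres hK hirr)
  have : (Ideal.span {map (residue O) f}).IsPrime :=
    (Ideal.span_singleton_prime hirr.ne_zero).mpr hirr.prime
  let B := MvPolynomial (Fin (m + 1)) K ⧸ I
  let L := FractionRing B
  let β : MvPolynomial (Fin (m + 1)) K →+* L := (algebraMap B L).comp (Ideal.Quotient.mk I)
  have β_eq_zero_iff (P) : β P = 0 ↔ map (algebraMap O K) f ∣ P :=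
    (map_eq_zero_iff _ (IsFractionRing.injective B L)).trans (Ideal.Quotient.eq_zero_iff_dvd _ _)
  obtain ⟨V, hle, hlt⟩ := exists_valuationSubring_dominating
    (φ := β.comp (map (algebraMap O K)))
    (p := (Ideal.span {map (residue O) f}).comap (map (residue O))) fun P hP h0 =>
      hP (Ideal.mem_span_singleton.mpr
        (map_residue_dvd_of_map_dvd hirr.ne_zero ((β_eq_zero_iff _).mp h0)))
  have exists_rep (b) (hb : β b ≠ 0) : ∃ c : K, ∃ P : MvPolynomial (Fin (m + 1)) O,
      β b = β (C c) * β (map (algebraMap O K) P) ∧ ¬ map (residue O) f ∣ map (residue O) P := by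
    obtain ⟨c, -, P, hP, hP'⟩ := exists_dvd_sub_C_mul_map hres hK ((β_eq_zero_iff b).not.mp hb)
    refine ⟨c, P, ?_, hP'⟩
    rwa [← map_mul, ← sub_eq_zero, ← map_sub, β_eq_zero_iff]
  refine ⟨L, inferInstance, β, V, β_eq_zero_iff, hle,
    fun P => (hlt P).trans Ideal.mem_span_singleton, fun z hz => ?_, fun δ hδ =>
      exists_derivation_fractionRing_quotient (δ := δ.restrictScalars ℤ) hδ⟩
  obtain ⟨a, b, hb, rfl⟩ := IsFractionRing.div_surjective (A := B) z
  obtain ⟨a, rfl⟩ := Ideal.Quotient.mk_surjective a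
  obtain ⟨b, rfl⟩ := Ideal.Quotient.mk_surjective b
  obtain ⟨hβa, hβb⟩ : β a ≠ 0 ∧ β b ≠ 0 := div_ne_zero_iff.mp hz
  obtain ⟨c, P, ha, hP⟩ := exists_rep a hβa
  obtain ⟨e, Q, hb, hQ⟩ := exists_rep b hβb
  refine ⟨c / e, P, Q, hP, hQ, ?_⟩
  change β a / β b = (β.comp C) (c / e) * _
  rw [ha, hb, map_div₀, ← mul_div_mul_comm]
  rfl

namespace IsGaussValuation

variable {L : Type*} [Field L] {f : MvPolynomial (Fin (m + 1)) O}
  {β : MvPolynomial (Fin (m + 1)) K →+* L} {V : ValuationSubring L} (h : IsGaussValuation f β V)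

include h

lemma valuation_eq_one {P : MvPolynomial (Fin (m + 1)) O}
    (hP : ¬ map (residue O) f ∣ map (residue O) P) :
    V.valuation (β (map (algebraMap O K) P)) = 1 :=
  (h.valuation_le_one P).antisymm (not_lt.mp ((h.valuation_lt_one_iff P).not.mpr hP))

lemma hasDivisibleValueGroup [IsAlgClosed K] : HasDivisibleValueGroup V := by
  intro z hz n hn
  obtain ⟨c, P, Q, hP, hQ, rfl⟩ := h.exists_eq_mul_div z hz
  obtain ⟨b, rfl⟩ := IsAlgClosed.exists_pow_nat_eq c hn
  refine ⟨β (C b), ?_⟩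
  rw [map_mul, map_div₀, h.valuation_eq_one hP, h.valuation_eq_one hQ, div_one, mul_one, map_pow,
    map_pow, map_pow]

lemma exists_bounded_derivation
    {δ : Derivation K (MvPolynomial (Fin (m + 1)) K) (MvPolynomial (Fin (m + 1)) K)}
    (hδ : IsIntegralTangent f δ) :
    ∃ D : Derivation ℤ L L,
      (∀ P, D (β P) = β (δ P)) ∧ ∀ z, V.valuation (D z) ≤ V.valuation z := by
  obtain ⟨D, hD⟩ := h.exists_derivation δ hδ.apply_eq_zero
  refine ⟨D, hD, fun z => ?_⟩
  rcases eq_or_ne z 0 with rfl | hz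
  · rw [map_zero]
  obtain ⟨c, P, Q, hP, hQ, rfl⟩ := h.exists_eq_mul_div z hz
  obtain ⟨P', hP'⟩ := hδ.exists_map_eq P
  obtain ⟨Q', hQ'⟩ := hδ.exists_map_eq Q
  have D_const : D (β (C c)) = 0 := by
    rw [hD, ← algebraMap_eq, δ.map_algebraMap, map_zero]
  have D_quot : D (β (map (algebraMap O K) P) / β (map (algebraMap O K) Q)) =
      β (map (algebraMap O K) (Q * P' - P * Q')) / β (map (algebraMap O K) Q) ^ 2 := by
    rw [Derivation.leibniz_div, hD, hD, hP', hQ', div_eq_inv_mul, inv_pow]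
    simp only [map_sub, map_mul, smul_eq_mul]
  rw [Derivation.leibniz, D_const, smul_zero, add_zero, smul_eq_mul, map_mul, map_mul, D_quot,
    map_div₀, map_div₀, map_pow, h.valuation_eq_one hP, h.valuation_eq_one hQ, one_pow, div_one,
    div_one]
  exact mul_le_mul_right (h.valuation_le_one _) _

end IsGaussValuation

end GaussValuation

end StableIrrationality

namespace StableIrrationality

open MvPolynomial

/-! ### Dehomogenization -/

section Dehomogenize

variable {R S : Type*} [CommRing R] [CommRing S] {ν : ℕ}

/-- Homogeneous coordinates of the point `x` of the chart `x₀ = 1`. -/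
def homogeneousCoords (x : Fin ν → S) : Fin (ν + 1) → S := Fin.cases 1 x

@[simp]
lemma homogeneousCoords_zero (x : Fin ν → S) : homogeneousCoords x 0 = 1 := rfl

@[simp]
lemma homogeneousCoords_succ (x : Fin ν → S) (i : Fin ν) : homogeneousCoords x i.succ = x i := rfl

lemma map_homogeneousCoords (φ : R →+* S) (x : Fin ν → R) (s : Fin (ν + 1)) :
    φ (homogeneousCoords x s) = homogeneousCoords (fun i => φ (x i)) s := by
  cases s using Fin.cases with
  | zero => exact map_one φ
  | succ i => rfl

/-- The equation of the hypersurface `F = 0` in the chart `x₀ = 1`; over a field it is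
`Paper.chartEquation`. -/
def dehomogenize (F : MvPolynomial (Fin (ν + 1)) R) : MvPolynomial (Fin ν) R :=
  aeval (homogeneousCoords X) F

lemma map_dehomogenize (φ : R →+* S) (F : MvPolynomial (Fin (ν + 1)) R) :
    map φ (dehomogenize F) = dehomogenize (map φ F) := by
  simp only [dehomogenize, aeval_def, algebraMap_eq, eval₂_map]
  rw [hom_eval₂, map_comp_C]
  congr 1
  funext s
  simp only [map_homogeneousCoords, map_X]

lemma eval₂_dehomogenize (φ : R →+* S) (x : Fin ν → S) (F : MvPolynomial (Fin (ν + 1)) R) :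
    eval₂ φ x (dehomogenize F) = eval₂ φ (homogeneousCoords x) F := by
  have h := hom_eval₂ F C (eval₂Hom φ x) (homogeneousCoords X)
  have hcomp : (eval₂Hom φ x).comp C = φ := RingHom.ext fun a => eval₂_C φ x a
  simp only [map_homogeneousCoords, hcomp, coe_eval₂Hom, eval₂_X] at h
  exact h

lemma dehomogenize_monomial (v : Fin (ν + 1) →₀ ℕ) (a : R) :
    dehomogenize (monomial v a) = monomial (Finsupp.tail v) a := by
  rw [dehomogenize, aeval_monomial, algebraMap_eq, monomial_eq,
    Finsupp.prod_fintype _ _ fun _ => pow_zero _, Finsupp.prod_fintype _ _ fun _ => pow_zero _,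
    Fin.prod_univ_succ]
  simp [Finsupp.tail_apply]

lemma pderiv_dehomogenize (i : Fin ν) (F : MvPolynomial (Fin (ν + 1)) R) :
    pderiv i (dehomogenize F) = dehomogenize (pderiv i.succ F) := by
  unfold dehomogenize
  induction F using MvPolynomial.induction_on with
  | C a => simp
  | add p q hp hq => simp only [map_add, hp, hq]
  | mul_X p j hp =>
    have hX : pderiv i (homogeneousCoords (X : Fin ν → MvPolynomial (Fin ν) R) j) =
        aeval (homogeneousCoords X) (pderiv i.succ (X j : MvPolynomial (Fin (ν + 1)) R)) := by
      cases j using Fin.cases with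
      | zero => simp [pderiv_X_of_ne (Fin.succ_ne_zero i).symm]
      | succ j =>
        rcases eq_or_ne j i with rfl | h
        · simp
        · simp [pderiv_X_of_ne h, pderiv_X_of_ne ((Fin.succ_injective _).ne h)]
    simp only [Derivation.leibniz, map_mul, map_add, smul_eq_mul, aeval_X, hp, hX]

lemma eq_single_of_degree_eq {σ : Type*} {w : σ →₀ ℕ} {s : σ} {d : ℕ} (hw : w.degree = d)
    (hs : w s = d) : w = Finsupp.single s d := by
  have hle : Finsupp.single s d ≤ w := Finsupp.single_le_iff.mpr hs.ge
  have hdegree := congrArg Finsupp.degree (add_tsub_cancel_of_le hle)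
  rw [map_add, Finsupp.degree_single, hw, Nat.add_eq_left, Finsupp.degree_eq_zero_iff] at hdegree
  rw [← add_tsub_cancel_of_le hle, hdegree, add_zero]

lemma hasLeadingTerm_dehomogenize {m d : ℕ} (hd : 0 < d) {F : MvPolynomial (Fin (m + 2)) R}
    (hF : F.IsHomogeneous d) (hcoeff : coeff (Finsupp.single 1 d) F ≠ 0) :
    HasLeadingTerm d (dehomogenize F) := by
  classical
  have htail : Finsupp.tail (Finsupp.single (1 : Fin (m + 2)) d) = Finsupp.single 0 d := by
    ext i
    exact Finsupp.single_apply_left (Fin.succ_injective _) 0 i d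
  refine ⟨_, ∑ w ∈ F.support.erase (Finsupp.single 1 d), dehomogenize (monomial w (coeff w F)),
    hcoeff, ?_, ?_⟩
  · have hlead (u : R) : dehomogenize (monomial (Finsupp.single (1 : Fin (m + 2)) d) u) =
        C u * X 0 ^ d := by
      rw [dehomogenize_monomial, htail, C_mul_X_pow_eq_monomial]
    rw [← hlead, Finset.add_sum_erase _ (fun w => dehomogenize (monomial w (coeff w F)))
      (mem_support_iff.mpr hcoeff)]
    conv_lhs => rw [F.as_sum, dehomogenize, map_sum]
    rfl
  · refine (degreeOf_sum_le _ _ _).trans_lt ((Finset.sup_lt_iff hd).mpr fun w hw => ?_)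
    rw [Finset.mem_erase, mem_support_iff] at hw
    have hdegree := isHomogeneous_iff_degree_eq.mp hF w hw.2
    rw [dehomogenize_monomial, degreeOf_monomial_eq _ _ hw.2]
    exact lt_of_le_of_ne (hdegree ▸ Finsupp.le_degree 1 w) fun h =>
      hw.1 (eq_single_of_degree_eq hdegree h)

end Dehomogenize

/-! ### Rational paths to the generic point -/

/-- `f` is a polynomial path on the hypersurface `F = 0` that joins, over the extension
`ι : k → L`, a `k`-rational point to the point with homogeneous coordinates `ξ`. -/
structure IsRationalPath {σ k L : Type*} [Field k] [Field L] (ι : k →+* L) (F : MvPolynomial σ k)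
    (ξ : σ → L) (f : σ → Polynomial L) : Prop where
  eval₂_eq_zero : eval₂ (Polynomial.C.comp ι) f F = 0
  exists_eval_zero : ∃ p : σ → k, (∃ s, p s ≠ 0) ∧ ∀ s, (f s).eval 0 = ι (p s)
  exists_eval_one : ∃ a : L, a ≠ 0 ∧ ∀ s, (f s).eval 1 = a * ξ s

lemma IsRationalPath.map {σ k K L : Type*} [Field k] [Field K] [Field L] {i : k →+* K}
    {ι : K →+* L} {F : MvPolynomial σ k} {ξ : σ → L} {f : σ → Polynomial L}
    (h : IsRationalPath (ι.comp i) F ξ f) : IsRationalPath ι (MvPolynomial.map i F) ξ f := by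
  obtain ⟨hf, ⟨p, ⟨s, hs⟩, hp⟩, hone⟩ := h
  refine ⟨?_, ⟨fun s => i (p s), ⟨s, (map_ne_zero i).mpr hs⟩, hp⟩, hone⟩
  rwa [eval₂_map]

/-- The line, parametrized by `T`, from the image of `c` at `T = 0` to the point `η` at `T = 1`. -/
def lineHom {k L τ : Type*} [Field k] [Field L] (ι : k →+* L) (c : τ → k) (η : τ → L) :
    MvPolynomial τ k →+* Polynomial L :=
  eval₂Hom (Polynomial.C.comp ι) fun j =>
    Polynomial.C (ι (c j)) + Polynomial.X * Polynomial.C (η j - ι (c j))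

section LineHom

variable {k L τ : Type*} [Field k] [Field L] (ι : k →+* L) (c : τ → k) (η : τ → L)

lemma eval_zero_lineHom (P : MvPolynomial τ k) :
    (lineHom ι c η P).eval 0 = ι (eval c P) := by
  have h : (Polynomial.evalRingHom 0).comp (lineHom ι c η) = ι.comp (eval c) := by
    apply ringHom_ext <;> intros <;> simp [lineHom]
  exact RingHom.congr_fun h P

lemma eval_one_lineHom (P : MvPolynomial τ k) :
    (lineHom ι c η P).eval 1 = eval₂ ι η P := by
  have h : (Polynomial.evalRingHom 1).comp (lineHom ι c η) = eval₂Hom ι η := by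
    apply ringHom_ext <;> intros <;> simp [lineHom]
  exact RingHom.congr_fun h P

end LineHom

lemma exists_eval_ne_zero {k τ : Type*} [Field k] [Infinite k] {b : MvPolynomial τ k}
    (hb : b ≠ 0) : ∃ c : τ → k, eval c b ≠ 0 := by
  contrapose! hb
  exact MvPolynomial.funext fun c => by rw [hb c, map_zero]

lemma exists_isRationalPath_of_eval₂_eq_zero {k L σ τ : Type*} [Field k] [Infinite k] [Field L]
    [Finite σ] {F : MvPolynomial σ k} {d : ℕ} (hF : F.IsHomogeneous d)
    {w : σ → FractionRing (MvPolynomial τ k)} (hw₀ : ∃ s, w s ≠ 0)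
    (hw : eval₂ ((algebraMap (MvPolynomial τ k) _).comp C) w F = 0)
    (θ : FractionRing (MvPolynomial τ k) →+* L) :
    ∃ f, IsRationalPath (θ.comp ((algebraMap (MvPolynomial τ k) _).comp C)) F
      (fun s => θ (w s)) f := by
  let A := MvPolynomial τ k
  let alg := algebraMap A (FractionRing A)
  have alg_inj : Function.Injective alg := IsFractionRing.injective _ _
  obtain ⟨b, hb⟩ := IsLocalization.exist_integer_multiples_of_finite (nonZeroDivisors A) w
  have hb₀ : alg b ≠ 0 := (map_ne_zero_iff _ alg_inj).mpr (nonZeroDivisors.ne_zero b.2)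
  choose G hG using hb
  replace hG (s) : alg (G s) = alg b * w s := (hG s).trans (Algebra.smul_def _ _)
  have hFG : eval₂ C G F = 0 := by
    apply alg_inj
    rw [map_zero, hom_eval₂, ← mul_zero (alg b ^ d), ← hw,
      ← eval₂_mul_left_of_isHomogeneous _ hF]
    exact congrArg (fun v => eval₂ _ v F) (funext hG)
  obtain ⟨s, hs⟩ := hw₀
  have hGs : G s ≠ 0 := fun h => mul_ne_zero hb₀ hs (by rw [← hG, h, map_zero])
  obtain ⟨c, hc⟩ := exists_eval_ne_zero hGs
  let Λ := lineHom (θ.comp (alg.comp C)) c fun j => θ (alg (X j))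
  refine ⟨fun s => Λ (G s), ?_, ⟨fun s => eval c (G s), ⟨s, hc⟩, fun s =>
    eval_zero_lineHom _ _ _ _⟩, θ (alg b), (map_ne_zero θ).mpr hb₀, fun s => ?_⟩
  · have hΛ : Λ.comp C = Polynomial.C.comp (θ.comp (alg.comp C)) :=
      RingHom.ext fun x => eval₂Hom_C _ _ _
    rw [← hΛ, ← hom_eval₂, hFG, map_zero]
  · have hθ : eval₂Hom (θ.comp (alg.comp C)) (fun j => θ (alg (X j))) = θ.comp alg := by
      apply ringHom_ext <;> intros <;> simp
    rw [eval_one_lineHom, ← map_mul, ← hG]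
    exact RingHom.congr_fun hθ (G s)

section ChartRing

open Paper

variable {k : Type*} [Field k] {ν : ℕ} {F : MvPolynomial (Fin (ν + 1)) k}

/-- The image in `S` of the generic point of the chart `x₀ = 1` of the hypersurface `F = 0`. -/
def chartPoint {S : Type*} [CommRing S] (χ : chartRing F →+* S) (i : Fin ν) : S :=
  χ (Ideal.Quotient.mk _ (X i))

lemma eval₂_chartPoint {S : Type*} [CommRing S] (χ : chartRing F →+* S)
    (P : MvPolynomial (Fin ν) k) :
    eval₂ (χ.comp (chartRingMap F)) (chartPoint χ) P = χ (Ideal.Quotient.mk _ P) := by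
  have h : eval₂Hom (χ.comp (chartRingMap F)) (chartPoint χ) =
      χ.comp (Ideal.Quotient.mk (Ideal.span {chartEquation F})) := by
    apply ringHom_ext
    · exact fun a => eval₂Hom_C _ _ _
    · exact fun i => eval₂Hom_X' _ _ _
  exact RingHom.congr_fun h P

lemma eval₂_homogeneousCoords_chartPoint {S : Type*} [CommRing S] (χ : chartRing F →+* S) :
    eval₂ (χ.comp (chartRingMap F)) (homogeneousCoords (chartPoint χ)) F = 0 := by
  have hF : Ideal.Quotient.mk (Ideal.span {chartEquation F}) (dehomogenize F) = 0 :=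
    Ideal.Quotient.eq_zero_iff_mem.mpr (Ideal.mem_span_singleton_self _)
  rw [← eval₂_dehomogenize, eval₂_chartPoint, hF, map_zero]

theorem exists_isRationalPath_of_equiv [Infinite k] {L : Type*} [Field L] {d r n : ℕ}
    (hF : F.IsHomogeneous d)
    (e : FractionRing (MvPolynomial (Fin r) (chartRing F)) ≃+*
      FractionRing (MvPolynomial (Fin n) k))
    (he : ∀ x : k, e (algebraMap (MvPolynomial (Fin r) (chartRing F)) _ (C (chartRingMap F x))) =
      algebraMap (MvPolynomial (Fin n) k) _ (C x))
    {Ψ : MvPolynomial (Fin r) (chartRing F) →+* L} (hΨ : Function.Injective Ψ) :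
    ∃ f, IsRationalPath ((Ψ.comp C).comp (chartRingMap F)) F
      (homogeneousCoords (chartPoint (Ψ.comp C))) f := by
  let A := MvPolynomial (Fin r) (chartRing F)
  have : IsDomain A := hΨ.isDomain Ψ
  let χ : A →+* FractionRing (MvPolynomial (Fin n) k) :=
    (e : FractionRing A →+* _).comp (algebraMap A (FractionRing A))
  let θ : FractionRing (MvPolynomial (Fin n) k) →+* L :=
    (IsFractionRing.lift (A := A) (g := Ψ) hΨ).comp (e.symm : _ →+* FractionRing A)
  have hθ (a : A) : θ (χ a) = Ψ a :=
    (congrArg _ (e.symm_apply_apply _)).trans (IsFractionRing.lift_algebraMap (A := A) hΨ a)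
  have hχ : (χ.comp C).comp (chartRingMap F) = (algebraMap _ _).comp C := RingHom.ext he
  obtain ⟨f, hf⟩ := exists_isRationalPath_of_eval₂_eq_zero hF
    (w := homogeneousCoords (chartPoint (χ.comp C))) ⟨0, one_ne_zero⟩
    (by rw [← hχ, eval₂_homogeneousCoords_chartPoint]) θ
  refine ⟨f, ?_⟩
  convert hf using 1
  · rw [← hχ]
    exact RingHom.ext fun x => (hθ _).symm
  · funext s
    rw [map_homogeneousCoords]
    exact congrArg (homogeneousCoords · s) (funext fun i => (hθ _).symm)

end ChartRing

end StableIrrationality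

namespace StableIrrationality

open IsLocalRing MvPolynomial

/-! ### The obstruction to rational paths -/

section BaseChange

variable {k K : Type*} [Field k] [Field K] {m d : ℕ} {i : k →+* K}

lemma degreeOf_map_le {σ R S : Type*} [CommRing R] [CommRing S] (φ : R →+* S) (s : σ)
    (f : MvPolynomial σ R) : degreeOf s (map φ f) ≤ degreeOf s f :=
  degreeOf_le_iff.mpr fun v hv => degreeOf_le_iff.mp le_rfl v (support_map_subset φ f hv)

lemma HasLeadingTerm.map {R S : Type*} [CommRing R] [CommRing S] {f : MvPolynomial (Fin (m + 1)) R}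
    (h : HasLeadingTerm d f) {φ : R →+* S} (hφ : Function.Injective φ) :
    HasLeadingTerm d (MvPolynomial.map φ f) := by
  obtain ⟨u, g, hu, rfl, hg⟩ := h
  exact ⟨φ u, MvPolynomial.map φ g, (map_ne_zero_iff φ hφ).mpr hu, by simp,
    (degreeOf_map_le _ _ _).trans_lt hg⟩

lemma eq_zero_of_sum_C_monomialEval_mul_map_eq_zero {σ τ : Type*} {t : τ → K}
    (ht : Function.Injective (eval₂Hom i t)) {s : Finset (τ →₀ ℕ)}
    {r : (τ →₀ ℕ) → MvPolynomial σ k}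
    (hr : ∑ α ∈ s, C (monomialEval α t) * map i (r α) = 0) {α : τ →₀ ℕ} (hα : α ∈ s) :
    r α = 0 := by
  classical
  ext v
  have hv : eval₂Hom i t (∑ α ∈ s, monomial α (coeff v (r α))) = 0 := by
    have := congrArg (coeff v) hr
    simp only [coeff_sum, coeff_C_mul, coeff_map, coeff_zero] at this
    rw [← this, map_sum]
    exact Finset.sum_congr rfl fun α _ => (eval₂Hom_monomial _ _ _ _).trans (mul_comm _ _)
  have hcoeff := congrArg (coeff α) ((injective_iff_map_eq_zero _).mp ht _ hv)
  simpa [coeff_sum, coeff_monomial, hα] using hcoeff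

theorem exists_injective_of_algebraicIndependent {L : Type*} [Field L] {r : ℕ}
    {f : MvPolynomial (Fin (m + 1)) k} (hf : HasLeadingTerm d f) {t : Fin r → K}
    (ht : Function.Injective (eval₂Hom i t)) {β : MvPolynomial (Fin (m + 1)) K →+* L}
    (hβ : ∀ P, β P = 0 ↔ map i f ∣ P) :
    ∃ Ψ : MvPolynomial (Fin r) (MvPolynomial (Fin (m + 1)) k ⧸ Ideal.span {f}) →+* L,
      Function.Injective Ψ ∧ ∀ P, Ψ (C (Ideal.Quotient.mk _ P)) = β (map i P) := by
  let q : MvPolynomial (Fin (m + 1)) k ⧸ Ideal.span {f} →+* L :=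
    Ideal.Quotient.lift _ (β.comp (map i)) fun P hP =>
      (hβ _).mpr (map_dvd _ (Ideal.mem_span_singleton.mp hP))
  refine ⟨eval₂Hom q fun j => β (C (t j)), ?_, fun P => eval₂Hom_C _ _ _⟩
  rw [injective_iff_map_eq_zero]
  intro g hg
  have exists_rep (α) : ∃ R, degreeOf 0 R < d ∧ Ideal.Quotient.mk (Ideal.span {f}) R =
      coeff α g := by
    obtain ⟨P, hP⟩ := Ideal.Quotient.mk_surjective (coeff α g)
    obtain ⟨R, hR, hdvd⟩ := hf.exists_dvd_sub P
    exact ⟨R, hR, hP ▸ (Ideal.Quotient.eq.mpr (Ideal.mem_span_singleton.mpr hdvd)).symm⟩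
  choose R hR hRg using exists_rep
  let S := ∑ α ∈ g.support, C (monomialEval α t) * map i (R α)
  have hβS : β S = 0 := by
    rw [← hg, coe_eval₂Hom, eval₂_eq', map_sum]
    refine Finset.sum_congr rfl fun α _ => ?_
    rw [← hRg, map_mul, mul_comm]
    congr 1
    change (β.comp C) _ = _
    rw [map_monomialEval, monomialEval, Finsupp.prod_fintype _ _ fun _ => pow_zero _]
    rfl
  have hS : S = 0 := by
    by_contra hne
    refine (hf.map i.injective).not_dvd ?_ hne ((hβ S).mp hβS)
    obtain ⟨_, _, -, -, hd⟩ := hf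
    refine (degreeOf_sum_le _ _ _).trans_lt
      ((Finset.sup_lt_iff (Nat.zero_lt_of_lt hd)).mpr fun α _ => ?_)
    exact (degreeOf_C_mul_le _ _ _).trans_lt ((degreeOf_map_le _ _ _).trans_lt (hR α))
  refine support_eq_empty.mp (Finset.eq_empty_of_forall_notMem fun α hα => ?_)
  refine mem_support_iff.mp hα ?_
  rw [← hRg, eq_zero_of_sum_C_monomialEval_mul_map_eq_zero ht hS hα, map_zero]

end BaseChange

section Jacobian

variable {R : Type*} [CommRing R] {τ : Type*}

/-- The vector field `∂f/∂z ∂/∂x - ∂f/∂x ∂/∂z`, which is tangent to the hypersurface `f = 0`. -/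
def jacobianDerivation (x z : τ) (f : MvPolynomial τ R) :
    Derivation R (MvPolynomial τ R) (MvPolynomial τ R) :=
  pderiv z f • pderiv x - pderiv x f • pderiv z

lemma jacobianDerivation_apply (x z : τ) (f P : MvPolynomial τ R) :
    jacobianDerivation x z f P = pderiv z f * pderiv x P - pderiv x f * pderiv z P := by
  simp [jacobianDerivation]

lemma jacobianDerivation_map {S : Type*} [CommRing S] (φ : R →+* S) (x z : τ)
    (f P : MvPolynomial τ R) :
    jacobianDerivation x z (map φ f) (map φ P) = map φ (jacobianDerivation x z f P) := by
  simp [jacobianDerivation_apply, pderiv_map]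

lemma jacobianDerivation_X {n : ℕ} {x : Fin n → τ} (hx : Function.Injective x)
    {z : τ} (hz : ∀ j, x j ≠ z) (f : MvPolynomial τ R) (i j : Fin n) :
    jacobianDerivation (x i) z f (X (x j)) = if i = j then pderiv z f else 0 := by
  rw [jacobianDerivation_apply, pderiv_X_of_ne (hz j), mul_zero, sub_zero]
  split_ifs with h
  · rw [h, pderiv_X_self, mul_one]
  · rw [pderiv_X_of_ne (hx.ne (Ne.symm h)), mul_zero]

lemma isIntegralTangent_jacobianDerivation {K : Type*} [Field K] {O : ValuationSubring K} {m : ℕ}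
    (x z : Fin (m + 1)) (f : MvPolynomial (Fin (m + 1)) O) :
    IsIntegralTangent f (jacobianDerivation x z (map (algebraMap O K) f)) where
  exists_map_eq _ := ⟨_, jacobianDerivation_map _ _ _ _ _⟩
  apply_eq_zero := by rw [jacobianDerivation_apply]; ring

end Jacobian

section DlogDet

variable {E : Type*} [Field E] {n : ℕ} {D : Fin n → Derivation ℤ E E}

lemma dlogDet_eq_zero_of_forall_apply_eq_zero (hn : 0 < n) {x : Fin (n + 1) → E}
    (h : ∀ i j, D i (x j) = 0) : dlogDet D x = 0 := by
  apply Matrix.det_eq_zero_of_row_eq_zero ⟨0, hn⟩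
  intro j
  simp [dlogMatrix, Derivation.leibniz_div, h]

lemma dlogDet_homogeneousCoords_ne_zero {x : Fin n → E} (hx : ∀ j, x j ≠ 0) {u : E} (hu : u ≠ 0)
    (h : ∀ i j, D i (x j) = if i = j then u else 0) : dlogDet D (homogeneousCoords x) ≠ 0 := by
  have hdiag : (dlogMatrix D fun j => homogeneousCoords x j.succ / homogeneousCoords x 0) =
      Matrix.diagonal fun j => u / x j := by
    ext i j
    rcases eq_or_ne i j with rfl | hij
    · simp [dlogMatrix, h]
    · simp [dlogMatrix, h, hij]
  rw [dlogDet, hdiag, Matrix.det_diagonal, Finset.prod_ne_zero_iff]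
  exact fun j _ => div_ne_zero hu (hx j)

end DlogDet

namespace IsGaussValuation

variable {K L : Type*} [Field K] [Field L] {O : ValuationSubring K} {m : ℕ}
  {f : MvPolynomial (Fin (m + 1)) O} {β : MvPolynomial (Fin (m + 1)) K →+* L}
  {V : ValuationSubring L}

/-- The polynomials over `O` as elements of the Gauss valuation ring. -/
def toValuationSubring (h : IsGaussValuation f β V) : MvPolynomial (Fin (m + 1)) O →+* V :=
  (β.comp (map (algebraMap O K))).codRestrict V fun P =>
    (V.valuation_le_one_iff _).mp (h.valuation_le_one P)

/-- The reduction of polynomials over `O` to functions on the special fibre of `f = 0`, seen in the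
residue field of the Gauss valuation. -/
def toResidueField (h : IsGaussValuation f β V) :
    MvPolynomial (Fin (m + 1)) O →+* ResidueField V :=
  (residue V).comp h.toValuationSubring

variable (h : IsGaussValuation f β V)

lemma toResidueField_eq_zero_iff {P : MvPolynomial (Fin (m + 1)) O} :
    h.toResidueField P = 0 ↔ map (residue O) f ∣ map (residue O) P := by
  rw [← h.valuation_lt_one_iff]
  exact residue_eq_zero_iff_valuation_lt_one

lemma exists_residueField_hom :
    ∃ φ : ResidueField O →+* ResidueField V, φ.comp (residue O) = h.toResidueField.comp C :=
  ⟨Ideal.Quotient.lift (maximalIdeal O) (h.toResidueField.comp C) fun a ha =>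
    h.toResidueField_eq_zero_iff.mpr (by
      rw [map_C, (residue_eq_zero_iff a).mpr ha, C_0]
      exact dvd_zero _), RingHom.ext fun _ => rfl⟩

lemma exists_residue_jacobianDerivation (x z : Fin (m + 1)) :
    ∃ D : Derivation ℤ (ResidueField V) (ResidueField V), ∀ P,
      D (h.toResidueField P) = h.toResidueField (jacobianDerivation x z f P) := by
  obtain ⟨D, hDβ, hD⟩ := h.exists_bounded_derivation (isIntegralTangent_jacobianDerivation x z f)
  obtain ⟨D', hD'⟩ := exists_derivation_residueField hD
  refine ⟨D', fun P => hD' _ _ ?_⟩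
  exact (hDβ _).trans (congrArg β (jacobianDerivation_map _ _ _ _ _))

lemma exists_isReduction_const {σ : Type*} [Finite σ] {p : σ → K} (hp : ∃ s, p s ≠ 0) :
    ∃ p' : σ → O, IsReduction V (fun s => β (C (p s))) fun s => h.toResidueField (C (p' s)) := by
  have := Fintype.ofFinite σ
  obtain ⟨s₁, hs₁⟩ := hp
  obtain ⟨a, ha, hmem, s, -, hval⟩ := exists_div_mem_and_valuation_div_eq_one (V := O)
    (T := Finset.univ) ⟨s₁, Finset.mem_univ s₁, hs₁⟩
  obtain ⟨φ, hφ⟩ := h.exists_residueField_hom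
  let p' (s : σ) : O := ⟨p s / a, hmem s (Finset.mem_univ s)⟩
  refine ⟨p', β (C a), (map_ne_zero (β.comp C)).mpr ha,
    fun s => h.toValuationSubring (C (p' s)), fun s => ?_, fun s => rfl, s, ?_⟩
  · change _ = β (C a) * β (map _ (C (p' s)))
    rw [map_C, ← map_mul, ← C_mul]
    exact congrArg (fun y => β (C y)) (mul_div_cancel₀ _ ha).symm
  · change (h.toResidueField.comp C) (p' s) ≠ 0
    rw [← hφ]
    exact (map_ne_zero φ).mpr (residue_ne_zero_iff_valuation_eq_one.mpr hval)

lemma isReduction_homogeneousCoords :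
    IsReduction V (homogeneousCoords fun i => β (X i))
      (homogeneousCoords fun i => h.toResidueField (X i)) := by
  refine ⟨1, one_ne_zero, homogeneousCoords fun i => h.toValuationSubring (X i), fun s => ?_,
    fun s => ?_, 0, one_ne_zero⟩
  · rw [one_mul]
    cases s using Fin.cases with
    | zero => rfl
    | succ i => exact congrArg β (map_X _ _).symm
  · exact map_homogeneousCoords (residue V) _ s

end IsGaussValuation

/-- The special form `c` can be used in the chart `x₀ = 1` over `κ`: the chart is given by
`logVar 0`, the hypersurface is irreducible and finite over the coordinates other than the first,
and generically smooth in the direction `z`. -/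
structure SpecialForm.IsChartAdapted {N n d : ℕ} (c : SpecialForm (Fin (N + 2)) n d)
    (z : Fin (N + 1)) (κ : Type*) [Field κ] : Prop where
  logVar_zero : c.logVar 0 = 0
  logVar_ne : ∀ j, c.logVar j ≠ z.succ
  coeff_ne_zero : coeff (Finsupp.single 1 d) (c.poly κ) ≠ 0
  irreducible : Irreducible (dehomogenize (c.poly κ))
  pderiv_ne_zero : pderiv z (dehomogenize (c.poly κ)) ≠ 0
  degreeOf_pderiv_lt : degreeOf 0 (pderiv z (dehomogenize (c.poly κ))) < d

lemma SpecialForm.IsChartAdapted.exists_logVar_succ_eq {N n d : ℕ}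
    {c : SpecialForm (Fin (N + 2)) n d} {z : Fin (N + 1)} {κ : Type*} [Field κ]
    (h : c.IsChartAdapted z κ) :
    ∃ x : Fin n → Fin (N + 1), Function.Injective x ∧ (∀ j, x j ≠ z) ∧
      ∀ j, c.logVar j.succ = (x j).succ := by
  have hne (j : Fin n) : c.logVar j.succ ≠ 0 := fun h0 =>
    Fin.succ_ne_zero j (c.logVar_injective (h0.trans h.logVar_zero.symm))
  refine ⟨fun j => (c.logVar j.succ).pred (hne j), fun i j hij => ?_, fun j hj => ?_, fun j =>
    (Fin.succ_pred _ _).symm⟩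
  · exact Fin.succ_injective _ (c.logVar_injective (Fin.pred_inj.mp hij))
  · exact h.logVar_ne j.succ (by rw [← hj, Fin.succ_pred])

section Obstruction

variable {K L : Type*} [Field K] [Field L] {O : ValuationSubring K} {N n d : ℕ}
  {c : SpecialForm (Fin (N + 2)) n d} {F : MvPolynomial (Fin (N + 2)) O}
  {β : MvPolynomial (Fin (N + 1)) K →+* L} {V : ValuationSubring L}
  (h : IsGaussValuation (dehomogenize F) β V)
  (hres : map (residue O) F = c.poly (ResidueField O))

include h hres

lemma IsGaussValuation.dlogDet_reduction_eq [IsAlgClosed K] [CharP (ResidueField O) 2]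
    (hF : F.IsHomogeneous d) {f : Fin (N + 2) → Polynomial L}
    (hf : eval₂ (Polynomial.C.comp (β.comp C)) f (map (algebraMap O K) F) = 0)
    (D : Fin n → Derivation ℤ (ResidueField V) (ResidueField V))
    {q₀ q₁ : Fin (N + 2) → ResidueField V} (hq₀ : IsReduction V (fun s => (f s).eval 0) q₀)
    (hq₁ : IsReduction V (fun s => (f s).eval 1) q₁) :
    dlogDet D (fun j => q₀ (c.logVar j)) = dlogDet D fun j => q₁ (c.logVar j) := by
  obtain ⟨φ, hφ⟩ := h.exists_residueField_hom
  have := charP_of_injective_ringHom φ.injective 2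
  refine c.dlogDet_reduction_eval_zero_eq_eval_one h.hasDivisibleValueGroup
    (hF.map (h.toValuationSubring.comp C)) ?_ D ?_ hq₀ hq₁
  · rw [map_map, ← RingHom.comp_assoc, ← c.map_poly φ, ← hres, map_map, hφ]
    rfl
  · have halg : (algebraMap V L).comp (h.toValuationSubring.comp C) =
        (β.comp C).comp (algebraMap O K) :=
      RingHom.ext fun a => congrArg β (map_C _ a)
    rwa [eval₂_map, RingHom.comp_assoc, ← halg, ← RingHom.comp_assoc, ← eval₂_map] at hf

lemma IsGaussValuation.dlogDet_toResidueField_X_ne_zero (hd : 2 ≤ d) {z : Fin (N + 1)}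
    (hc : c.IsChartAdapted z (ResidueField O)) {x : Fin n → Fin (N + 1)}
    (hx : Function.Injective x) (hxz : ∀ j, x j ≠ z)
    {D : Fin n → Derivation ℤ (ResidueField V) (ResidueField V)}
    (hD : ∀ j P, D j (h.toResidueField P) =
      h.toResidueField (jacobianDerivation (x j) z (dehomogenize F) P)) :
    dlogDet D (homogeneousCoords fun j => h.toResidueField (X (x j))) ≠ 0 := by
  have hlead : HasLeadingTerm d (map (residue O) (dehomogenize F)) := by
    rw [map_dehomogenize, hres]
    exact hasLeadingTerm_dehomogenize (by omega) (c.isHomogeneous_poly _) hc.coeff_ne_zero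
  have toResidueField_ne_zero {P} (hP : map (residue O) P ≠ 0)
      (hdeg : degreeOf 0 (map (residue O) P) < d) : h.toResidueField P ≠ 0 :=
    h.toResidueField_eq_zero_iff.not.mpr (hlead.not_dvd hdeg hP)
  refine dlogDet_homogeneousCoords_ne_zero (fun j => toResidueField_ne_zero ?_ ?_)
    (u := h.toResidueField (pderiv z (dehomogenize F))) (toResidueField_ne_zero ?_ ?_)
    fun i j => (hD _ _).trans ?_
  · rw [map_X]
    exact X_ne_zero _
  · rw [map_X]
    refine (degreeOf_le_totalDegree _ _).trans_lt ?_
    rw [totalDegree_X]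
    omega
  · rw [← pderiv_map, map_dehomogenize, hres]
    exact hc.pderiv_ne_zero
  · rw [← pderiv_map, map_dehomogenize, hres]
    exact hc.degreeOf_pderiv_lt
  · rw [jacobianDerivation_X hx hxz, apply_ite h.toResidueField, map_zero]

-- The logarithmic Jacobian vanishes at the constant end of the path but not at the generic end.
theorem IsGaussValuation.not_isRationalPath [IsAlgClosed K] [CharP (ResidueField O) 2]
    (hd : 2 ≤ d) (hF : F.IsHomogeneous d) {z : Fin (N + 1)}
    (hc : c.IsChartAdapted z (ResidueField O)) (f : Fin (N + 2) → Polynomial L) :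
    ¬ IsRationalPath (β.comp C) (map (algebraMap O K) F) (homogeneousCoords fun i => β (X i))
      f := by
  rintro ⟨hf, ⟨p, hp₀, hp⟩, a, ha, hfa⟩
  obtain ⟨x, hx, hxz, hlogVar⟩ := hc.exists_logVar_succ_eq
  choose D hD using fun j => h.exists_residue_jacobianDerivation (x j) z
  obtain ⟨p', hp'⟩ := h.exists_isReduction_const hp₀
  have hconst : dlogDet D (fun j => h.toResidueField (C (p' (c.logVar j)))) = 0 :=
    dlogDet_eq_zero_of_forall_apply_eq_zero c.pos fun i j => (hD _ _).trans (by
      rw [← algebraMap_eq, Derivation.map_algebraMap, map_zero])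
  have hcoords : (fun j => (homogeneousCoords fun i => h.toResidueField (X i)) (c.logVar j)) =
      homogeneousCoords fun j => h.toResidueField (X (x j)) := by
    funext j
    cases j using Fin.cases with
    | zero => rw [hc.logVar_zero]; rfl
    | succ j => rw [hlogVar]; rfl
  have hpath := h.dlogDet_reduction_eq hres hF hf D (by simpa only [hp] using! hp')
    (by simpa only [hfa] using h.isReduction_homogeneousCoords.mul_left ha)
  rw [hcoords] at hpath
  exact h.dlogDet_toResidueField_X_ne_zero hres hd hc hx hxz hD (hpath.symm.trans hconst)

end Obstruction

section StablyIrrational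

universe u

variable {k : Type u} [Field k] [Infinite k] [CharP k 2] {N n d : ℕ}
  {F : MvPolynomial (Fin (N + 2)) k}

lemma exists_algebraicIndependent_hom_isAlgClosed (k : Type u) [Field k] (r : ℕ) :
    ∃ (K : Type u) (_ : Field K) (_ : IsAlgClosed K) (i : k →+* K) (t : Fin r → K),
      Function.Injective (eval₂Hom i t) := by
  let E := FractionRing (MvPolynomial (Fin r) k)
  let j : MvPolynomial (Fin r) k →+* AlgebraicClosure E :=
    (algebraMap E _).comp (algebraMap (MvPolynomial (Fin r) k) E)
  refine ⟨AlgebraicClosure E, inferInstance, inferInstance, j.comp C, fun i => j (X i), ?_⟩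
  have : eval₂Hom (j.comp C) (fun i => j (X i)) = j := by
    apply ringHom_ext <;> intros <;> simp
  rw [this]
  exact (algebraMap E _).injective.comp (IsFractionRing.injective _ E)

open Paper in
theorem stablyIrrationalOver_of_isChartAdapted {c : SpecialForm (Fin (N + 2)) n d}
    {z : Fin (N + 1)} (hc : ∀ (κ : Type u) [Field κ] [CharP κ 2], c.IsChartAdapted z κ)
    (hd : 2 ≤ d) (hF : F.IsHomogeneous d) (hind : HasIndependentCoeffs 2 d F) :
    StablyIrrationalOver (chartRingMap (ν := N + 1) F) N := by
  rintro r ⟨e, he⟩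
  obtain ⟨K, _, _, i, t, ht⟩ := exists_algebraicIndependent_hom_isAlgClosed k r
  obtain ⟨O, _, H, hH, hHK, hres⟩ :=
    hind.exists_specialization i hF (c.isHomogeneous_poly (ZMod 2))
  rw [c.map_poly] at hres
  have hdeh : map (algebraMap O K) (dehomogenize H) = map i (dehomogenize F) := by
    rw [map_dehomogenize, map_dehomogenize, hHK]
  have hlead := hasLeadingTerm_dehomogenize (by omega) hF
    (hind.coeff_ne_zero (Finsupp.degree_single 1 d))
  obtain ⟨L, _, β, V, h⟩ := exists_isGaussValuation (f := dehomogenize H) (d := d)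
    (by rw [map_dehomogenize, hres]
        exact hasLeadingTerm_dehomogenize (by omega) (c.isHomogeneous_poly _) (hc _).coeff_ne_zero)
    (by rw [hdeh]; exact hlead.map i.injective)
    (by rw [map_dehomogenize, hres]; exact (hc _).irreducible)
  obtain ⟨Ψ, hΨ, hΨβ⟩ : ∃ Ψ : MvPolynomial (Fin r) (chartRing F) →+* L, Function.Injective Ψ ∧
      ∀ P, Ψ (C (Ideal.Quotient.mk _ P)) = β (map i P) :=
    exists_injective_of_algebraicIndependent hlead ht (by rw [← hdeh]; exact h.map_eq_zero_iff)
  obtain ⟨f, hf⟩ := exists_isRationalPath_of_equiv hF e he hΨ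
  refine h.not_isRationalPath hres hd hH (hc _) f ?_
  have hι : (Ψ.comp C).comp (chartRingMap F) = (β.comp C).comp i :=
    RingHom.ext fun x => by
      refine (hΨβ (C x)).trans ?_
      rw [map_C]
      rfl
  have hξ : chartPoint (Ψ.comp C) = fun i => β (X i) :=
    funext fun j => by
      refine (hΨβ (X j)).trans ?_
      rw [map_X]
  rw [hι, hξ] at hf
  rw [hHK]
  exact hf.map

end StablyIrrational

end StableIrrationality

namespace StableIrrationality

open Finset

/-! ### Construction of special forms -/

section MonomialBounds

variable {σ Γ : Type*} [LinearOrderedCommGroupWithZero Γ] {w : σ → Γ}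

lemma monomialEval_le_pow_degree {a : Γ} (h : ∀ s, w s ≤ a) (m : σ →₀ ℕ) :
    monomialEval m w ≤ a ^ m.degree := by
  rw [monomialEval, Finsupp.prod, Finsupp.degree_apply, ← prod_pow_eq_pow_sum]
  exact prod_le_prod' fun s _ => pow_le_pow_left' (h s) _

lemma monomialEval_ne_zero {m : σ →₀ ℕ} (h : ∀ s, m s ≠ 0 → w s ≠ 0) : monomialEval m w ≠ 0 :=
  prod_ne_zero_iff.mpr fun s hs => pow_ne_zero _ (h s (Finsupp.mem_support_iff.mp hs))

-- Trading one factor `w s` and everything outside `b` for powers of the maximal `w t` is a gain.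
lemma monomialEval_lt_of_add_single_le {b m m' : σ →₀ ℕ} {s t : σ} {e : ℕ}
    (hm' : m' = b + Finsupp.single t e) (hle : b + Finsupp.single s 1 ≤ m)
    (hdeg : m'.degree = m.degree) (hb : ∀ u, b u ≠ 0 → w u ≠ 0) (hmax : ∀ u, w u ≤ w t)
    (hlt : w s < w t) : monomialEval m w < monomialEval m' w := by
  obtain ⟨r, rfl⟩ := exists_add_of_le hle
  have he : e = r.degree + 1 := by
    rw [hm'] at hdeg
    simp only [map_add, Finsupp.degree_single] at hdeg
    omega
  have hpos : 0 < w t := zero_le.trans_lt hlt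
  rw [hm', he, monomialEval_add, monomialEval_add, monomialEval_add, monomialEval_single,
    monomialEval_single, mul_assoc, pow_one, pow_succ']
  refine mul_lt_mul_of_pos_left ?_ (zero_lt_iff.mpr (monomialEval_ne_zero hb))
  calc w s * monomialEval r w ≤ w s * w t ^ r.degree := by
        gcongr
        exact monomialEval_le_pow_degree hmax r
    _ < w t * w t ^ r.degree := mul_lt_mul_of_pos_right hlt (pow_pos hpos _)

end MonomialBounds

/-- The choices in the construction of a special form. To the variable `var i` belongs the monomial
`var i ^ (d - 1) * var (next i)`; to each other variable `s` belongs a monomial which is an even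
power of `s` times those `var j.succ` with `j ∈ oddVars s`, and times `var 0` if the degree requires
it; the perturbation is linear in `pertVar`. -/
structure MonomialPattern (σ : Type*) (n : ℕ) where
  var : Fin (n + 1) → σ
  next : Fin (n + 1) → Fin (n + 1)
  oddVars : σ → Finset (Fin n)
  pertVar : σ

namespace MonomialPattern

variable {σ : Type*} {n : ℕ} (P : MonomialPattern σ n) (d : ℕ)

/-- The monomial `var i ^ (d - 1) * var (next i)`. -/
def logMonomial (i : Fin (n + 1)) : σ →₀ ℕ :=
  Finsupp.single (P.var i) (d - 1) + Finsupp.single (P.var (P.next i)) 1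

/-- The product of the variables `var j.succ` with `j ∈ t`. -/
def squarefree (t : Finset (Fin n)) : σ →₀ ℕ := ∑ j ∈ t, Finsupp.single (P.var j.succ) 1

/-- The part of `freeMonomial s` prime to `s`. -/
def cofactor (s : σ) : σ →₀ ℕ :=
  P.squarefree (P.oddVars s) + Finsupp.single (P.var 0) ((d - #(P.oddVars s)) % 2)

/-- The monomial belonging to a variable `s` outside the range of `var`. -/
def freeMonomial (s : σ) : σ →₀ ℕ :=
  P.cofactor d s + Finsupp.single s (d - #(P.oddVars s) - (d - #(P.oddVars s)) % 2)

/-- The perturbation monomial. -/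
def pertMonomial : σ →₀ ℕ :=
  P.squarefree univ + Finsupp.single (P.var 0) (d - n - 1) + Finsupp.single P.pertVar 1

/-- The conditions under which the monomials of the pattern `P` form a special form of degree `d`;
`oddVars` records the parities of the exponents of the monomial of each variable. -/
structure IsAdmissible : Prop where
  two_le : 2 ≤ n
  add_two_le : n + 2 ≤ d
  var_injective : Function.Injective P.var
  next_injective : Function.Injective P.next
  oddVars_injective : Function.Injective P.oddVars
  pertVar_notMem : P.pertVar ∉ Set.range P.var
  oddVars_var : ∀ i j, j ∈ P.oddVars (P.var i) ↔ Odd (P.logMonomial d i (P.var j.succ))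

variable {P d}

lemma squarefree_apply_of_notMem {s : σ} (hs : s ∉ Set.range P.var) (t : Finset (Fin n)) :
    P.squarefree t s = 0 := by
  rw [squarefree, Finsupp.finsetSum_apply]
  exact sum_eq_zero fun j _ => Finsupp.single_eq_of_ne fun h => hs ⟨_, h.symm⟩

lemma degree_squarefree (t : Finset (Fin n)) : (P.squarefree t).degree = #t := by
  simp [squarefree]

lemma squarefree_mono {t t' : Finset (Fin n)} (h : t ⊆ t') : P.squarefree t ≤ P.squarefree t' :=
  sum_le_sum_of_subset h

lemma cofactor_apply_of_notMem {s u : σ} (hu : u ∉ Set.range P.var) : P.cofactor d s u = 0 := by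
  rw [cofactor, Finsupp.add_apply, squarefree_apply_of_notMem hu,
    Finsupp.single_eq_of_ne fun h => hu ⟨_, h.symm⟩, add_zero]

variable (hP : P.IsAdmissible d)

namespace IsAdmissible

include hP

lemma squarefree_apply_succ (t : Finset (Fin n)) (j : Fin n) :
    P.squarefree t (P.var j.succ) = if j ∈ t then 1 else 0 := by
  classical
  simp only [squarefree, Finsupp.finsetSum_apply, Finsupp.single_apply, hP.var_injective.eq_iff,
    Fin.succ_inj, sum_ite_eq']

lemma squarefree_apply_zero (t : Finset (Fin n)) : P.squarefree t (P.var 0) = 0 := by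
  rw [squarefree, Finsupp.finsetSum_apply]
  exact sum_eq_zero fun j _ => Finsupp.single_eq_of_ne
    (hP.var_injective.ne (Fin.succ_ne_zero j).symm)

lemma squarefree_apply_le_one (t : Finset (Fin n)) (s : σ) : P.squarefree t s ≤ 1 := by
  by_cases hs : s ∈ Set.range P.var
  · obtain ⟨i, rfl⟩ := hs
    cases i using Fin.cases with
    | zero => rw [hP.squarefree_apply_zero]; omega
    | succ j => rw [hP.squarefree_apply_succ]; split_ifs <;> omega
  · rw [squarefree_apply_of_notMem hs]
    omega

lemma degree_logMonomial (i : Fin (n + 1)) : (P.logMonomial d i).degree = d := by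
  have := hP.add_two_le
  simp only [logMonomial, map_add, Finsupp.degree_single]
  omega

lemma card_oddVars_add_two_le (s : σ) : #(P.oddVars s) + 2 ≤ d := by
  have := card_le_univ (P.oddVars s)
  have := hP.add_two_le
  rw [Fintype.card_fin] at *
  omega

lemma degree_freeMonomial (s : σ) : (P.freeMonomial d s).degree = d := by
  have := hP.card_oddVars_add_two_le s
  simp only [freeMonomial, cofactor, map_add, degree_squarefree, Finsupp.degree_single]
  omega

lemma degree_pertMonomial : (P.pertMonomial d).degree = d := by
  have := hP.add_two_le
  simp only [pertMonomial, map_add, degree_squarefree, Finsupp.degree_single, card_univ,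
    Fintype.card_fin]
  omega

lemma odd_freeMonomial_iff {s : σ} (hs : s ∉ Set.range P.var) (j : Fin n) :
    Odd (P.freeMonomial d s (P.var j.succ)) ↔ j ∈ P.oddVars s := by
  rw [freeMonomial, cofactor, Finsupp.add_apply, Finsupp.add_apply, hP.squarefree_apply_succ,
    Finsupp.single_eq_of_ne (hP.var_injective.ne (Fin.succ_ne_zero j)),
    Finsupp.single_eq_of_ne fun h => hs ⟨_, h⟩]
  split_ifs with h <;> simp [h]

lemma pertMonomial_apply_pertVar : P.pertMonomial d P.pertVar = 1 := by
  rw [pertMonomial, Finsupp.add_apply, Finsupp.add_apply,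
    squarefree_apply_of_notMem hP.pertVar_notMem,
    Finsupp.single_eq_of_ne fun h => hP.pertVar_notMem ⟨_, h.symm⟩, Finsupp.single_eq_same,
    add_zero, zero_add]

lemma pertMonomial_apply_lt (s : σ) : P.pertMonomial d s < d := by
  have := hP.two_le
  have := hP.add_two_le
  have hsingle (t : σ) (e : ℕ) : Finsupp.single t e s ≤ e := by
    classical
    rw [Finsupp.single_apply]
    split_ifs <;> omega
  have := hP.squarefree_apply_le_one univ s
  have := hsingle (P.var 0) (d - n - 1)
  have := hsingle P.pertVar 1
  rw [pertMonomial, Finsupp.add_apply, Finsupp.add_apply]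
  omega

lemma single_add_single_le_pertMonomial {i j : Fin (n + 1)} (hij : i ≠ j) :
    Finsupp.single (P.var i) 1 + Finsupp.single (P.var j) 1 ≤ P.pertMonomial d := by
  have := hP.add_two_le
  calc Finsupp.single (P.var i) 1 + Finsupp.single (P.var j) 1
      = ∑ k ∈ {i, j}, Finsupp.single (P.var k) 1 := by rw [sum_pair hij]
    _ ≤ ∑ k, Finsupp.single (P.var k) 1 := sum_le_sum_of_subset (subset_univ _)
    _ = P.squarefree univ + Finsupp.single (P.var 0) 1 := by
        rw [Fin.sum_univ_succ, add_comm, squarefree]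
    _ ≤ P.squarefree univ + Finsupp.single (P.var 0) (d - n - 1) := by
        gcongr
        omega
    _ ≤ P.pertMonomial d := le_self_add

lemma exists_cofactor_add_single_le_pertMonomial (s : σ) :
    ∃ i, P.cofactor d s + Finsupp.single (P.var i) 1 ≤ P.pertMonomial d := by
  have := hP.add_two_le
  by_cases hfull : P.oddVars s = univ
  · refine ⟨0, le_trans ?_ le_self_add⟩
    rw [cofactor, hfull, add_assoc, ← Finsupp.single_add, card_univ, Fintype.card_fin]
    gcongr
    omega
  · obtain ⟨j, hj⟩ : ∃ j, j ∉ P.oddVars s := by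
      simpa only [eq_univ_iff_forall, not_forall] using hfull
    refine ⟨j.succ, le_trans ?_ le_self_add⟩
    have hinsert : P.squarefree (P.oddVars s) + Finsupp.single (P.var j.succ) 1 =
        P.squarefree (insert j (P.oddVars s)) := by
      rw [squarefree, squarefree, sum_insert hj, add_comm]
    rw [cofactor, add_right_comm, hinsert]
    gcongr
    · exact squarefree_mono (subset_univ _)
    · omega

section Dominates

variable {Γ : Type*} [LinearOrderedCommGroupWithZero Γ] {w : σ → Γ} (hw : ∀ i, w (P.var i) ≠ 0)
  {t : σ} (hmax : ∀ s, w s ≤ w t)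

include hw hmax

lemma eq_max_of_ne_next
    (hlog : ∀ i, monomialEval (P.logMonomial d i) w ≤ monomialEval (P.pertMonomial d) w)
    {i j : Fin (n + 1)} (hi : w (P.var i) = w t) (hj : j ≠ P.next i) : w (P.var j) = w t := by
  by_contra hne
  refine (hlog i).not_gt (monomialEval_lt_of_add_single_le (t := P.var i) (add_comm _ _)
    (hP.single_add_single_le_pertMonomial hj.symm)
    (by rw [hP.degree_logMonomial, hP.degree_pertMonomial]) (fun u hu => ?_) ?_ ?_)
  · rw [← Finsupp.mem_support_iff] at hu
    rw [mem_singleton.mp (Finsupp.support_single_subset hu)]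
    exact hw _
  · rwa [hi]
  · rw [hi]
    exact (hmax _).lt_of_ne hne

lemma exists_eq_max
    (hfree : ∀ s ∉ Set.range P.var,
      monomialEval (P.freeMonomial d s) w ≤ monomialEval (P.pertMonomial d) w) :
    ∃ i, w (P.var i) = w t := by
  by_contra! hne
  have ht : t ∉ Set.range P.var := by
    rintro ⟨i, rfl⟩
    exact hne i rfl
  obtain ⟨i, hi⟩ := hP.exists_cofactor_add_single_le_pertMonomial t
  refine (hfree t ht).not_gt (monomialEval_lt_of_add_single_le rfl hi
    (by rw [hP.degree_freeMonomial, hP.degree_pertMonomial]) (fun u hu => ?_) hmax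
    ((hmax _).lt_of_ne (hne i)))
  obtain ⟨j, rfl⟩ : u ∈ Set.range P.var := not_not.mp fun h => hu (cofactor_apply_of_notMem h)
  exact hw j

lemma eq_max
    (hlog : ∀ i, monomialEval (P.logMonomial d i) w ≤ monomialEval (P.pertMonomial d) w)
    (hfree : ∀ s ∉ Set.range P.var,
      monomialEval (P.freeMonomial d s) w ≤ monomialEval (P.pertMonomial d) w)
    (j : Fin (n + 1)) : w (P.var j) = w t := by
  have := hP.two_le
  obtain ⟨i, hi⟩ := hP.exists_eq_max hw hmax hfree
  have step {i j} := hP.eq_max_of_ne_next (i := i) (j := j) hw hmax hlog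
  by_cases hj : j = P.next i
  · -- A third index `k`, whose successor is not `next i`, links `i` to `next i`.
    obtain ⟨k, hki, hkj⟩ := Fin.exists_ne_and_ne_of_two_lt i (P.next i) (by omega)
    exact step (step hi hkj) fun h => hki (hP.next_injective (hj.symm.trans h)).symm
  · exact step hi hj

end Dominates

end IsAdmissible

variable (P d) in
/-- The monomial belonging to the variable `s`. -/
def monomialOf (s : σ) : σ →₀ ℕ :=
  Function.extend P.var (P.logMonomial d) (P.freeMonomial d) s

lemma monomialOf_of_notMem {s : σ} (hs : s ∉ Set.range P.var) :
    P.monomialOf d s = P.freeMonomial d s :=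
  Function.extend_apply' _ _ _ hs

lemma even_freeMonomial_apply {s u : σ} (hu : u ∉ Set.range P.var) :
    Even (P.freeMonomial d s u) := by
  classical
  rw [freeMonomial, Finsupp.add_apply, cofactor_apply_of_notMem hu, zero_add, Finsupp.single_apply,
    Nat.even_iff]
  split_ifs <;> omega

lemma even_logMonomial_apply (i : Fin (n + 1)) {u : σ} (hu : u ∉ Set.range P.var) :
    Even (P.logMonomial d i u) := by
  have hsingle (j e) : Finsupp.single (P.var j) e u = 0 :=
    Finsupp.single_eq_of_ne fun h => hu ⟨j, h.symm⟩
  simp [logMonomial, hsingle]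

namespace IsAdmissible

include hP

lemma monomialOf_var (i : Fin (n + 1)) : P.monomialOf d (P.var i) = P.logMonomial d i :=
  hP.var_injective.extend_apply _ _ i

lemma odd_monomialOf_iff (s : σ) (j : Fin n) :
    Odd (P.monomialOf d s (P.var j.succ)) ↔ j ∈ P.oddVars s := by
  by_cases hs : s ∈ Set.range P.var
  · obtain ⟨i, rfl⟩ := hs
    rw [hP.monomialOf_var, hP.oddVars_var]
  · rw [monomialOf_of_notMem hs, hP.odd_freeMonomial_iff hs]

lemma eq_of_forall_odd_monomialOf_iff {s s' : σ}
    (h : ∀ j : Fin n,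
      Odd (P.monomialOf d s (P.var j.succ)) ↔ Odd (P.monomialOf d s' (P.var j.succ))) : s = s' :=
  hP.oddVars_injective <| Finset.ext fun j => by
    rw [← hP.odd_monomialOf_iff, h, hP.odd_monomialOf_iff]

lemma monomialOf_injective : Function.Injective (P.monomialOf d) := fun s s' h =>
  hP.eq_of_forall_odd_monomialOf_iff fun j => by rw [h]

lemma even_monomialOf_apply (s : σ) {u : σ} (hu : u ∉ Set.range P.var) :
    Even (P.monomialOf d s u) := by
  by_cases hs : s ∈ Set.range P.var
  · obtain ⟨i, rfl⟩ := hs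
    rw [hP.monomialOf_var]
    exact even_logMonomial_apply i hu
  · rw [monomialOf_of_notMem hs]
    exact even_freeMonomial_apply hu

lemma degree_monomialOf (s : σ) : (P.monomialOf d s).degree = d := by
  by_cases hs : s ∈ Set.range P.var
  · obtain ⟨i, rfl⟩ := hs
    rw [hP.monomialOf_var, hP.degree_logMonomial]
  · rw [monomialOf_of_notMem hs, hP.degree_freeMonomial]

lemma apply_le_apply_var [Finite σ] {Γ : Type*} [LinearOrderedCommGroupWithZero Γ] {w : σ → Γ}
    (hw : ∀ i, w (P.var i) ≠ 0)
    (hle : ∀ s, monomialEval (P.monomialOf d s) w ≤ monomialEval (P.pertMonomial d) w)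
    (j : Fin (n + 1)) (s : σ) : w s ≤ w (P.var j) := by
  have : Nonempty σ := ⟨P.pertVar⟩
  obtain ⟨t, ht⟩ := Finite.exists_max w
  rw [hP.eq_max hw ht (fun i => hP.monomialOf_var i ▸ hle (P.var i))
    (fun s hs => monomialOf_of_notMem (d := d) hs ▸ hle s)]
  exact ht s

end IsAdmissible

variable [Fintype σ]

/-- The special form with the monomials of an admissible pattern. -/
def IsAdmissible.specialForm : SpecialForm σ n d where
  logVar := P.var
  support := univ.map ⟨P.monomialOf d, hP.monomialOf_injective⟩
  pert := P.pertMonomial d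
  logVar_injective := hP.var_injective
  pos := two_pos.trans_le hP.two_le
  even_of_notMem_range m hm u hu := by
    obtain ⟨s, -, rfl⟩ := mem_map.mp hm
    exact hP.even_monomialOf_apply s hu
  eq_of_parity_eq m hm m' hm' h := by
    obtain ⟨s, -, rfl⟩ := mem_map.mp hm
    obtain ⟨s', -, rfl⟩ := mem_map.mp hm'
    refine congrArg _ (hP.eq_of_forall_odd_monomialOf_iff fun j => ?_)
    exact Nat.not_even_iff_odd.symm.trans ((not_congr (h j)).trans Nat.not_even_iff_odd)
  degree_eq m hm := by
    obtain ⟨s, -, rfl⟩ := mem_map.mp hm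
    exact hP.degree_monomialOf s
  degree_pert := hP.degree_pertMonomial
  dominates w hw hle := hP.apply_le_apply_var hw fun s =>
    hle _ (mem_map_of_mem ⟨P.monomialOf d, _⟩ (mem_univ s))

lemma IsAdmissible.poly_specialForm (R : Type*) [CommRing R] :
    hP.specialForm.poly R = ∑ s, MvPolynomial.monomial (P.monomialOf d s) 1 +
      MvPolynomial.monomial (P.pertMonomial d) 1 := by
  simp [specialForm, SpecialForm.poly]

end MonomialPattern

end StableIrrationality

namespace StableIrrationality

open MvPolynomial

section Irreducibility

lemma irreducible_X_pow_add_C {R : Type*} [CommRing R] [IsDomain R] {p g : R} {d : ℕ}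
    (hp : Prime p) (hd : 0 < d) (hg : p ∣ g) (hg2 : ¬ p ^ 2 ∣ g) :
    Irreducible (Polynomial.X ^ d + Polynomial.C g) := by
  have hmonic : (Polynomial.X ^ d + Polynomial.C g).Monic := Polynomial.monic_X_pow_add_C g hd.ne'
  have hdeg := Polynomial.degree_X_pow_add_C hd g
  have hprime := (Ideal.span_singleton_prime hp.ne_zero).mpr hp
  refine Polynomial.irreducible_of_eisenstein_criterion hprime ?_ (fun i hi => ?_) ?_ ?_
    hmonic.isPrimitive
  · rw [hmonic.leadingCoeff]
    exact (Ideal.ne_top_iff_one _).mp hprime.ne_top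
  · rw [hdeg, Nat.cast_lt] at hi
    rw [Polynomial.coeff_add, Polynomial.coeff_X_pow, if_neg hi.ne, zero_add, Polynomial.coeff_C]
    split_ifs
    · exact Ideal.mem_span_singleton.mpr hg
    · exact zero_mem _
  · rw [hdeg]
    exact_mod_cast hd
  · rwa [Polynomial.coeff_add, Polynomial.coeff_X_pow, if_neg hd.ne, zero_add,
      Polynomial.coeff_C_zero, Ideal.span_singleton_pow, Ideal.mem_span_singleton]

variable {κ A : Type*} [Field κ] [CommRing A] {d m : ℕ}

lemma HasLeadingTerm.irreducible_of_irreducible_map [IsDomain A] {f : MvPolynomial (Fin (m + 1)) κ}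
    (hf : HasLeadingTerm d f) (φ : MvPolynomial (Fin m) κ →+* A)
    (h : Irreducible ((finSuccEquiv κ m f).map φ)) : Irreducible f := by
  obtain ⟨u, hmonic, -⟩ := hf.exists_monic_finSuccEquiv
  have hu : IsUnit u := by
    refine isUnit_iff_ne_zero.mpr fun hu => hmonic.ne_zero ?_
    rw [hu, C_0, zero_mul, map_zero]
  have hCu : Associated f (C u * f) := (associated_unit_mul_left f _ (hu.map C)).symm
  rw [hCu.irreducible_iff, ← MulEquiv.irreducible_iff (finSuccEquiv κ m)]
  refine hmonic.irreducible_of_irreducible_map φ _ ?_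
  exact (hCu.map ((Polynomial.mapRingHom φ).comp (finSuccEquiv κ m : _ →+* _))).irreducible h

lemma map_finSuccEquiv_eq_eval₂ {R : Type*} [CommRing R] (φ : R →+* A) (v : Fin m → A)
    (f : MvPolynomial (Fin (m + 1)) R) :
    (finSuccEquiv R m f).map (eval₂Hom φ v) =
      eval₂ (Polynomial.C.comp φ) (Fin.cons Polynomial.X fun i => Polynomial.C (v i)) f := by
  induction f using MvPolynomial.induction_on with
  | C a => simp [finSuccEquiv_apply]
  | add p q hp hq => rw [map_add, Polynomial.map_add, hp, hq, eval₂_add]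
  | mul_X p i hp =>
    rw [map_mul, Polynomial.map_mul, hp, eval₂_mul, eval₂_X]
    cases i using Fin.cases <;> simp [finSuccEquiv_X_zero, finSuccEquiv_X_succ]

lemma irreducible_dehomogenize_of_irreducible_eval₂ [IsDomain A] (hd : 0 < d)
    {F : MvPolynomial (Fin (m + 2)) κ} (hF : F.IsHomogeneous d)
    (hcoeff : coeff (Finsupp.single 1 d) F ≠ 0) (φ : κ →+* A) (v : Fin m → A)
    (h : Irreducible (eval₂ (Polynomial.C.comp φ)
      (homogeneousCoords (Fin.cons Polynomial.X fun i => Polynomial.C (v i))) F)) :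
    Irreducible (dehomogenize F) := by
  refine (hasLeadingTerm_dehomogenize hd hF hcoeff).irreducible_of_irreducible_map
    (eval₂Hom φ v) ?_
  rwa [map_finSuccEquiv_eq_eval₂, eval₂_dehomogenize]

end Irreducibility

lemma exists_injective_extension {ι α β : Type*} [Fintype α] [Fintype β] {x : ι → α} {y : ι → β}
    (hx : Function.Injective x) (hy : Function.Injective y)
    (hcard : Fintype.card α ≤ Fintype.card β) :
    ∃ f : α → β, Function.Injective f ∧ ∀ i, f (x i) = y i := by
  classical
  obtain ⟨e⟩ := Function.Embedding.nonempty_of_card_le hcard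
  have hex : Function.Injective (e ∘ x) := e.injective.comp hx
  let r : Set.range (e ∘ x) ≃ Set.range y :=
    (Equiv.ofInjective _ hex).symm.trans (Equiv.ofInjective y hy)
  refine ⟨r.extendSubtype ∘ e, r.extendSubtype.injective.comp e.injective, fun i => ?_⟩
  have hr : r ⟨e (x i), i, rfl⟩ = ⟨y i, i, rfl⟩ :=
    congrArg (Equiv.ofInjective y hy) (Equiv.ofInjective_symm_apply hex i)
  exact (r.extendSubtype_apply_of_mem _ ⟨i, rfl⟩).trans (congrArg Subtype.val hr)

namespace MonomialPattern

section OddVars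

variable {σ : Type*} {n : ℕ} (P : MonomialPattern σ n) (d : ℕ)

/-- The indices `j` for which `var j.succ` has odd exponent in `logMonomial i`. -/
def logOddVars (i : Fin (n + 1)) : Finset (Fin n) := {j | Odd (P.logMonomial d i (P.var j.succ))}

variable {P d}

lemma exists_isAdmissible [Fintype σ] (hn : 2 ≤ n) (hnd : n + 2 ≤ d)
    (hvar : Function.Injective P.var) (hnext : Function.Injective P.next)
    (hpert : P.pertVar ∉ Set.range P.var) (hodd : Function.Injective (P.logOddVars d))
    {t : Finset (Fin n)} (ht : t ∉ Set.range (P.logOddVars d)) (hcard : Fintype.card σ ≤ 2 ^ n) :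
    ∃ f : σ → Finset (Fin n), f P.pertVar = t ∧ { P with oddVars := f }.IsAdmissible d := by
  obtain ⟨f, hf, hext⟩ := exists_injective_extension (Fin.cons_injective_iff.mpr ⟨hpert, hvar⟩)
    (Fin.cons_injective_iff.mpr ⟨ht, hodd⟩) (by simpa using hcard)
  refine ⟨f, hext 0, hn, hnd, hvar, hnext, hf, hpert, fun i j => ?_⟩
  have hi : f (P.var i) = P.logOddVars d i := hext i.succ
  simp only [hi, logOddVars, Finset.mem_filter_univ]
  rfl

variable (hP : P.IsAdmissible d)

include hP

lemma IsAdmissible.monomialOf_apply_self_ne_zero (s : σ) : P.monomialOf d s s ≠ 0 := by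
  have := hP.two_le
  have := hP.add_two_le
  by_cases hs : s ∈ Set.range P.var
  · obtain ⟨i, rfl⟩ := hs
    rw [hP.monomialOf_var, logMonomial, Finsupp.add_apply, Finsupp.single_eq_same]
    omega
  · have := hP.card_oddVars_add_two_le s
    rw [monomialOf_of_notMem hs, freeMonomial, Finsupp.add_apply, Finsupp.single_eq_same]
    omega

lemma IsAdmissible.pertMonomial_apply_var_ne_zero (i : Fin (n + 1)) :
    P.pertMonomial d (P.var i) ≠ 0 := by
  have := hP.two_le
  have : Nontrivial (Fin (n + 1)) := Fin.nontrivial_iff_two_le.mpr (by omega)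
  obtain ⟨j, hj⟩ := exists_ne i
  have hle := hP.single_add_single_le_pertMonomial hj.symm (P.var i)
  rw [Finsupp.add_apply, Finsupp.single_eq_same] at hle
  omega

lemma IsAdmissible.monomialOf_ne_pertMonomial (s : σ) : P.monomialOf d s ≠ P.pertMonomial d := by
  intro h
  have heven := hP.even_monomialOf_apply s hP.pertVar_notMem
  rw [h, hP.pertMonomial_apply_pertVar] at heven
  exact Nat.not_even_one heven

end OddVars

namespace IsAdmissible

variable {σ : Type*} [Fintype σ] {n d : ℕ} {P : MonomialPattern σ n} (hP : P.IsAdmissible d)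

lemma coeff_monomialOf_poly (R : Type*) [CommRing R] (s : σ) :
    coeff (P.monomialOf d s) (hP.specialForm.poly R) = 1 := by
  classical
  rw [hP.poly_specialForm, coeff_add, coeff_sum, coeff_monomial,
    if_neg (hP.monomialOf_ne_pertMonomial s).symm, add_zero]
  simp only [coeff_monomial, hP.monomialOf_injective.eq_iff, Finset.sum_ite_eq',
    Finset.mem_univ, if_true]

lemma pderiv_pertVar_poly (R : Type*) [CommRing R] [CharP R 2] :
    pderiv P.pertVar (hP.specialForm.poly R) =
      monomial (P.pertMonomial d - Finsupp.single P.pertVar 1) 1 := by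
  have hvanish (s : σ) : ((P.monomialOf d s P.pertVar : ℕ) : R) = 0 :=
    (CharP.cast_eq_zero_iff R 2 _).mpr (hP.even_monomialOf_apply s hP.pertVar_notMem).two_dvd
  rw [hP.poly_specialForm, map_add, map_sum, pderiv_monomial, hP.pertMonomial_apply_pertVar,
    Nat.cast_one, mul_one, Finset.sum_eq_zero, zero_add]
  intro s _
  rw [pderiv_monomial, hvanish, mul_zero, monomial_zero]

lemma isChartAdapted {N : ℕ} {P : MonomialPattern (Fin (N + 2)) n} (hP : P.IsAdmissible d)
    {z : Fin (N + 1)} (hz : P.pertVar = z.succ) (hvar : P.var 0 = 0)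
    (hsingle : Finsupp.single 1 d ∈ Set.range (P.monomialOf d)) {κ : Type*} [Field κ] [CharP κ 2]
    (hirr : Irreducible (dehomogenize (hP.specialForm.poly κ))) :
    hP.specialForm.IsChartAdapted z κ := by
  have hpderiv : pderiv z (dehomogenize (hP.specialForm.poly κ)) =
      monomial (Finsupp.tail (P.pertMonomial d - Finsupp.single P.pertVar 1)) 1 := by
    rw [pderiv_dehomogenize, ← hz, hP.pderiv_pertVar_poly, dehomogenize_monomial]
  obtain ⟨s, hs⟩ := hsingle
  exact
    { logVar_zero := hvar
      logVar_ne := fun j h => hP.pertVar_notMem ⟨j, h.trans hz.symm⟩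
      coeff_ne_zero := by
        rw [← hs, hP.coeff_monomialOf_poly]
        exact one_ne_zero
      irreducible := hirr
      pderiv_ne_zero := by
        rw [hpderiv, Ne, monomial_eq_zero]
        exact one_ne_zero
      degreeOf_pderiv_lt := by
        rw [hpderiv, degreeOf_monomial_eq _ _ one_ne_zero, Finsupp.tail_apply,
          Finsupp.tsub_apply]
        exact (Nat.sub_le _ _).trans_lt (hP.pertMonomial_apply_lt _) }

end IsAdmissible

end MonomialPattern

end StableIrrationality

namespace StableIrrationality

open Polynomial

universe u

section PlanePoint

variable {R : Type*} [CommRing R] {N : ℕ}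

/-- The point `(1 : X : v : 0 : … : 0)`. Specializing a form to it reduces irreducibility to
Eisenstein's criterion. -/
def planePoint (v : R) : Fin (N + 2) → R[X] :=
  homogeneousCoords (Fin.cons X fun i => C (if i.val = 0 then v else 0))

lemma planePoint_zero (v : R) : planePoint v (0 : Fin (N + 2)) = 1 := rfl

lemma planePoint_one (v : R) : planePoint v (1 : Fin (N + 2)) = X := rfl

lemma planePoint_succ_succ (v : R) (i : Fin N) :
    planePoint v i.succ.succ = if i.val = 0 then C v else 0 :=
  (apply_ite C _ v 0).trans (by rw [C_0])

lemma planePoint_of_two_lt (v : R) {s : Fin (N + 2)} (hs : 2 < s.val) : planePoint v s = 0 := by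
  obtain ⟨i, rfl⟩ := Fin.exists_succ_eq.mpr (fun h => by simp [h] at hs : s ≠ 0)
  obtain ⟨i, rfl⟩ := Fin.exists_succ_eq.mpr (fun h => by simp [h] at hs : i ≠ 0)
  rw [planePoint_succ_succ, if_neg]
  rw [Fin.val_succ, Fin.val_succ] at hs
  omega

lemma SpecialForm.irreducible_dehomogenize_of_eval_planePoint {κ : Type*} [Field κ] {n d : ℕ}
    (c : SpecialForm (Fin (N + 2)) n d) (hd : 0 < d)
    (hcoeff : MvPolynomial.coeff (Finsupp.single 1 d) (c.poly κ) ≠ 0) (v : κ[X]) {g : κ[X]}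
    (hg : X ∣ g) (hg2 : ¬ X ^ 2 ∣ g)
    (heval : MvPolynomial.eval (planePoint v) (c.poly κ[X][X]) = X ^ d + C g) :
    Irreducible (dehomogenize (c.poly κ)) := by
  refine irreducible_dehomogenize_of_irreducible_eval₂ hd (c.isHomogeneous_poly κ) hcoeff C
    (fun i => if i.val = 0 then v else 0) ?_
  rw [← MvPolynomial.eval_map, c.map_poly]
  exact heval ▸ irreducible_X_pow_add_C prime_X hd hg hg2

lemma monomialEval_eq_zero {σ M : Type*} [CommMonoidWithZero M] {m : σ →₀ ℕ} {w : σ → M} {s : σ}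
    (hm : m s ≠ 0) (hw : w s = 0) : monomialEval m w = 0 :=
  Finset.prod_eq_zero (Finsupp.mem_support_iff.mpr hm) (by simp only [hw, zero_pow hm])

end PlanePoint

namespace MonomialPattern

variable {N n d : ℕ}

lemma IsAdmissible.eval_poly_planePoint {P : MonomialPattern (Fin (N + 2)) n}
    (hP : P.IsAdmissible d) (hN : 0 < N) {R : Type*} [CommRing R] (v : R) :
    MvPolynomial.eval (planePoint v) (hP.specialForm.poly R[X]) =
      monomialEval (P.monomialOf d 0) (planePoint v) +
      monomialEval (P.monomialOf d 1) (planePoint v) +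
      monomialEval (P.monomialOf d (Fin.succ (Fin.succ ⟨0, hN⟩))) (planePoint v) +
      monomialEval (P.pertMonomial d) (planePoint v) := by
  have heval (m : Fin (N + 2) →₀ ℕ) : MvPolynomial.eval (planePoint v)
      (MvPolynomial.monomial m (1 : R[X])) = monomialEval m (planePoint v) := by
    rw [MvPolynomial.eval_monomial, one_mul, monomialEval]
  rw [hP.poly_specialForm, map_add, map_sum]
  simp only [heval]
  rw [Fin.sum_univ_succ, Fin.sum_univ_succ, Finset.sum_eq_single ⟨0, hN⟩, ← add_assoc]
  · rfl
  · intro i _ hi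
    refine monomialEval_eq_zero (hP.monomialOf_apply_self_ne_zero _) ?_
    rw [planePoint_succ_succ, if_neg (Fin.val_ne_of_ne hi)]
  · exact fun h => absurd (Finset.mem_univ _) h

section Fermat

/-- The pattern with monomials `x_i ^ d` for `i ≤ n`, for odd degrees `d`. -/
def fermat (hn : n ≤ N) (f : Fin (N + 2) → Finset (Fin n)) : MonomialPattern (Fin (N + 2)) n where
  var := Fin.castLE (by omega)
  next := id
  oddVars := f
  pertVar := Fin.last _

variable (hn : n ≤ N) (f : Fin (N + 2) → Finset (Fin n))

lemma logMonomial_fermat (hd : 0 < d) (i : Fin (n + 1)) :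
    (fermat hn f).logMonomial d i = Finsupp.single ((fermat hn f).var i) d := by
  rw [logMonomial, show (fermat hn f).next i = i from rfl, ← Finsupp.single_add,
    Nat.sub_add_cancel hd]

lemma var_fermat_injective : Function.Injective (fermat hn f).var :=
  Fin.castLE_injective (by omega)

lemma mem_logOddVars_fermat (hd : Odd d) {i : Fin (n + 1)} {j : Fin n} :
    j ∈ (fermat hn f).logOddVars d i ↔ i = j.succ := by
  simp only [logOddVars, Finset.mem_filter_univ, logMonomial_fermat hn f hd.pos,
    Finsupp.single_apply, (var_fermat_injective hn f).eq_iff]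
  split_ifs with h <;> simp [h, hd]

lemma logOddVars_fermat_injective (hd : Odd d) :
    Function.Injective ((fermat hn f).logOddVars d) := by
  intro i i' h
  simp only [Finset.ext_iff, mem_logOddVars_fermat hn f hd] at h
  cases i using Fin.cases with
  | zero =>
    cases i' using Fin.cases with
    | zero => rfl
    | succ j => exact (h j).mpr rfl
  | succ j => exact ((h j).mp rfl).symm

lemma exists_isAdmissible_fermat (hn2 : 2 ≤ n) (hnd : n + 2 ≤ d) (hcard : N + 2 ≤ 2 ^ n)
    (hd : Odd d) : ∃ f, (fermat hn f).IsAdmissible d := by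
  have hpert : Fin.last (N + 1) ∉ Set.range (fermat hn fun _ => ∅).var := by
    rintro ⟨i, hi⟩
    have := congrArg Fin.val hi
    simp only [fermat, Fin.val_castLE, Fin.val_last] at this
    omega
  have huniv : Finset.univ ∉ Set.range ((fermat hn fun _ => ∅).logOddVars d) := by
    rintro ⟨i, hi⟩
    simp only [Finset.ext_iff, mem_logOddVars_fermat hn _ hd, Finset.mem_univ, iff_true] at hi
    have h01 := (hi ⟨0, by omega⟩).symm.trans (hi ⟨1, by omega⟩)
    simp at h01
  obtain ⟨f, -, hf⟩ := exists_isAdmissible hn2 hnd (var_fermat_injective hn _)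
    Function.injective_id hpert (logOddVars_fermat_injective hn _ hd) huniv (by simpa using hcard)
  exact ⟨f, hf⟩

lemma IsAdmissible.monomialOf_fermat {hn : n ≤ N} {f : Fin (N + 2) → Finset (Fin n)}
    (hP : (fermat hn f).IsAdmissible d) {s : Fin (N + 2)} (hs : s.val ≤ n) :
    (fermat hn f).monomialOf d s = Finsupp.single s d := by
  have hvar : (fermat hn f).var ⟨s.val, by omega⟩ = s := rfl
  have := hP.add_two_le
  rw [← hvar, hP.monomialOf_var, logMonomial_fermat hn f (by omega)]

include hn in
lemma exists_isChartAdapted_of_odd (hn2 : 2 ≤ n) (hnd : n + 2 ≤ d) (hcard : N + 2 ≤ 2 ^ n)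
    (hd : Odd d) : ∃ (c : SpecialForm (Fin (N + 2)) n d) (z : Fin (N + 1)),
      ∀ (κ : Type u) [Field κ] [CharP κ 2], c.IsChartAdapted z κ := by
  obtain ⟨f, hP⟩ := exists_isAdmissible_fermat hn hn2 hnd hcard hd
  have hmon1 : (fermat hn f).monomialOf d 1 = Finsupp.single 1 d :=
    hP.monomialOf_fermat (by rw [Fin.val_one]; omega)
  refine ⟨hP.specialForm, Fin.last N, fun κ _ _ => hP.isChartAdapted rfl rfl ⟨1, hmon1⟩ ?_⟩
  refine hP.specialForm.irreducible_dehomogenize_of_eval_planePoint (by omega) ?_ (1 + X)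
    (g := 1 + (1 + X) ^ d) ?_ (fun h => ?_) ?_
  · rw [← hmon1, hP.coeff_monomialOf_poly]
    exact one_ne_zero
  · rw [X_dvd_iff, coeff_zero_eq_eval_zero]
    simp [CharTwo.add_self_eq_zero]
  · have hcoeff := X_pow_dvd_iff.mp h 1 one_lt_two
    rw [coeff_add, coeff_one_add_X_pow, coeff_one, if_neg one_ne_zero, zero_add,
      Nat.choose_one_right, CharP.cast_eq_zero_iff κ 2] at hcoeff
    exact Nat.not_even_iff_odd.mpr hd (even_iff_two_dvd.mpr hcoeff)
  · have hmon2 := hP.monomialOf_fermat (s := Fin.succ (Fin.succ ⟨0, by omega⟩)) hn2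
    have hlast : planePoint (1 + X : κ[X]) (Fin.last (N + 1)) = 0 :=
      planePoint_of_two_lt _ (by rw [Fin.val_last]; omega)
    have hpert : (fermat hn f).pertMonomial d (Fin.last (N + 1)) ≠ 0 :=
      hP.pertMonomial_apply_pertVar.trans_ne one_ne_zero
    rw [hP.eval_poly_planePoint (by omega), monomialEval_eq_zero hpert hlast,
      hP.monomialOf_fermat (Nat.zero_le n), hmon1, hmon2,
      monomialEval_single, monomialEval_single, monomialEval_single, planePoint_zero,
      planePoint_one, planePoint_succ_succ, if_pos rfl]
    simp only [map_add, map_pow, map_one]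
    ring

end Fermat

section Cyclic

/-- The pattern with monomials `x_i ^ (d - 1) * x_{next i}`, the `n + 1` variables being
cyclically ordered and `1` being left out, for even degrees `d`. -/
def cyclic (hn : n ≤ N) (f : Fin (N + 2) → Finset (Fin n)) : MonomialPattern (Fin (N + 2)) n where
  var := Fin.cons 0 fun j => (Fin.castLE hn j).succ.succ
  next := (· + 1)
  oddVars := f
  pertVar := 1

variable (hn : n ≤ N) (f : Fin (N + 2) → Finset (Fin n))

lemma var_cyclic_succ (j : Fin n) : (cyclic hn f).var j.succ = (Fin.castLE hn j).succ.succ := rfl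

lemma var_cyclic_injective : Function.Injective (cyclic hn f).var := by
  refine Fin.cons_injective_iff.mpr ⟨fun ⟨j, hj⟩ => Fin.succ_ne_zero _ hj, ?_⟩
  exact (Fin.succ_injective _).comp ((Fin.succ_injective _).comp (Fin.castLE_injective hn))

lemma one_notMem_range_var_cyclic : 1 ∉ Set.range (cyclic hn f).var := by
  rintro ⟨i, hi⟩
  cases i using Fin.cases with
  | zero => exact zero_ne_one hi
  | succ j =>
    rw [var_cyclic_succ, ← Fin.succ_zero_eq_one, Fin.succ_inj] at hi
    exact Fin.succ_ne_zero _ hi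

lemma mem_logOddVars_cyclic (hd : Even d) (hd0 : 0 < d) (hn0 : 0 < n) {i : Fin (n + 1)}
    {j : Fin n} : j ∈ (cyclic hn f).logOddVars d i ↔ i = j.succ ∨ i + 1 = j.succ := by
  have hodd : Odd (d - 1) := Nat.Even.sub_odd hd0 hd odd_one
  have hne : i + 1 ≠ i := by simpa using hn0.ne'
  simp only [logOddVars, Finset.mem_filter_univ, logMonomial, Finsupp.add_apply,
    Finsupp.single_apply, (var_cyclic_injective hn f).eq_iff, show (cyclic hn f).next i = i + 1
    from rfl]
  split_ifs with h h' h'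
  · exact absurd (h'.trans h.symm) hne
  · simp [h, hodd]
  · simp [h']
  · simp [h, h']

lemma logOddVars_cyclic_injective (hd : Even d) (hd0 : 0 < d) (hn2 : 2 ≤ n) :
    Function.Injective ((cyclic hn f).logOddVars d) := by
  intro i i' h
  simp only [Finset.ext_iff, mem_logOddVars_cyclic hn f hd hd0 (by omega), Fin.ext_iff,
    Fin.val_add_one, Fin.val_last, Fin.val_succ] at h ⊢
  have hmem (k : ℕ) (hk : k < n) := h ⟨k, hk⟩
  have h1 := hmem (i - 1)
  have h2 := hmem (i' - 1)
  have h3 := hmem i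
  have h4 := hmem i'
  grind

lemma exists_isAdmissible_cyclic (hn2 : 2 ≤ n) (hnd : n + 2 ≤ d) (hcard : N + 2 ≤ 2 ^ n)
    (hd : Even d) : ∃ f, f 1 = ∅ ∧ (cyclic hn f).IsAdmissible d := by
  have hempty : ∅ ∉ Set.range ((cyclic hn fun _ => ∅).logOddVars d) := by
    rintro ⟨i, hi⟩
    simp only [Finset.ext_iff, mem_logOddVars_cyclic hn _ hd (by omega) (by omega),
      Finset.notMem_empty, iff_false, not_or] at hi
    cases i using Fin.cases with
    | zero =>
      have : NeZero n := ⟨by omega⟩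
      refine (hi 0).2 ?_
      rw [zero_add, Fin.succ_zero_eq_one']
    | succ j => exact (hi j).1 rfl
  exact exists_isAdmissible hn2 hnd (var_cyclic_injective hn _) (add_left_injective 1)
    (one_notMem_range_var_cyclic hn _) (logOddVars_cyclic_injective hn _ hd (by omega) hn2) hempty
    (by simpa using hcard)

lemma monomialOf_cyclic_one {f : Fin (N + 2) → Finset (Fin n)} (hf : f 1 = ∅) (hd : Even d) :
    (cyclic hn f).monomialOf d 1 = Finsupp.single 1 d := by
  rw [monomialOf_of_notMem (one_notMem_range_var_cyclic hn f), freeMonomial, cofactor, squarefree,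
    show (cyclic hn f).oddVars 1 = ∅ from hf]
  simp [Nat.even_iff.mp hd]

lemma IsAdmissible.eval_poly_cyclic {hn : n ≤ N} {f : Fin (N + 2) → Finset (Fin n)}
    (hP : (cyclic hn f).IsAdmissible d) (hf : f 1 = ∅) (hd : Even d) {R : Type*} [CommRing R]
    (v : R) : MvPolynomial.eval (planePoint v) (hP.specialForm.poly R[X]) = X ^ d + C v := by
  have := hP.two_le
  have := hP.add_two_le
  obtain ⟨n, rfl⟩ : ∃ k, n = k + 2 := ⟨n - 2, by omega⟩
  have hvar2 : planePoint v ((cyclic hn f).var 2) = 0 := by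
    rw [show (2 : Fin (n + 2 + 1)) = Fin.succ 1 from rfl, var_cyclic_succ, planePoint_succ_succ]
    exact if_neg one_ne_zero
  have hvar0 : (cyclic hn f).var 0 = 0 := rfl
  have hvar1 : planePoint v ((cyclic hn f).var 1) = C v := by
    rw [show (1 : Fin (n + 2 + 1)) = Fin.succ 0 from rfl, var_cyclic_succ, planePoint_succ_succ]
    exact if_pos rfl
  have hnext0 : (cyclic hn f).next 0 = 1 := zero_add 1
  have hnext1 : (cyclic hn f).next 1 = 2 := rfl
  have hmon0 : (cyclic hn f).monomialOf d 0 = (cyclic hn f).logMonomial d 0 := hP.monomialOf_var 0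
  have hmon2 : (cyclic hn f).monomialOf d (Fin.succ (Fin.succ ⟨0, by omega⟩)) =
    (cyclic hn f).logMonomial d 1 := hP.monomialOf_var 1
  rw [hP.eval_poly_planePoint (by omega), hmon0, hmon2,
    monomialEval_eq_zero (hP.pertMonomial_apply_var_ne_zero 2) hvar2,
    monomialOf_cyclic_one hn hf hd, monomialEval_single, planePoint_one, logMonomial, logMonomial,
    hnext0, hnext1]
  simp only [monomialEval_add, monomialEval_single]
  rw [hvar2, hvar0, hvar1, planePoint_zero]
  ring

include hn in
lemma exists_isChartAdapted_of_even (hn2 : 2 ≤ n) (hnd : n + 2 ≤ d) (hcard : N + 2 ≤ 2 ^ n)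
    (hd : Even d) : ∃ (c : SpecialForm (Fin (N + 2)) n d) (z : Fin (N + 1)),
      ∀ (κ : Type u) [Field κ] [CharP κ 2], c.IsChartAdapted z κ := by
  obtain ⟨f, hf, hP⟩ := exists_isAdmissible_cyclic hn hn2 hnd hcard hd
  have hmon1 := monomialOf_cyclic_one hn hf hd
  refine ⟨hP.specialForm, 0, fun κ _ _ => hP.isChartAdapted rfl rfl ⟨1, hmon1⟩ ?_⟩
  refine hP.specialForm.irreducible_dehomogenize_of_eval_planePoint (by omega) ?_ X dvd_rfl
    (fun h => ?_) (hP.eval_poly_cyclic hf hd X)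
  · rw [← hmon1, hP.coeff_monomialOf_poly]
    exact one_ne_zero
  · simpa using X_pow_dvd_iff.mp h 1 one_lt_two

end Cyclic

end MonomialPattern

lemma exists_card_logVars {N d : ℕ} (hN : 2 ≤ N) (hNd : N ≤ 2 ^ (d - 3)) :
    ∃ n, 2 ≤ n ∧ n + 2 ≤ d ∧ n ≤ N ∧ N + 2 ≤ 2 ^ n := by
  have hpow (m : ℕ) (hm : 2 ≤ m) : m + 2 ≤ 2 ^ m := by
    induction m, hm using Nat.le_induction with
    | base => rfl
    | succ m hm ih => rw [pow_succ]; omega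
  by_cases hcase : N + 2 ≤ d
  · exact ⟨N, hN, hcase, le_rfl, hpow N hN⟩
  have hd : 4 ≤ d := by
    by_contra! hlt
    rw [Nat.sub_eq_zero_of_le (by omega), pow_zero] at hNd
    omega
  have hdouble : 2 ^ (d - 2) = 2 ^ (d - 3) * 2 := by
    rw [← pow_succ]
    congr 1
    omega
  exact ⟨d - 2, by omega, by omega, by omega, by omega⟩

lemma exists_isChartAdapted {N d : ℕ} (hN : 2 ≤ N) (hNd : N ≤ 2 ^ (d - 3)) :
    ∃ (n : ℕ) (c : SpecialForm (Fin (N + 2)) n d) (z : Fin (N + 1)),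
      ∀ (κ : Type u) [Field κ] [CharP κ 2], c.IsChartAdapted z κ := by
  obtain ⟨n, hn2, hnd, hn, hcard⟩ := exists_card_logVars hN hNd
  rcases Nat.even_or_odd d with hd | hd
  · exact ⟨n, MonomialPattern.exists_isChartAdapted_of_even hn hn2 hnd hcard hd⟩
  · exact ⟨n, MonomialPattern.exists_isChartAdapted_of_odd hn hn2 hnd hcard hd⟩

end StableIrrationality

namespace StableIrrationality

open IsLocalRing MvPolynomial

universe u

/-! ### Very general forms -/

section VeryGeneral

variable {σ : Type*} {d : ℕ}

lemma exists_isHomogeneous_eval_coeff_eq {R : Type*} [CommSemiring R]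
    (P : MvPolynomial {m : σ →₀ ℕ // m.degree = d} R)
    (x : {m : σ →₀ ℕ // m.degree = d} → R) :
    ∃ F : MvPolynomial σ R, F.IsHomogeneous d ∧ eval (fun m => coeff m.1 F) P = eval x P := by
  classical
  refine ⟨∑ m ∈ P.vars, monomial m.1 (x m),
    IsHomogeneous.sum _ _ _ fun m _ => isHomogeneous_monomial _ m.2, ?_⟩
  refine eval₂Hom_congr' rfl (fun m hm _ => ?_) rfl
  rw [coeff_sum, Finset.sum_eq_single_of_mem m hm, coeff_monomial, if_pos rfl]
  exact fun m' _ hne => by rw [coeff_monomial, if_neg (Subtype.coe_ne_coe.mpr hne)]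

-- Algebraic independence over the countable prime field amounts to avoiding countably many
-- hypersurfaces of the space of forms.
lemma veryGeneral_of_hasIndependentCoeffs {p : ℕ} [Fact p.Prime] {k : Type*} [Field k] [Infinite k]
    [CharP k p] {ν : ℕ} {Q : MvPolynomial (Fin ν) k → Prop}
    (h : ∀ F, F.IsHomogeneous d → HasIndependentCoeffs p d F → Q F) :
    Paper.VeryGeneral k ν d Q := by
  let φ : ZMod p →+* k := ZMod.castHom dvd_rfl k
  let I := {m : Fin ν →₀ ℕ // m.degree = d}
  have : Countable (MvPolynomial I (ZMod p)) :=
    Cardinal.mk_le_aleph0_iff.mp (cardinalMk_le_max.trans (by simp))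
  have : Nonempty {P : MvPolynomial I (ZMod p) // P ≠ 0} := ⟨1, one_ne_zero⟩
  obtain ⟨enum, henum⟩ := exists_surjective_nat {P : MvPolynomial I (ZMod p) // P ≠ 0}
  refine ⟨fun i => rename Subtype.val (map φ (enum i).1), fun i => ?_, fun F hF hG => h F hF ?_⟩
  · have hmap : map φ (enum i).1 ≠ 0 :=
      (map_ne_zero_iff _ (map_injective φ φ.injective)).mpr (enum i).2
    obtain ⟨x, hx⟩ := exists_eval_ne_zero hmap
    obtain ⟨F, hF, heval⟩ := exists_isHomogeneous_eval_coeff_eq (map φ (enum i).1) x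
    refine ⟨F, hF, ?_⟩
    rw [eval_rename]
    exact heval.trans_ne hx
  · refine (injective_iff_map_eq_zero _).mpr fun P hP => by_contra fun hne => ?_
    obtain ⟨i, hi⟩ := henum ⟨P, hne⟩
    refine hG i ?_
    simp only [hi, eval_rename, eval_map]
    exact hP

end VeryGeneral

/-! ### Smooth plane curves -/

section SmoothForm

/-- Smoothness of the projective hypersurface of `F` after the base change `φ`: the only common
zero of `F` and its partial derivatives is the origin. -/
def IsSmoothForm {σ R κ : Type*} [CommRing R] [CommRing κ] (φ : R →+* κ) (F : MvPolynomial σ R) :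
    Prop :=
  ∀ v : σ → κ, eval₂ φ v F = 0 → (∀ i, eval₂ φ v (pderiv i F) = 0) → v = 0

lemma exists_residue_zeros {σ K : Type*} [Finite σ] [Field K] (O : ValuationSubring K) {v : σ → K}
    (hv : v ≠ 0) :
    ∃ q : σ → ResidueField O, q ≠ 0 ∧ ∀ (e : ℕ) (H : MvPolynomial σ O), H.IsHomogeneous e →
      eval₂ (algebraMap O K) v H = 0 → eval₂ (residue O) q H = 0 := by
  have := Fintype.ofFinite σ
  obtain ⟨i, hi⟩ := Function.ne_iff.mp hv
  obtain ⟨a, ha, hmem, j, -, hval⟩ := exists_div_mem_and_valuation_div_eq_one (V := O)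
    (T := Finset.univ) (p := v) ⟨i, Finset.mem_univ i, hi⟩
  let w (s : σ) : O := ⟨v s / a, hmem s (Finset.mem_univ s)⟩
  refine ⟨fun s => residue O (w s), Function.ne_iff.mpr ⟨j, ?_⟩, fun e H hH hzero => ?_⟩
  · exact residue_ne_zero_iff_valuation_eq_one.mpr hval
  · have hscale := eval₂_mul_left_of_isHomogeneous (algebraMap O K) hH a fun s => (w s : K)
    simp only [w, mul_div_cancel₀ _ ha, hzero] at hscale
    have hw : eval (fun s => w s) H = 0 := by
      refine IsFractionRing.injective O K ?_
      rw [← eval₂_id, hom_eval₂, RingHomCompTriple.comp_eq, map_zero]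
      exact (mul_eq_zero_iff_left (pow_ne_zero e ha)).mp hscale.symm
    rw [← map_zero (residue O), ← hw, ← eval₂_id, hom_eval₂, RingHom.comp_id]

lemma HasIndependentCoeffs.isSmoothForm {p : ℕ} [Fact p.Prime] {σ : Type*} [Finite σ] {k : Type*}
    {K : Type u} [Field k] [CharP k p] [Field K] (ι : k →+* K) {d : ℕ} {F : MvPolynomial σ k}
    (hF : F.IsHomogeneous d) (hind : HasIndependentCoeffs p d F) {G : MvPolynomial σ (ZMod p)}
    (hG : G.IsHomogeneous d)
    (hsmooth : ∀ (κ : Type u) [Field κ] [CharP κ p], IsSmoothForm (ZMod.castHom dvd_rfl κ) G) :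
    IsSmoothForm ι F := by
  intro v hzero hpderiv
  by_contra hv
  obtain ⟨O, _, H, hH, hHF, hHG⟩ := hind.exists_specialization ι hF hG
  obtain ⟨q, hq, hres⟩ := exists_residue_zeros O hv
  refine hq (hsmooth (ResidueField O) q ?_ fun i => ?_)
  · rw [← eval_map, ← hHG, eval_map]
    refine hres d H hH ?_
    rw [← eval_map, hHF, eval_map, hzero]
  · rw [← eval_map, ← pderiv_map, ← hHG, pderiv_map, eval_map]
    refine hres (d - 1) _ hH.pderiv ?_
    rw [← eval_map, ← pderiv_map, hHF, pderiv_map, eval_map, hpderiv]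

lemma isSmoothForm_sum_X_pow {σ R κ : Type*} [Fintype σ] [CommRing R] [Field κ] (φ : R →+* κ)
    {d : ℕ} (hdκ : (d : κ) ≠ 0) : IsSmoothForm φ (∑ i : σ, X i ^ d) := by
  classical
  intro v _ hpderiv
  funext i
  have hi := hpderiv i
  rw [map_sum, Finset.sum_eq_single_of_mem i (Finset.mem_univ i), Derivation.leibniz_pow,
    pderiv_X_self] at hi
  · simp only [smul_eq_mul, mul_one, nsmul_eq_mul, eval₂_mul, eval₂_pow, eval₂_X, eval₂_natCast,
      mul_eq_zero, hdκ, false_or] at hi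
    exact eq_zero_of_pow_eq_zero hi
  · intro j _ hji
    rw [Derivation.leibniz_pow, pderiv_X_of_ne hji, smul_zero, smul_zero]

/-- The Klein curve of degree `e + 2`, whose equation is cyclic in the three variables. -/
def kleinForm (R : Type*) [CommRing R] (e : ℕ) : MvPolynomial (Fin 3) R :=
  X 0 ^ (e + 1) * X 1 + X 1 ^ (e + 1) * X 2 + X 2 ^ (e + 1) * X 0

lemma isHomogeneous_kleinForm (R : Type*) [CommRing R] (e : ℕ) :
    (kleinForm R e).IsHomogeneous (e + 2) := by
  have hterm (i j : Fin 3) : (X i ^ (e + 1) * X j : MvPolynomial (Fin 3) R).IsHomogeneous (e + 2) :=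
    (isHomogeneous_X_pow i (e + 1)).mul (isHomogeneous_X R j)
  exact ((hterm _ _).add (hterm _ _)).add (hterm _ _)

lemma isSmoothForm_kleinForm {R κ : Type*} [CommRing R] [Field κ] [CharP κ 2] (φ : R →+* κ) {e : ℕ}
    (he : Even e) (he0 : e ≠ 0) : IsSmoothForm φ (kleinForm R e) := by
  intro v hzero hpderiv
  have heκ : (e : κ) = 0 := (CharP.cast_eq_zero_iff κ 2 e).mpr he.two_dvd
  have hpderiv0 : v 0 ^ e * v 1 + v 2 ^ (e + 1) = 0 := by
    simpa [kleinForm, pderiv_X, Pi.single_apply, heκ, mul_comm] using hpderiv 0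
  have hpderiv1 : v 1 ^ e * v 2 + v 0 ^ (e + 1) = 0 := by
    simpa [kleinForm, pderiv_X, Pi.single_apply, heκ, mul_comm, add_comm] using hpderiv 1
  have hpderiv2 : v 2 ^ e * v 0 + v 1 ^ (e + 1) = 0 := by
    simpa [kleinForm, pderiv_X, Pi.single_apply, heκ, mul_comm, add_comm] using hpderiv 2
  simp only [kleinForm, eval₂_add, eval₂_mul, eval₂_pow, eval₂_X] at hzero
  have hmul : v 0 ^ (e + 1) * v 1 = 0 := by
    linear_combination (-1 : κ) * hzero + v 0 * hpderiv0 + v 1 * hpderiv1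
  have h0 : v 0 = 0 := by
    rcases mul_eq_zero.mp hmul with h | h
    · exact eq_zero_of_pow_eq_zero h
    · rw [h, zero_pow he0, zero_mul, zero_add] at hpderiv1
      exact eq_zero_of_pow_eq_zero hpderiv1
  rw [h0, zero_pow he0, zero_mul, zero_add] at hpderiv0
  have h2 := eq_zero_of_pow_eq_zero hpderiv0
  rw [h0, mul_zero, zero_add] at hpderiv2
  have h1 := eq_zero_of_pow_eq_zero hpderiv2
  funext i
  fin_cases i <;> assumption

theorem HasIndependentCoeffs.isSmoothForm_of_plane {k K : Type*} [Field k] [CharP k 2] [Field K]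
    (ι : k →+* K) {d : ℕ} (hd : 3 ≤ d) {F : MvPolynomial (Fin 3) k} (hF : F.IsHomogeneous d)
    (hind : HasIndependentCoeffs 2 d F) : IsSmoothForm ι F := by
  rcases Nat.even_or_odd d with heven | hodd
  · obtain ⟨e, rfl⟩ : ∃ e, d = e + 2 := ⟨d - 2, by omega⟩
    have he : Even e := by simpa [parity_simps] using heven
    exact hind.isSmoothForm ι hF (isHomogeneous_kleinForm _ e) fun κ _ _ =>
      isSmoothForm_kleinForm _ he (by omega)
  · refine hind.isSmoothForm ι hF (G := ∑ i, X i ^ d)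
      (IsHomogeneous.sum _ _ _ fun i _ => isHomogeneous_X_pow i d) fun κ _ _ =>
      isSmoothForm_sum_X_pow _ ?_
    rw [Ne, CharP.cast_eq_zero_iff κ 2, ← even_iff_two_dvd, Nat.not_even_iff_odd]
    exact hodd

end SmoothForm

end StableIrrationality

namespace StableIrrationality

open MvPolynomial

universe u

/-! ### Rational paths on smooth plane curves -/

section CrossProduct

open Matrix

variable {R : Type*} [CommRing R]

lemma cross_eq_smul_of_dotProduct_eq_zero {g h G c : Fin 3 → R} (hg : g ⬝ᵥ G = 0)
    (hh : h ⬝ᵥ G = 0) (hc : c ⬝ᵥ G = 1) : g ⨯₃ h = (c ⬝ᵥ g ⨯₃ h) • G := by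
  have hcross : G ⨯₃ (g ⨯₃ h) = 0 := by
    rw [cross_cross_eq_smul_sub_smul', dotProduct_comm, hh, hg, zero_smul, zero_smul, sub_zero]
  have hdouble := cross_cross_eq_smul_sub_smul' c G (g ⨯₃ h)
  rw [hcross, map_zero, dotProduct_comm G c, hc, one_smul] at hdouble
  exact (sub_eq_zero.mp hdouble.symm).symm

/-- The vector of Wronskians `g i * D (g j) - g j * D (g i)` of a triple of functions; it measures
whether the point with homogeneous coordinates `g` moves under `D`. -/
def wronskianVec (D : Derivation ℤ R R) (g : Fin 3 → R) : Fin 3 → R := g ⨯₃ fun i => D (g i)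

lemma wronskianVec_smul (D : Derivation ℤ R R) (a : R) (g : Fin 3 → R) :
    wronskianVec D (a • g) = a ^ 2 • wronskianVec D g := by
  have hD : (fun i => D ((a • g) i)) = a • (fun i => D (g i)) + D a • g := by
    funext i
    simp [mul_comm]
  rw [wronskianVec, hD, map_add, map_smul, map_smul, map_smul, LinearMap.smul_apply,
    LinearMap.smul_apply, cross_self, smul_zero, smul_zero, add_zero, smul_smul, sq]
  rfl

lemma wronskianVec_eq_zero_of_forall_eq_zero {D : Derivation ℤ R R} {g : Fin 3 → R}
    (hg : ∀ i, D (g i) = 0) : wronskianVec D g = 0 := by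
  rw [wronskianVec, funext hg]
  exact map_zero _

lemma derivation_eq_zero_of_wronskianVec_eq_zero {D : Derivation ℤ R R} {x : Fin 2 → R}
    (h : wronskianVec D (homogeneousCoords x) = 0) (i : Fin 2) : D (x i) = 0 := by
  have h1 : D (homogeneousCoords x 1) = 0 := by
    simpa [wronskianVec, cross_apply] using congrFun h 2
  have h2 : D (homogeneousCoords x 2) = 0 := by
    simpa [wronskianVec, cross_apply] using congrFun h 1
  fin_cases i
  exacts [h1, h2]

lemma eval_coeffwiseDerivation (D : Derivation ℤ R R) {x : R} (hx : D x = 0) (q : Polynomial R) :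
    (coeffwiseDerivation D q).eval x = D (q.eval x) := by
  rw [Polynomial.eval_eq_sum_range' (Nat.lt_succ_of_le (natDegree_coeffwiseDerivation_le D q)),
    Polynomial.eval_eq_sum_range, map_sum]
  exact Finset.sum_congr rfl fun i _ => by simp [hx, mul_comm]

lemma eval_wronskianVec_coeffwiseDerivation (D : Derivation ℤ R R) {x : R} (hx : D x = 0)
    (g : Fin 3 → Polynomial R) :
    (fun i => (wronskianVec (coeffwiseDerivation D) g i).eval x) =
      wronskianVec D fun i => (g i).eval x := by
  have hminor (s t : Fin 3) :
      (g s * coeffwiseDerivation D (g t) - g t * coeffwiseDerivation D (g s)).eval x =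
        (g s).eval x * D ((g t).eval x) - (g t).eval x * D ((g s).eval x) := by
    rw [Polynomial.eval_sub, Polynomial.eval_mul, Polynomial.eval_mul,
      eval_coeffwiseDerivation D hx, eval_coeffwiseDerivation D hx]
  funext i
  fin_cases i
  exacts [hminor 1 2, hminor 2 0, hminor 0 1]

lemma natDegree_wronskianVec_le (D : Derivation ℤ R R) {g : Fin 3 → Polynomial R} {b : ℕ}
    (hg : ∀ i, (g i).natDegree ≤ b) (i : Fin 3) :
    (wronskianVec (coeffwiseDerivation D) g i).natDegree ≤ 2 * b := by
  have hminor (s t : Fin 3) :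
      (g s * coeffwiseDerivation D (g t) - g t * coeffwiseDerivation D (g s)).natDegree ≤
        2 * b := by
    rw [two_mul]
    have hD (s) := (natDegree_coeffwiseDerivation_le D (g s)).trans (hg s)
    exact (Polynomial.natDegree_sub_le _ _).trans (max_le
      (Polynomial.natDegree_mul_le_of_le (hg s) (hD t))
      (Polynomial.natDegree_mul_le_of_le (hg t) (hD s)))
  fin_cases i
  exacts [hminor 1 2, hminor 2 0, hminor 0 1]

end CrossProduct

section Gradient

open Matrix

variable {σ R A : Type*} [CommRing R] [CommRing A]

/-- The gradient of `F` at the point `f`. -/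
def gradient (φ : R →+* A) (f : σ → A) (F : MvPolynomial σ R) (i : σ) : A :=
  eval₂ φ f (pderiv i F)

lemma map_gradient {B : Type*} [CommRing B] (ψ : A →+* B) (φ : R →+* A) (f : σ → A)
    (F : MvPolynomial σ R) (i : σ) :
    ψ (gradient φ f F i) = gradient (ψ.comp φ) (fun s => ψ (f s)) F i :=
  hom_eval₂ _ _ _ _

variable [Fintype σ] (φ : R →+* A) (f : σ → A)

lemma derivation_eval₂ {D : Derivation ℤ A A} (hD : ∀ x, D (φ x) = 0) (F : MvPolynomial σ R) :
    D (eval₂ φ f F) = (fun i => D (f i)) ⬝ᵥ gradient φ f F := by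
  classical
  simp only [dotProduct, gradient]
  induction F using MvPolynomial.induction_on with
  | C a => simp [hD]
  | add p q hp hq => simp only [eval₂_add, map_add, hp, hq, mul_add, Finset.sum_add_distrib]
  | mul_X p j hp =>
    have hterm (i : σ) : D (f i) * eval₂ φ f (pderiv i (p * X j)) =
        (if j = i then eval₂ φ f p * D (f j) else 0) +
          f j * (D (f i) * eval₂ φ f (pderiv i p)) := by
      rw [Derivation.leibniz, smul_eq_mul, smul_eq_mul, eval₂_add, eval₂_mul, eval₂_mul, eval₂_X]
      rcases eq_or_ne j i with rfl | hji
      · rw [pderiv_X_self, eval₂_one, if_pos rfl]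
        ring
      · rw [pderiv_X_of_ne hji, eval₂_zero, if_neg hji]
        ring
    rw [Finset.sum_congr rfl fun i _ => hterm i, Finset.sum_add_distrib, Finset.sum_ite_eq,
      if_pos (Finset.mem_univ _), ← Finset.mul_sum, ← hp, eval₂_mul, eval₂_X, Derivation.leibniz,
      smul_eq_mul, smul_eq_mul]

variable {φ f} {F : MvPolynomial σ R}

lemma dotProduct_gradient_self {d : ℕ} (hF : F.IsHomogeneous d) (hf : eval₂ φ f F = 0) :
    f ⬝ᵥ gradient φ f F = 0 := by
  have heuler := congrArg (eval₂ φ f) hF.sum_X_mul_pderiv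
  simpa [dotProduct, gradient, eval₂_sum, hf] using heuler

lemma exists_dotProduct_eq_one {A : Type u} [CommRing A] {G : σ → A}
    (hG : ∀ (K : Type u) [Field K] (ψ : A →+* K), ∃ i, ψ (G i) ≠ 0) :
    ∃ c : σ → A, c ⬝ᵥ G = 1 := by
  refine Ideal.mem_span_range_iff_exists_fun.mp ((Ideal.eq_top_iff_one _).mp ?_)
  by_contra hne
  obtain ⟨M, hM, hle⟩ := Ideal.exists_le_maximal _ hne
  let _ : Field (A ⧸ M) := Ideal.Quotient.field M
  obtain ⟨i, hi⟩ := hG (A ⧸ M) (Ideal.Quotient.mk M)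
  exact hi (Ideal.Quotient.eq_zero_iff_mem.mpr (hle (Ideal.subset_span ⟨i, rfl⟩)))

lemma exists_dotProduct_gradient_eq_one {A : Type u} [CommRing A] {φ : R →+* A} {f u : σ → A}
    (hsmooth : ∀ (K : Type u) [Field K] (ψ : R →+* K), IsSmoothForm ψ F)
    (hf : eval₂ φ f F = 0) (hu : u ⬝ᵥ f = 1) : ∃ c : σ → A, c ⬝ᵥ gradient φ f F = 1 := by
  refine exists_dotProduct_eq_one fun K _ ψ => ?_
  by_contra! hzero
  have hψf : (fun s => ψ (f s)) = 0 := by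
    refine hsmooth K (ψ.comp φ) _ ?_ fun i => ?_
    · rw [← hom_eval₂, hf, map_zero]
    · exact (map_gradient ψ φ f F i).symm.trans (hzero i)
  refine one_ne_zero (α := K) ?_
  rw [← map_one ψ, ← hu, RingHom.map_dotProduct]
  exact (congrArg _ hψf).trans (dotProduct_zero _)

end Gradient

section TopCoeff

variable {σ R A : Type*} [CommRing A] {f : σ → Polynomial A} {b : ℕ}

lemma natDegree_monomialEval_le (hf : ∀ s, (f s).natDegree ≤ b) (m : σ →₀ ℕ) :
    (monomialEval m f).natDegree ≤ m.degree * b := by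
  classical
  induction m using Finsupp.induction_linear with
  | zero => simp [monomialEval]
  | add m m' hm hm' =>
    rw [monomialEval_add, map_add, add_mul]
    exact Polynomial.natDegree_mul_le_of_le hm hm'
  | single s e =>
    rw [monomialEval_single, Finsupp.degree_single]
    exact Polynomial.natDegree_pow_le_of_le e (hf s)

lemma coeff_monomialEval (hf : ∀ s, (f s).natDegree ≤ b) (m : σ →₀ ℕ) :
    (monomialEval m f).coeff (m.degree * b) = monomialEval m fun s => (f s).coeff b := by
  classical
  induction m using Finsupp.induction_linear with
  | zero => simp [monomialEval]
  | add m m' hm hm' =>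
    rw [monomialEval_add, map_add, add_mul, Polynomial.coeff_mul_add_eq_of_natDegree_le
      (natDegree_monomialEval_le hf m) (natDegree_monomialEval_le hf m'), hm, hm', monomialEval_add]
  | single s e =>
    rw [monomialEval_single, Finsupp.degree_single, Polynomial.coeff_pow_of_natDegree_le (hf s),
      monomialEval_single]

lemma coeff_eval₂_of_isHomogeneous [CommRing R] (ι : R →+* A) (hf : ∀ s, (f s).natDegree ≤ b)
    {e : ℕ} {G : MvPolynomial σ R} (hG : G.IsHomogeneous e) :
    (eval₂ (Polynomial.C.comp ι) f G).coeff (e * b) = eval₂ ι (fun s => (f s).coeff b) G := by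
  rw [eval₂_eq, eval₂_eq, Polynomial.finsetSum_coeff]
  refine Finset.sum_congr rfl fun m hm => ?_
  rw [RingHom.comp_apply, Polynomial.coeff_C_mul,
    ← isHomogeneous_iff_degree_eq.mp hG m (mem_support_iff.mp hm)]
  exact congrArg _ (coeff_monomialEval hf m)

end TopCoeff

section PlaneCurve

open Matrix

lemma exists_eq_smul_and_dotProduct_eq_one {σ A : Type*} [Fintype σ] [CommRing A] [IsDomain A]
    [IsPrincipalIdealRing A] {f : σ → A} (hf : f ≠ 0) :
    ∃ (γ : A) (g u : σ → A), f = γ • g ∧ u ⬝ᵥ g = 1 := by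
  obtain ⟨γ, hγ⟩ := IsPrincipalIdealRing.principal (Ideal.span (Set.range f))
  have hdvd (s : σ) : γ ∣ f s :=
    Ideal.mem_span_singleton.mp (hγ.le (Ideal.subset_span ⟨s, rfl⟩))
  choose g hg using hdvd
  obtain rfl : f = γ • g := funext hg
  have hγ₀ : γ ≠ 0 := fun h => hf (by rw [h, zero_smul])
  obtain ⟨u, hu⟩ := Ideal.mem_span_range_iff_exists_fun.mp
    (hγ.ge (Ideal.mem_span_singleton_self γ))
  refine ⟨γ, g, u, rfl, mul_left_cancel₀ hγ₀ ?_⟩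
  rw [mul_one, ← smul_eq_mul, ← dotProduct_smul]
  exact hu

variable {k L : Type u} [Field k] [Field L] {ι : k →+* L} {d : ℕ} {F : MvPolynomial (Fin 3) k}
  {D : Derivation ℤ L L}

-- The gradient of degree `d - 1 ≥ 2` in the path dominates its quadratic Wronskian.
lemma natDegree_eq_zero_of_wronskianVec_eq_smul (hd : 3 ≤ d) (hF : F.IsHomogeneous d)
    (hsmooth : IsSmoothForm ι F) {g : Fin 3 → Polynomial L} (hg : g ≠ 0)
    (hgF : eval₂ (Polynomial.C.comp ι) g F = 0) {μ : Polynomial L} (hμ₀ : μ ≠ 0)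
    (hμ : wronskianVec (coeffwiseDerivation D) g = μ • gradient (Polynomial.C.comp ι) g F) :
    μ.natDegree = 0 := by
  obtain ⟨b, hdeg, s, hs⟩ := exists_natDegree_le_and_coeff_ne_zero (Function.ne_iff.mp hg)
  obtain ⟨i, hi⟩ : ∃ i, eval₂ ι (fun s => (g s).coeff b) (pderiv i F) ≠ 0 := by
    by_contra! hzero
    refine hs (congrFun (hsmooth _ ?_ hzero) s)
    rw [← coeff_eval₂_of_isHomogeneous ι hdeg hF, hgF, Polynomial.coeff_zero]
  rw [← coeff_eval₂_of_isHomogeneous ι hdeg hF.pderiv] at hi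
  have hgrad : gradient (Polynomial.C.comp ι) g F i ≠ 0 := fun h => hi (by
    rw [← gradient, h, Polynomial.coeff_zero])
  have hle := natDegree_wronskianVec_le D hdeg i
  rw [hμ, Pi.smul_apply, smul_eq_mul, Polynomial.natDegree_mul hμ₀ hgrad] at hle
  have hgrad_degree : (d - 1) * b ≤ (gradient (Polynomial.C.comp ι) g F i).natDegree :=
    Polynomial.le_natDegree_of_ne_zero hi
  have hmul : 2 * b ≤ (d - 1) * b := Nat.mul_le_mul_right b (by omega)
  omega

lemma wronskianVec_eq_zero_of_eval_zero (hd : 3 ≤ d) (hF : F.IsHomogeneous d)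
    (hsmooth : ∀ (K : Type u) [Field K] (φ : k →+* K), IsSmoothForm φ F) (hD : ∀ x, D (ι x) = 0)
    {g u : Fin 3 → Polynomial L} (hu : u ⬝ᵥ g = 1) (hgF : eval₂ (Polynomial.C.comp ι) g F = 0)
    (hzero : wronskianVec D (fun s => (g s).eval 0) = 0) :
    wronskianVec (coeffwiseDerivation D) g = 0 := by
  let φ : k →+* Polynomial L := Polynomial.C.comp ι
  have hDφ (x : k) : coeffwiseDerivation D (φ x) = 0 := by
    ext i
    simp only [φ, RingHom.comp_apply, coeff_coeffwiseDerivation, Polynomial.coeff_C]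
    split_ifs <;> simp [hD]
  obtain ⟨c, hc⟩ := exists_dotProduct_gradient_eq_one hsmooth hgF hu
  have hDg : (fun i => coeffwiseDerivation D (g i)) ⬝ᵥ gradient φ g F = 0 :=
    (derivation_eval₂ φ g hDφ F).symm.trans ((congrArg _ hgF).trans (map_zero _))
  have hμ := cross_eq_smul_of_dotProduct_eq_zero (dotProduct_gradient_self hF hgF) hDg hc
  set μ := c ⬝ᵥ g ⨯₃ fun i => coeffwiseDerivation D (g i) with hμ_def
  have hμ_eval : μ.eval 0 = 0 := by
    have heval := eval_wronskianVec_coeffwiseDerivation D (map_zero D) g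
    rw [hzero] at heval
    rw [hμ_def, dotProduct, Polynomial.eval_finsetSum]
    refine Finset.sum_eq_zero fun i _ => ?_
    rw [Polynomial.eval_mul]
    exact mul_eq_zero_of_right _ (congrFun heval i)
  have hμ₀ : μ = 0 := by
    by_contra hne
    have hg : g ≠ 0 := fun h => zero_ne_one (by rw [← hu, h, dotProduct_zero])
    have hconst := Polynomial.eq_C_of_natDegree_eq_zero
      (natDegree_eq_zero_of_wronskianVec_eq_smul hd hF (hsmooth L ι) hg hgF hne hμ)
    rw [hconst, Polynomial.eval_C] at hμ_eval
    exact hne (by rw [hconst, hμ_eval, Polynomial.C_0])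
  rw [hμ₀, zero_smul] at hμ
  exact hμ

theorem IsRationalPath.wronskianVec_eq_zero (hd : 3 ≤ d) (hF : F.IsHomogeneous d)
    (hsmooth : ∀ (K : Type u) [Field K] (φ : k →+* K), IsSmoothForm φ F) (hD : ∀ x, D (ι x) = 0)
    {ξ : Fin 3 → L} {f : Fin 3 → Polynomial L} (h : IsRationalPath ι F ξ f) :
    wronskianVec D ξ = 0 := by
  obtain ⟨hfF, ⟨p, ⟨s, hs⟩, hp⟩, a, ha, hξ⟩ := h
  have hfs : (f s).eval 0 ≠ 0 := hp s ▸ (map_ne_zero ι).mpr hs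
  have hf : f ≠ 0 := fun h => hfs (by rw [h, Pi.zero_apply, Polynomial.eval_zero])
  obtain ⟨γ, g, u, rfl, hu⟩ := exists_eq_smul_and_dotProduct_eq_one hf
  have hγ : γ ≠ 0 := fun h => hf (by rw [h, zero_smul])
  have hγ_eval : γ.eval 0 ≠ 0 := fun h => hfs (by simp [h])
  have hgF : eval₂ (Polynomial.C.comp ι) g F = 0 := by
    have hscale := eval₂_mul_left_of_isHomogeneous (Polynomial.C.comp ι) hF γ g
    exact (mul_eq_zero_iff_left (pow_ne_zero d hγ)).mp (hscale.symm.trans hfF)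
  have hzero : wronskianVec D (fun s => (g s).eval 0) = 0 := by
    have hp' : γ.eval 0 • (fun s => (g s).eval 0) = fun s => ι (p s) :=
      funext fun s => by simpa using hp s
    have hsmul := wronskianVec_smul D (γ.eval 0) fun s => (g s).eval 0
    rw [hp', wronskianVec_eq_zero_of_forall_eq_zero fun s => hD (p s)] at hsmul
    exact (smul_eq_zero_iff_right (pow_ne_zero 2 hγ_eval)).mp hsmul.symm
  have hfW : wronskianVec (coeffwiseDerivation D) (γ • g) = 0 := by
    refine (wronskianVec_smul _ γ g).trans ?_
    rw [wronskianVec_eq_zero_of_eval_zero hd hF hsmooth hD hu hgF hzero, smul_zero]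
  have heval := eval_wronskianVec_coeffwiseDerivation D D.map_one_eq_zero (γ • g)
  rw [hfW, funext hξ] at heval
  have hsmul := wronskianVec_smul D a ξ
  exact (smul_eq_zero_iff_right (pow_ne_zero 2 ha)).mp
    (hsmul.symm.trans (heval.symm.trans (funext fun _ => Polynomial.eval_zero)))

end PlaneCurve

end StableIrrationality

namespace StableIrrationality

open MvPolynomial

universe u

section PlaneCurve

open Paper Matrix

lemma exists_derivation_chartRing {k : Type*} [Field k] (F : MvPolynomial (Fin 3) k) :
    ∃ D : Derivation ℤ (chartRing F) (chartRing F), (∀ a, D (chartRingMap F a) = 0) ∧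
      D (Ideal.Quotient.mk _ (X 0)) = Ideal.Quotient.mk _ (pderiv 1 (dehomogenize F)) ∧
      D (Ideal.Quotient.mk _ (X 1)) = -Ideal.Quotient.mk _ (pderiv 0 (dehomogenize F)) := by
  let δ := jacobianDerivation 0 1 (dehomogenize F)
  have hδ : δ (dehomogenize F) = 0 := by
    rw [jacobianDerivation_apply, mul_comm, sub_self]
  obtain ⟨D, hD⟩ := exists_derivation_quotient (δ := δ.restrictScalars ℤ) hδ
  have hδC (a : k) : δ (C a) = 0 := by simp [δ]
  have hδX : δ (X 0) = pderiv 1 (dehomogenize F) := by simp [δ, jacobianDerivation_apply]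
  have hδY : δ (X 1) = -pderiv 0 (dehomogenize F) := by simp [δ, jacobianDerivation_apply]
  exact ⟨D, fun a => (hD _).trans ((congrArg _ (hδC a)).trans (map_zero _)),
    (hD _).trans (congrArg _ hδX), (hD _).trans ((congrArg _ hδY).trans (map_neg _ _))⟩

lemma IsSmoothForm.exists_pderiv_chartPoint_ne_zero {k S : Type*} [Field k] [CommRing S]
    [Nontrivial S] {F : MvPolynomial (Fin 3) k} {d : ℕ} (hF : F.IsHomogeneous d)
    (χ : chartRing F →+* S) (hsmooth : IsSmoothForm (χ.comp (chartRingMap F)) F) :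
    ∃ i, χ (Ideal.Quotient.mk _ (pderiv i (dehomogenize F))) ≠ 0 := by
  by_contra! hzero
  have hF₀ := eval₂_homogeneousCoords_chartPoint χ
  have hsucc (i : Fin 2) :
      gradient (χ.comp (chartRingMap F)) (homogeneousCoords (chartPoint χ)) F i.succ = 0 := by
    rw [gradient, ← eval₂_dehomogenize, ← pderiv_dehomogenize, eval₂_chartPoint, hzero]
  have heuler := dotProduct_gradient_self hF hF₀
  rw [dotProduct, Fin.sum_univ_succ, homogeneousCoords_zero, one_mul,
    Finset.sum_eq_zero fun i _ => by rw [hsucc, mul_zero], add_zero] at heuler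
  exact one_ne_zero (congrFun (hsmooth _ hF₀ (Fin.cases heuler hsucc)) 0)

theorem stablyIrrationalOver_of_isSmoothForm_of_plane {k : Type u} [Field k] [Infinite k] {d : ℕ}
    (hd : 3 ≤ d) {F : MvPolynomial (Fin 3) k} (hF : F.IsHomogeneous d)
    (hsmooth : ∀ (K : Type u) [Field K] (φ : k →+* K), IsSmoothForm φ F) :
    StablyIrrationalOver (chartRingMap (ν := 2) F) 1 := by
  rintro r ⟨e, he⟩
  let A := MvPolynomial (Fin r) (chartRing F)
  let L := FractionRing (MvPolynomial (Fin (1 + r)) k)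
  let Ψ : MvPolynomial (Fin r) (chartRing F) →+* L :=
    (e : FractionRing A →+* L).comp (algebraMap A (FractionRing A))
  have hΨ : Function.Injective Ψ := e.injective.comp (IsFractionRing.injective A (FractionRing A))
  let _ : Algebra A L := Ψ.toAlgebra
  have : IsFractionRing A L := IsLocalization.isLocalization_of_algEquiv (nonZeroDivisors A)
    (AlgEquiv.ofRingEquiv (f := e) fun _ => rfl : FractionRing A ≃ₐ[A] L)
  obtain ⟨D₀, hD₀k, hD₀x, hD₀y⟩ := exists_derivation_chartRing F
  obtain ⟨D, hD⟩ := exists_derivation_fractionRing_mvPolynomial (τ := Fin r) (L := L) D₀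
  have hDΨ {a b : chartRing F} (hab : D₀ a = b) : D ((Ψ.comp C) a) = (Ψ.comp C) b :=
    (hD a).trans (congrArg (Ψ.comp C) hab)
  have hDk (a : k) : D (((Ψ.comp C).comp (chartRingMap F)) a) = 0 :=
    (hDΨ (hD₀k a)).trans (map_zero _)
  obtain ⟨f, hf⟩ := exists_isRationalPath_of_equiv hF e he hΨ
  have hDx := derivation_eq_zero_of_wronskianVec_eq_zero
    (hf.wronskianVec_eq_zero hd hF hsmooth hDk)
  have hpderiv1 := (hDΨ hD₀x).symm.trans (hDx 0)
  have hpderiv0 := neg_eq_zero.mp ((map_neg _ _).symm.trans ((hDΨ hD₀y).symm.trans (hDx 1)))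
  obtain ⟨i, hi⟩ := (hsmooth L _).exists_pderiv_chartPoint_ne_zero hF (Ψ.comp C)
  fin_cases i
  exacts [hi hpderiv0, hi hpderiv1]

end PlaneCurve

lemma three_le_and_le_two_pow_of_logb_add_three_le {N d : ℕ} (hN : 1 ≤ N)
    (hd : Real.logb 2 N + 3 ≤ d) : 3 ≤ d ∧ N ≤ 2 ^ (d - 3) := by
  have hN' : (1 : ℝ) ≤ N := Nat.one_le_cast.mpr hN
  have hd3 : 3 ≤ d := by
    have hlog : 0 ≤ Real.logb 2 N := Real.logb_nonneg one_lt_two hN'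
    have : (3 : ℝ) ≤ d := by linarith
    exact_mod_cast this
  have hlog : Real.logb 2 N ≤ (d - 3 : ℕ) := by
    rw [Nat.cast_sub hd3]
    push_cast
    linarith
  rw [Real.logb_le_iff_le_rpow one_lt_two (by linarith), Real.rpow_natCast] at hlog
  exact ⟨hd3, mod_cast hlog⟩

end StableIrrationality

open Paper StableIrrationality in
theorem statement_1_general (k : Type*) [Field k] [Infinite k] [CharP k 2]
    (N d : ℕ) (hN : 1 ≤ N) (hd : Real.logb 2 (N : ℝ) + 3 ≤ (d : ℝ)) :
    VeryGeneral k (N + 2) d fun F =>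
      StablyIrrationalOver (chartRingMap (ν := N + 1) F) N := by
  obtain ⟨hd3, hNd⟩ := three_le_and_le_two_pow_of_logb_add_three_le hN hd
  refine veryGeneral_of_hasIndependentCoeffs (p := 2) fun F hF hind => ?_
  rcases hN.eq_or_lt with rfl | hN2
  · exact stablyIrrationalOver_of_isSmoothForm_of_plane hd3 hF fun K _ φ =>
      hind.isSmoothForm_of_plane φ hd3 hF
  · obtain ⟨n, c, z, hc⟩ := exists_isChartAdapted hN2 hNd
    exact stablyIrrationalOver_of_isChartAdapted hc (by omega) hF hind

open Paper in
theorem statement_1 (k : Type*) [Field k] [Uncountable k] [CharP k 2]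
    (N d : ℕ) (hN : 1 ≤ N) (hd : Real.logb 2 (N : ℝ) + 3 ≤ (d : ℝ)) :
    VeryGeneral k (N + 2) d fun F =>
      StablyIrrationalOver (chartRingMap (ν := N + 1) F) N :=
  statement_1_general k N d hN hd
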